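/- For every ε > 0 and ε′ > 0 there exists N such that for all n ≥ N, all k dividing n with k ≥ (2+ε)·log₂ n, and all m with |m/n − 1/3| ≤ (log n)^{−1/3}: Σ_{S ∈ I_{0,m}} N(S)² ≤ (9+ε′)·(m!·2^m)²·|I_{0,m}|. -/

import Mathlib

/-- A ROD (rooted, ordered, directed) `k`-cycle factor on `{1,…,n}`: a sequence of
`n/k` directed cycles, each on exactly `k` vertices and rooted at its first entry, whose
vertex sets partition `{1,…,n}`. -/
def RODFactor (n k : ℕ) : Type :=
  {f : Fin (n / k) → Fin k → Fin n //
    Function.Bijective fun p : Fin (n / k) × Fin k => f p.1 p.2}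

/-- The underlying undirected graph of the ROD factor `F` contains every edge of `S`. -/
def RODContains {n k : ℕ} (F : RODFactor n k) (S : SimpleGraph (Fin n)) : Prop :=
  ∀ u v : Fin n, S.Adj u v → ∃ (c : Fin (n / k)) (i : Fin k),
    (F.1 c i = u ∧ F.1 c ⟨((i : ℕ) + 1) % k, Nat.mod_lt _ i.pos⟩ = v) ∨
    (F.1 c i = v ∧ F.1 c ⟨((i : ℕ) + 1) % k, Nat.mod_lt _ i.pos⟩ = u)

/-- `N(S)`: the number of ROD `k`-cycle factors containing the graph `S`. -/
noncomputable def NS {n : ℕ} (k : ℕ) (S : SimpleGraph (Fin n)) : ℕ :=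
  Nat.card {F : RODFactor n k // RODContains F S}

/-- The connected component `c` of `G` is a path on at least 2 vertices. -/
def IsPathComponent {V : Type*} (G : SimpleGraph V) (c : G.ConnectedComponent) : Prop :=
  ∃ (ℓ : ℕ) (v : Fin ℓ → V), 2 ≤ ℓ ∧ Function.Injective v ∧ Set.range v = c.supp ∧
    ∀ a b : Fin ℓ, G.Adj (v a) (v b) ↔ ((a : ℕ) + 1 = b ∨ (b : ℕ) + 1 = a)

/-- `G ∈ I_{0,m}`: `G` has exactly `m` connected components, each a path on at least 2
vertices. -/
def PathsGraph {n : ℕ} (G : SimpleGraph (Fin n)) (m : ℕ) : Prop :=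
  Nat.card G.ConnectedComponent = m ∧ ∀ c : G.ConnectedComponent, IsPathComponent G c



namespace P13
open MvPolynomial Finset

abbrev Pol := MvPolynomial ℕ ℝ

noncomputable def ty {m : ℕ} (s : Fin m → ℕ) : ℕ →₀ ℕ := ∑ i, Finsupp.single (s i) 1

noncomputable def fac (γ : ℕ →₀ ℕ) : ℝ := γ.prod fun _ c => (c.factorial : ℝ)

lemma fac_add_single (γ : ℕ →₀ ℕ) (l : ℕ) :
    fac (γ + Finsupp.single l 1) = ((γ l : ℝ) + 1) * fac γ := by
  classical
  unfold fac
  have h1 : (γ + Finsupp.single l 1).prod (fun _ c => (c.factorial : ℝ)) =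
      ∏ x ∈ insert l γ.support, (((γ + Finsupp.single l 1 : ℕ →₀ ℕ) x).factorial : ℝ) := by
    apply Finsupp.prod_of_support_subset
    · intro x hx
      by_cases hxl : x = l
      · simp [hxl]
      · simp only [Finsupp.mem_support_iff, Finsupp.add_apply, Finset.mem_insert] at hx ⊢
        rw [Finsupp.single_apply, if_neg (fun h => hxl h.symm)] at hx
        right; simpa using hx
    · simp
  have h2 : γ.prod (fun _ c => (c.factorial : ℝ)) =
      ∏ x ∈ insert l γ.support, ((γ x).factorial : ℝ) := by
    apply Finsupp.prod_of_support_subset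
    · intro x hx; exact Finset.mem_insert_of_mem hx
    · simp
  rw [h1, h2, ← Finset.mul_prod_erase _ _ (Finset.mem_insert_self l _),
    ← Finset.mul_prod_erase (insert l γ.support) (fun x => ((γ x).factorial : ℝ))
      (Finset.mem_insert_self l _), ← mul_assoc]
  congr 1
  · simp [Nat.factorial_succ]
  · apply Finset.prod_congr rfl
    intro x hx
    have hxl : x ≠ l := Finset.ne_of_mem_erase hx
    rw [Finsupp.add_apply, Finsupp.single_apply, if_neg (fun h => hxl h.symm), add_zero]

lemma fac_pos (γ : ℕ →₀ ℕ) : 0 < fac γ := by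
  unfold fac Finsupp.prod
  exact Finset.prod_pos fun i _ => Nat.cast_pos.2 (Nat.factorial_pos _)

noncomputable def T (P : Pol) {m : ℕ} (s : Fin m → ℕ) : ℝ := fac (ty s) * coeff (ty s) P

lemma T_add (P Q : Pol) {m : ℕ} (s : Fin m → ℕ) : T (P + Q) s = T P s + T Q s := by
  simp [T, mul_add]

lemma T_sub (P Q : Pol) {m : ℕ} (s : Fin m → ℕ) : T (P - Q) s = T P s - T Q s := by
  simp [T, mul_sub]

lemma T_smul (c : ℝ) (P : Pol) {m : ℕ} (s : Fin m → ℕ) : T (c • P) s = c * T P s := by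
  simp [T]; ring

lemma T_zero {m : ℕ} (s : Fin m → ℕ) : T 0 s = 0 := by simp [T]

lemma T_sum {ι : Type*} (I : Finset ι) (P : ι → Pol) {m : ℕ} (s : Fin m → ℕ) :
    T (∑ i ∈ I, P i) s = ∑ i ∈ I, T (P i) s := by
  classical
  induction I using Finset.induction_on with
  | empty => simp [T_zero]
  | insert a I ha ih => rw [Finset.sum_insert ha, Finset.sum_insert ha, T_add, ih]

lemma ty_succAbove {m : ℕ} (s : Fin (m + 1) → ℕ) (i : Fin (m + 1)) :
    ty s = ty (fun j => s (i.succAbove j)) + Finsupp.single (s i) 1 := by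
  unfold ty
  rw [Fin.sum_univ_succAbove _ i, add_comm]

lemma ty_apply {m : ℕ} (s : Fin m → ℕ) (l : ℕ) :
    ty s l = (univ.filter fun i => s i = l).card := by
  unfold ty
  rw [Finsupp.finsetSum_apply, Finset.card_filter]
  apply Finset.sum_congr rfl
  intro i _
  rw [Finsupp.single_apply]

lemma T_X_mul (P : Pol) (l : ℕ) {m : ℕ} (s : Fin (m + 1) → ℕ) :
    T (X l * P) s = ∑ i, if s i = l then T P (fun j => s (i.succAbove j)) else 0 := by
  classical
  by_cases h : ∃ i, s i = l
  · obtain ⟨i0, hi0⟩ := h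
    set γ := ty (fun j => s (i0.succAbove j)) with hγ
    have hs : ty s = γ + Finsupp.single l 1 := by rw [ty_succAbove s i0, hi0]
    have hall : ∀ i, s i = l → ty (fun j => s (i.succAbove j)) = γ := by
      intro i hi
      have := ty_succAbove s i
      rw [hs, hi] at this
      exact (add_right_cancel this).symm
    have hterm : ∀ i, (if s i = l then T P (fun j => s (i.succAbove j)) else 0) =
        if s i = l then fac γ * coeff γ P else 0 := by
      intro i
      split_ifs with hi
      · unfold T; rw [hall i hi]
      · rfl
    rw [Finset.sum_congr rfl (fun i _ => hterm i), ← Finset.sum_filter, Finset.sum_const,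
      ← ty_apply, nsmul_eq_mul]
    unfold T
    rw [hs, fac_add_single, add_comm γ, coeff_X_mul]
    simp
    ring
  · push Not at h
    rw [Finset.sum_eq_zero (fun i _ => by rw [if_neg (h i)])]
    unfold T
    rw [coeff_X_mul', if_neg, mul_zero]
    rw [Finsupp.mem_support_iff, ty_apply, not_not, Finset.card_eq_zero]
    ext i; simp [h i]

lemma T_X_mul_zero (P : Pol) (l : ℕ) (s : Fin 0 → ℕ) : T (X l * P) s = 0 := by
  unfold T
  rw [coeff_X_mul', if_neg, mul_zero]
  simp [ty]

lemma T_sum_X (I : Finset ℕ) (P : ℕ → Pol) {m : ℕ} (s : Fin (m + 1) → ℕ) :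
    T (∑ l ∈ I, X l * P l) s =
      ∑ i, if s i ∈ I then T (P (s i)) (fun j => s (i.succAbove j)) else 0 := by
  rw [T_sum]
  simp_rw [T_X_mul]
  rw [Finset.sum_comm]
  apply Finset.sum_congr rfl
  intro i _
  rw [Finset.sum_ite_eq]

/-- The weighted square norm. -/
noncomputable def sq (k : ℕ) (p : ℕ → ℝ) (m : ℕ) (P : Pol) : ℝ :=
  ∑ s ∈ Fintype.piFinset (fun _ : Fin m => Icc 2 k), (∏ i, p (s i)) * (T P s / m.factorial) ^ 2

noncomputable def nrm (k : ℕ) (p : ℕ → ℝ) (m : ℕ) (P : Pol) : ℝ := Real.sqrt (sq k p m P)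


lemma sq_nonneg' {k : ℕ} {p : ℕ → ℝ} (hp : ∀ l, 0 ≤ p l) (m : ℕ) (P : Pol) : 0 ≤ sq k p m P :=
  Finset.sum_nonneg fun s _ => mul_nonneg (Finset.prod_nonneg fun i _ => hp _) (sq_nonneg _)

lemma sq_jensen {k : ℕ} {p : ℕ → ℝ} (hp : ∀ l, 0 ≤ p l) (m : ℕ) (P : ℕ → Pol) :
    sq k p (m + 1) (∑ l ∈ Icc 2 k, X l * P l) ≤ ∑ l ∈ Icc 2 k, p l * sq k p m (P l) := by
  classical
  unfold sq
  have key : ∀ s ∈ Fintype.piFinset (fun _ : Fin (m + 1) => Icc 2 k),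
      (∏ i, p (s i)) * (T (∑ l ∈ Icc 2 k, X l * P l) s / (m + 1).factorial) ^ 2 ≤
      ∑ i, (∏ i, p (s i)) * ((m + 1 : ℝ) *
        (T (P (s i)) (fun j => s (i.succAbove j)) / (m + 1).factorial) ^ 2) := by
    intro s hs
    rw [T_sum_X, ← Finset.mul_sum]
    apply mul_le_mul_of_nonneg_left _ (Finset.prod_nonneg fun i _ => hp _)
    have : (∑ i, if s i ∈ Icc 2 k then T (P (s i)) (fun j => s (i.succAbove j)) else 0) =
        ∑ i, T (P (s i)) (fun j => s (i.succAbove j)) := by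
      apply Finset.sum_congr rfl
      intro i _
      rw [if_pos (Fintype.mem_piFinset.1 hs i)]
    rw [this, Finset.sum_div, ← Finset.mul_sum]
    have := sq_sum_le_card_mul_sum_sq (s := (univ : Finset (Fin (m + 1))))
      (f := fun i => T (P (s i)) (fun j => s (i.succAbove j)) / ((m + 1).factorial : ℝ))
    simpa using this
  refine (Finset.sum_le_sum key).trans ?_
  rw [Finset.sum_comm]
  have each : ∀ i : Fin (m + 1),
      ∑ s ∈ Fintype.piFinset (fun _ : Fin (m + 1) => Icc 2 k), (∏ i, p (s i)) * ((m + 1 : ℝ) *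
        (T (P (s i)) (fun j => s (i.succAbove j)) / (m + 1).factorial) ^ 2) =
      (1 / (m + 1 : ℝ)) * ∑ l ∈ Icc 2 k, p l *
        ∑ s ∈ Fintype.piFinset (fun _ : Fin m => Icc 2 k),
          (∏ i, p (s i)) * (T (P l) s / m.factorial) ^ 2 := by
    intro i
    rw [Finset.mul_sum]
    simp_rw [Finset.mul_sum]
    rw [← Finset.sum_product']
    refine Finset.sum_bij' (fun s _ => (s i, fun j => s (i.succAbove j)))
      (fun x _ => i.insertNth x.1 x.2) ?_ ?_ ?_ ?_ ?_
    · intro s hs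
      rw [Fintype.mem_piFinset] at hs
      rw [Finset.mem_product, Fintype.mem_piFinset]
      exact ⟨hs i, fun j => hs _⟩
    · intro x hx
      rw [Finset.mem_product, Fintype.mem_piFinset] at hx
      rw [Fintype.mem_piFinset]
      intro j
      refine Fin.succAboveCases i ?_ ?_ j
      · simpa using hx.1
      · intro j; simpa using hx.2 j
    · intro s hs
      exact Fin.insertNth_self_removeNth i s
    · intro x hx
      ext <;> simp
    · intro s hs
      simp only
      rw [Fin.prod_univ_succAbove _ i, Nat.factorial_succ]
      have hm : (m.factorial : ℝ) ≠ 0 := by exact_mod_cast Nat.factorial_ne_zero m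
      push_cast
      field_simp
  rw [Finset.sum_congr rfl (fun i _ => each i), Finset.sum_const]
  simp only [card_univ, Fintype.card_fin, nsmul_eq_mul]
  rw [← mul_assoc]
  push_cast
  rw [mul_one_div_cancel (by positivity), one_mul]

lemma sq_X_zero {k : ℕ} {p : ℕ → ℝ} (hp : ∀ l, 0 ≤ p l) (P : ℕ → Pol) : sq k p 0 (∑ l ∈ Icc 2 k, X l * P l) = 0 := by
  unfold sq
  apply Finset.sum_eq_zero
  intro s _
  rw [T_sum, Finset.sum_eq_zero (fun l _ => T_X_mul_zero _ _ _)]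
  simp

lemma minkowski {p : ℕ → ℝ} (hp : ∀ l, 0 ≤ p l) {ι : Type*} (I : Finset ι) (w a b : ι → ℝ) (hw : ∀ i ∈ I, 0 ≤ w i) :
    Real.sqrt (∑ i ∈ I, w i * (a i + b i) ^ 2) ≤
      Real.sqrt (∑ i ∈ I, w i * a i ^ 2) + Real.sqrt (∑ i ∈ I, w i * b i ^ 2) := by
  have hA : 0 ≤ ∑ i ∈ I, w i * a i ^ 2 :=
    Finset.sum_nonneg fun i hi => mul_nonneg (hw i hi) (sq_nonneg _)
  have hB : 0 ≤ ∑ i ∈ I, w i * b i ^ 2 :=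
    Finset.sum_nonneg fun i hi => mul_nonneg (hw i hi) (sq_nonneg _)
  apply Real.sqrt_le_iff.2
  refine ⟨by positivity, ?_⟩
  rw [add_sq, Real.sq_sqrt hA, Real.sq_sqrt hB]
  have cs : ∑ i ∈ I, w i * (a i * b i) ≤
      Real.sqrt (∑ i ∈ I, w i * a i ^ 2) * Real.sqrt (∑ i ∈ I, w i * b i ^ 2) := by
    rw [← Real.sqrt_mul hA]
    apply Real.le_sqrt_of_sq_le
    have := Finset.sum_mul_sq_le_sq_mul_sq I (fun i => Real.sqrt (w i) * a i)
      (fun i => Real.sqrt (w i) * b i)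
    have e1 : ∑ i ∈ I, (Real.sqrt (w i) * a i) * (Real.sqrt (w i) * b i) =
        ∑ i ∈ I, w i * (a i * b i) := by
      apply Finset.sum_congr rfl; intro i hi
      rw [mul_mul_mul_comm, Real.mul_self_sqrt (hw i hi)]
    have e2 : ∀ c : ι → ℝ, ∑ i ∈ I, (Real.sqrt (w i) * c i) ^ 2 = ∑ i ∈ I, w i * c i ^ 2 := by
      intro c
      apply Finset.sum_congr rfl; intro i hi
      rw [mul_pow, Real.sq_sqrt (hw i hi)]
    rw [e1, e2, e2] at this
    exact this
  have : ∑ i ∈ I, w i * (a i + b i) ^ 2 =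
      ∑ i ∈ I, w i * a i ^ 2 + 2 * ∑ i ∈ I, w i * (a i * b i) + ∑ i ∈ I, w i * b i ^ 2 := by
    rw [Finset.mul_sum, ← Finset.sum_add_distrib, ← Finset.sum_add_distrib]
    apply Finset.sum_congr rfl; intro i _; ring
  rw [this]
  nlinarith

lemma nrm_nonneg {k : ℕ} {p : ℕ → ℝ} (hp : ∀ l, 0 ≤ p l) (m : ℕ) (P : Pol) : 0 ≤ nrm k p m P := Real.sqrt_nonneg _

lemma nrm_sq {k : ℕ} {p : ℕ → ℝ} (hp : ∀ l, 0 ≤ p l) (m : ℕ) (P : Pol) : nrm k p m P ^ 2 = sq k p m P := Real.sq_sqrt (sq_nonneg' hp m P)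

lemma nrm_add {k : ℕ} {p : ℕ → ℝ} (hp : ∀ l, 0 ≤ p l) (m : ℕ) (P Q : Pol) : nrm k p m (P + Q) ≤ nrm k p m P + nrm k p m Q := by
  unfold nrm sq
  simp_rw [T_add, add_div]
  exact minkowski hp _ _ _ _ (fun s _ => Finset.prod_nonneg fun i _ => hp _)

lemma nrm_zero {k : ℕ} {p : ℕ → ℝ} (hp : ∀ l, 0 ≤ p l) (m : ℕ) : nrm k p m 0 = 0 := by
  unfold nrm sq
  simp [T_zero]

lemma nrm_smul {k : ℕ} {p : ℕ → ℝ} (hp : ∀ l, 0 ≤ p l) (m : ℕ) (c : ℝ) (P : Pol) : nrm k p m (c • P) = |c| * nrm k p m P := by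
  unfold nrm
  rw [← Real.sqrt_sq_eq_abs, ← Real.sqrt_mul (sq_nonneg c)]
  congr 1
  unfold sq
  rw [Finset.mul_sum]
  apply Finset.sum_congr rfl; intro s _
  rw [T_smul]; ring

lemma nrm_sub {k : ℕ} {p : ℕ → ℝ} (hp : ∀ l, 0 ≤ p l) (m : ℕ) (P Q : Pol) : nrm k p m (P - Q) ≤ nrm k p m P + nrm k p m Q := by
  have : P - Q = P + (-1 : ℝ) • Q := by simp [sub_eq_add_neg]
  rw [this]
  refine (nrm_add hp _ _ _).trans ?_
  rw [nrm_smul hp]; simp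

lemma nrm_sum {k : ℕ} {p : ℕ → ℝ} (hp : ∀ l, 0 ≤ p l) {ι : Type*} (I : Finset ι) (m : ℕ) (P : ι → Pol) :
    nrm k p m (∑ i ∈ I, P i) ≤ ∑ i ∈ I, nrm k p m (P i) := by
  classical
  induction I using Finset.induction_on with
  | empty => simp [nrm_zero hp]
  | insert a I ha ih =>
    rw [Finset.sum_insert ha, Finset.sum_insert ha]
    exact (nrm_add hp _ _ _).trans (by linarith)

lemma nrm_X_zero {k : ℕ} {p : ℕ → ℝ} (hp : ∀ l, 0 ≤ p l) (l : ℕ) (P : Pol) : nrm k p 0 (X l * P) = 0 := by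
  unfold nrm sq
  simp [T_X_mul_zero]

lemma nrm_X {k : ℕ} {p : ℕ → ℝ} (hp : ∀ l, 0 ≤ p l) (m : ℕ) (l : ℕ) (hl : l ∈ Icc 2 k) (P : Pol) :
    nrm k p (m + 1) (X l * P) ≤ Real.sqrt (p l) * nrm k p m P := by
  have := sq_jensen (k := k) hp m (fun l' => if l' = l then P else 0)
  have e1 : (∑ l' ∈ Icc 2 k, X l' * (if l' = l then P else 0) : Pol) = X l * P := by
    rw [Finset.sum_eq_single l]
    · simp
    · intro b _ hb; simp [hb]
    · intro h; exact absurd hl h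
  have e2 : ∑ l' ∈ Icc 2 k, p l' * sq k p m (if l' = l then P else 0) = p l * sq k p m P := by
    rw [Finset.sum_eq_single l]
    · simp
    · intro b _ hb; simp [hb, sq, T_zero]
    · intro h; exact absurd hl h
  rw [e1, e2] at this
  unfold nrm
  rw [← Real.sqrt_mul (hp l)]
  exact Real.sqrt_le_sqrt this

/-- nonnegative coefficients -/
def NN (P : Pol) : Prop := ∀ γ, 0 ≤ coeff γ P

lemma NN_add {P Q : Pol} (h1 : NN P) (h2 : NN Q) : NN (P + Q) := fun γ => by
  rw [coeff_add]; exact add_nonneg (h1 γ) (h2 γ)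

lemma NN_zero : NN 0 := fun γ => by simp

lemma NN_sum {ι : Type*} (I : Finset ι) (P : ι → Pol) (h : ∀ i ∈ I, NN (P i)) :
    NN (∑ i ∈ I, P i) := fun γ => by
  rw [coeff_sum]; exact Finset.sum_nonneg fun i hi => h i hi γ

lemma NN_mul {P Q : Pol} (h1 : NN P) (h2 : NN Q) : NN (P * Q) := fun γ => by
  rw [coeff_mul]; exact Finset.sum_nonneg fun i _ => mul_nonneg (h1 _) (h2 _)

lemma NN_smul {P : Pol} (c : ℝ) (hc : 0 ≤ c) (h : NN P) : NN (c • P) := fun γ => by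
  rw [coeff_smul]; exact mul_nonneg hc (h γ)

lemma NN_X (l : ℕ) : NN (X l) := fun γ => by
  classical
  rw [coeff_X]; split_ifs <;> norm_num

lemma NN_one : NN 1 := fun γ => by
  classical
  rw [coeff_one]; split_ifs <;> norm_num

lemma NN_pow {P : Pol} (h : NN P) (n : ℕ) : NN (P ^ n) := by
  induction n with
  | zero => simpa using NN_one
  | succ n ih => rw [pow_succ]; exact NN_mul ih h

lemma sq_mono {k : ℕ} {p : ℕ → ℝ} (hp : ∀ l, 0 ≤ p l) (m : ℕ) {P Q : Pol} (h1 : NN P) (h2 : NN (Q - P)) : sq k p m P ≤ sq k p m Q := by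
  unfold sq
  apply Finset.sum_le_sum
  intro s _
  apply mul_le_mul_of_nonneg_left _ (Finset.prod_nonneg fun i _ => hp _)
  have hf := fac_pos (ty s)
  have hP : 0 ≤ T P s := mul_nonneg hf.le (h1 _)
  have hQ : T P s ≤ T Q s := by
    have := mul_nonneg hf.le (h2 (ty s))
    rw [coeff_sub, mul_sub] at this
    unfold T; linarith
  have hm : (0 : ℝ) < m.factorial := by exact_mod_cast Nat.factorial_pos m
  gcongr

lemma nrm_mono {k : ℕ} {p : ℕ → ℝ} (hp : ∀ l, 0 ≤ p l) (m : ℕ) {P Q : Pol} (h1 : NN P) (h2 : NN (Q - P)) : nrm k p m P ≤ nrm k p m Q :=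
  Real.sqrt_le_sqrt (sq_mono hp m h1 h2)


end P13


namespace P13
open MvPolynomial Finset

noncomputable def h (k : ℕ) (n : ℕ) : Pol :=
  if n = 0 then 1 else ∑ j : Fin n, if n - (j : ℕ) ∈ Icc 2 k then X (n - (j : ℕ)) * h k j else 0
termination_by n
decreasing_by exact j.2

noncomputable def hh (k : ℕ) (t : ℤ) : Pol := if 0 ≤ t then h k t.toNat else 0

lemma h_zero (k : ℕ) : h k 0 = 1 := by rw [h]; simp

lemma hh_neg (k : ℕ) {t : ℤ} (ht : t < 0) : hh k t = 0 := by
  unfold hh; rw [if_neg (by omega)]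

lemma hh_zero (k : ℕ) : hh k 0 = 1 := by
  unfold hh; simp [h_zero]

lemma hh_nat (k n : ℕ) : hh k (n : ℤ) = h k n := by
  unfold hh; simp

lemma hh_rec (k : ℕ) {t : ℤ} (ht : 1 ≤ t) : hh k t = ∑ l ∈ Icc 2 k, X l * hh k (t - l) := by
  obtain ⟨n, rfl⟩ : ∃ n : ℕ, t = n := ⟨t.toNat, by omega⟩
  rw [hh_nat, h, if_neg (by omega)]
  have e1 : (∑ j : Fin n, if n - (j : ℕ) ∈ Icc 2 k then X (n - (j : ℕ)) * h k j else 0 : Pol) =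
      ∑ j ∈ (range n).filter (fun j => n - j ∈ Icc 2 k), X (n - j) * h k j := by
    rw [Finset.sum_filter, ← Fin.sum_univ_eq_sum_range
      (fun j => if n - j ∈ Icc 2 k then X (n - j) * h k j else 0)]
  have e2 : ∑ l ∈ Icc 2 k, X l * hh k ((n : ℤ) - l) =
      ∑ l ∈ (Icc 2 k).filter (fun l => l ≤ n), X l * hh k ((n : ℤ) - l) := by
    rw [Finset.sum_filter]
    apply Finset.sum_congr rfl
    intro l hl
    split_ifs with h1
    · rfl
    · rw [hh_neg _ (by omega), mul_zero]
  rw [e1, e2]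
  refine Finset.sum_bij' (fun j _ => n - j) (fun l _ => n - l) ?_ ?_ ?_ ?_ ?_
  · intro j hj; simp only [mem_filter, mem_range, mem_Icc] at hj ⊢; omega
  · intro j hj; simp only [mem_filter, mem_range, mem_Icc] at hj ⊢; omega
  · intro j hj; simp only [mem_filter, mem_range, mem_Icc] at hj ⊢; omega
  · intro j hj; simp only [mem_filter, mem_range, mem_Icc] at hj ⊢; omega
  · intro j hj
    simp only [mem_filter, mem_range, mem_Icc] at hj
    rw [← hh_nat]; congr 2; omega

lemma NN_h (k : ℕ) (n : ℕ) : NN (h k n) := by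
  induction n using Nat.strong_induction_on with
  | _ n ih =>
    rw [h]
    split_ifs
    · exact NN_one
    · apply NN_sum
      intro j _
      split_ifs
      · exact NN_mul (NN_X _) (ih _ j.2)
      · exact NN_zero

lemma NN_hh (k : ℕ) (t : ℤ) : NN (hh k t) := by
  unfold hh; split_ifs
  · exact NN_h _ _
  · exact NN_zero

lemma hh_add (k : ℕ) (a : ℕ) : ∀ b : ℤ, 0 ≤ b → hh k (a + b) = hh k a * hh k b +
    ∑ l ∈ Icc 2 k, X l * ∑ i ∈ range (l - 1), hh k (a - (i + 1)) * hh k (b + (i + 1) - l) := by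
  induction a with
  | zero =>
    intro b hb
    rw [Finset.sum_eq_zero]
    · simp [hh_zero]
    · intro l _
      rw [Finset.sum_eq_zero, mul_zero]
      intro i _
      rw [hh_neg k (by push_cast; omega), zero_mul]
  | succ a ih =>
    intro b hb
    have h1 := ih (b + 1) (by omega)
    rw [show ((a + 1 : ℕ) : ℤ) + b = a + (b + 1) by push_cast; ring, h1]
    have key : ∀ l ∈ Icc 2 k, (X l * ∑ i ∈ range (l - 1),
          hh k ((a + 1 : ℕ) - (i + 1)) * hh k (b + (i + 1) - l) : Pol) =
        X l * (∑ i ∈ range (l - 1), hh k (a - (i + 1)) * hh k (b + 1 + (i + 1) - l)) +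
        (hh k a * (X l * hh k (b + 1 - l)) - (X l * hh k (a + 1 - l)) * hh k b) := by
      intro l hl
      rw [mem_Icc] at hl
      obtain ⟨d, rfl⟩ : ∃ d, l = d + 2 := ⟨l - 2, by omega⟩
      have e0 : d + 2 - 1 = d + 1 := by omega
      rw [e0]
      rw [Finset.sum_range_succ' (fun i : ℕ => hh k ((a + 1 : ℕ) - ((i : ℤ) + 1)) *
        hh k (b + ((i : ℤ) + 1) - ((d + 2 : ℕ) : ℤ))), Finset.sum_range_succ]
      have e1 : ∀ i : ℕ, hh k (((a + 1 : ℕ) : ℤ) - (((i + 1 : ℕ) : ℤ) + 1)) *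
          hh k (b + (((i + 1 : ℕ) : ℤ) + 1) - ((d + 2 : ℕ) : ℤ)) =
          hh k ((a : ℤ) - ((i : ℤ) + 1)) * hh k (b + 1 + ((i : ℤ) + 1) - ((d + 2 : ℕ) : ℤ)) := by
        intro i; congr 2 <;> push_cast <;> ring
      rw [Finset.sum_congr rfl (fun i _ => e1 i)]
      have e2 : ((a + 1 : ℕ) : ℤ) - (((0 : ℕ) : ℤ) + 1) = a := by push_cast; ring
      have e3 : b + (((0 : ℕ) : ℤ) + 1) - ((d + 2 : ℕ) : ℤ) = b + 1 - ((d + 2 : ℕ) : ℤ) := by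
        push_cast; ring
      have e4 : (a : ℤ) - ((d : ℤ) + 1) = a + 1 - ((d + 2 : ℕ) : ℤ) := by push_cast; ring
      have e5 : b + 1 + ((d : ℤ) + 1) - ((d + 2 : ℕ) : ℤ) = b := by push_cast; ring
      rw [e2, e3, e4, e5]
      ring
    rw [Finset.sum_congr rfl key, Finset.sum_add_distrib, Finset.sum_sub_distrib,
      ← Finset.mul_sum, ← Finset.sum_mul, ← hh_rec k (show (1 : ℤ) ≤ b + 1 by omega),
      ← hh_rec k (show (1 : ℤ) ≤ a + 1 by omega)]
    push_cast
    ring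

/-- `hh a * hh b ≼ hh (a+b)` -/
lemma NN_hh_sub (k : ℕ) (a b : ℤ) : NN (hh k (a + b) - hh k a * hh k b) := by
  by_cases ha : 0 ≤ a
  · by_cases hb : 0 ≤ b
    · obtain ⟨a, rfl⟩ : ∃ n : ℕ, a = n := ⟨a.toNat, by omega⟩
      rw [hh_add k a b hb, add_sub_cancel_left]
      exact NN_sum _ _ fun l _ => NN_mul (NN_X _) (NN_sum _ _ fun i _ => NN_mul (NN_hh _ _) (NN_hh _ _))
    · rw [hh_neg k (t := b) (by omega), mul_zero, sub_zero]; exact NN_hh _ _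
  · rw [hh_neg k (t := a) (by omega), zero_mul, sub_zero]; exact NN_hh _ _

noncomputable def ff (k : ℕ) : Pol := ∑ l ∈ Icc 2 k, X l * ((l : ℝ) • hh k (k - l))

lemma NN_ff (k : ℕ) : NN (ff k) :=
  NN_sum _ _ fun l _ => NN_mul (NN_X _) (NN_smul _ (by positivity) (NN_hh _ _))

noncomputable def Del (k : ℕ) (a c : ℤ) : Pol := hh k a * hh k c - hh k (a + 1) * hh k (c - 1)

lemma Del_tele (k : ℕ) (a b : ℤ) (d : ℕ) :
    hh k a * hh k b - hh k (a + d) * hh k (b - d) = ∑ j ∈ range d, Del k (a + j) (b - j) := by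
  induction d with
  | zero => simp
  | succ d ih =>
    rw [Finset.sum_range_succ, ← ih]
    unfold Del
    push_cast
    rw [show a + ((d : ℤ) + 1) = a + d + 1 by ring, show b - ((d : ℤ) + 1) = b - d - 1 by ring]
    ring

lemma D_eq (k : ℕ) (hk : 1 ≤ k) (b : ℤ) (hb : 0 ≤ b) :
    ff k * hh k b - hh k (b + k) = ∑ l ∈ Icc 2 k, X l * ∑ i ∈ range (l - 1),
      ∑ j ∈ range (l - 1 - i), Del k (k - l + j) (b - j) := by
  have h1 := hh_add k k b hb
  rw [add_comm b, h1, hh_rec k (t := (k : ℤ)) (by exact_mod_cast hk)]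
  unfold ff
  rw [Finset.sum_mul, Finset.sum_mul, ← Finset.sum_add_distrib, ← Finset.sum_sub_distrib]
  apply Finset.sum_congr rfl
  intro l hl
  rw [mem_Icc] at hl
  have e1 : ∀ i ∈ range (l - 1), ∑ j ∈ range (l - 1 - i), Del k ((k : ℤ) - l + j) (b - j) =
      hh k (k - l) * hh k b - hh k (k - (i + 1)) * hh k (b + (i + 1) - l) := by
    intro i hi
    rw [mem_range] at hi
    rw [← Del_tele]
    congr 3
    · congr 1; omega
    · omega
  rw [Finset.sum_congr rfl e1, Finset.sum_sub_distrib, Finset.sum_const, card_range]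
  have : ((l : ℝ) • hh k (k - l)) = ((l - 1 : ℕ) : ℕ) • hh k (k - l) + hh k (k - l) := by
    rw [← succ_nsmul, show l - 1 + 1 = l by omega]
    rw [Nat.cast_smul_eq_nsmul]
  rw [this, nsmul_eq_mul, nsmul_eq_mul]
  ring

end P13


namespace P13
open MvPolynomial Finset

/-- geometric part weights -/
noncomputable def pp (θ : ℝ) (l : ℕ) : ℝ := (1 - θ) * θ ^ (l - 2)

noncomputable def us (θ : ℝ) (j : ℕ) : ℝ := ((1 - θ) + (-(1 - θ)) ^ j) / (2 - θ)

lemma Icc_conv (θ : ℝ) (g : ℕ → ℝ) (i : ℕ) :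
    ∑ l ∈ Icc 2 (i + 2), pp θ l * g (i + 2 - l) = ∑ x ∈ range (i + 1), (1 - θ) * θ ^ x * g (i - x) := by
  refine Finset.sum_bij' (fun l _ => l - 2) (fun x _ => x + 2) ?_ ?_ ?_ ?_ ?_
  · intro j hj; simp only [mem_range, mem_Icc] at hj ⊢; omega
  · intro j hj; simp only [mem_range, mem_Icc] at hj ⊢; omega
  · intro j hj; simp only [mem_range, mem_Icc] at hj ⊢; omega
  · intro j hj; simp only [mem_range, mem_Icc] at hj ⊢; omega
  · intro j hj; simp only [mem_range, mem_Icc] at hj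
    unfold pp
    rw [show i + 2 - j = i - (j - 2) by omega]

lemma conv_rec (θ : ℝ) (g : ℕ → ℝ) (j : ℕ) :
    ∑ l ∈ Icc 2 (j + 2), pp θ l * g (j + 2 - l) =
      θ * ∑ l ∈ Icc 2 (j + 1), pp θ l * g (j + 1 - l) + (1 - θ) * g j := by
  rw [Icc_conv]
  cases j with
  | zero => simp
  | succ j =>
    rw [show j + 1 + 1 = j + 2 by ring, Icc_conv, Finset.sum_range_succ', Finset.mul_sum]
    congr 1
    · apply Finset.sum_congr rfl
      intro x hx
      rw [mem_range] at hx
      rw [show j + 1 - (x + 1) = j - x by omega]; ring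
    · simp

lemma us_rec (θ : ℝ) (h2 : θ < 2) (j : ℕ) : us θ (j + 2) = θ * us θ (j + 1) + (1 - θ) * us θ j := by
  unfold us
  have : 2 - θ ≠ 0 := by linarith
  field_simp
  ring

lemma us_zero (θ : ℝ) (h2 : θ < 2) : us θ 0 = 1 := by
  unfold us
  have : 2 - θ ≠ 0 := by linarith
  field_simp; ring

lemma us_one (θ : ℝ) (h2 : θ < 2) : us θ 1 = 0 := by
  unfold us; simp

lemma us_conv (θ : ℝ) (h2 : θ < 2) (j : ℕ) (hj : 1 ≤ j) :
    ∑ l ∈ Icc 2 j, pp θ l * us θ (j - l) = us θ j := by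
  induction j with
  | zero => omega
  | succ j ih =>
    cases j with
    | zero => simp [us_one θ h2]
    | succ j => rw [conv_rec, ih (by omega), us_rec θ h2]

lemma us_conv_sq (θ : ℝ) (h1 : 0.45 ≤ θ) (h2 : θ ≤ 0.55) (j : ℕ) :
    ∑ l ∈ Icc 2 (j + 1), pp θ l * us θ (j + 1 - l) ^ 2 ≤
      us θ (j + 1) ^ 2 + 20 * θ ^ (j + 1) - 9 * (1 - θ) ^ (2 * (j + 1)) := by
  induction j with
  | zero =>
    simp [us_one θ (by linarith)]
    nlinarith
  | succ j ih =>
    rw [conv_rec θ (fun i => us θ i ^ 2)]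
    have hd : us θ (j + 1) - us θ j = - (-(1 - θ)) ^ j := by
      unfold us
      have : 2 - θ ≠ 0 := by linarith
      field_simp
      ring
    have hd2 : (us θ (j + 1) - us θ j) ^ 2 = (1 - θ) ^ (2 * j) := by
      rw [hd, neg_sq, ← pow_mul, mul_comm j 2, pow_mul, neg_sq, ← pow_mul]
    rw [us_rec θ (by linarith)]
    have hpos : 0 ≤ (1 - θ) ^ (2 * j) := by
      apply pow_nonneg; linarith
    have e1 : (1 - θ) ^ (2 * (j + 1)) = (1 - θ) ^ (2 * j) * (1 - θ) ^ 2 := by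
      rw [← pow_add]; ring_nf
    have e2 : (1 - θ) ^ (2 * (j + 1 + 1)) = (1 - θ) ^ (2 * j) * (1 - θ) ^ 4 := by
      rw [← pow_add]; ring_nf
    have e3 : θ ^ (j + 1 + 1) = θ * θ ^ (j + 1) := by ring
    rw [e2, e3]
    rw [e1] at ih
    have hth : 0 ≤ θ := by linarith
    have ih' := mul_le_mul_of_nonneg_left ih hth
    have q1 : θ * (1 - θ) * (1 - θ) ^ (2 * j) + 9 * (1 - θ) ^ (2 * j) * (1 - θ) ^ 4 ≤
        9 * θ * (1 - θ) ^ (2 * j) * (1 - θ) ^ 2 := by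
      have : θ * (1 - θ) + 9 * (1 - θ) ^ 4 ≤ 9 * θ * (1 - θ) ^ 2 := by
        have h3 : θ + 9 * (1 - θ) ^ 3 ≤ 9 * θ * (1 - θ) := by
          nlinarith [mul_nonneg (sub_nonneg.2 h1) (sub_nonneg.2 h2), mul_nonneg (mul_nonneg (sub_nonneg.2 h1) (sub_nonneg.2 h2)) (sub_nonneg.2 h2)]
        have := mul_le_mul_of_nonneg_left h3 (show 0 ≤ 1 - θ by linarith)
        nlinarith
      have := mul_le_mul_of_nonneg_left this hpos
      nlinarith
    have q2 : θ * us θ (j + 1) ^ 2 + (1 - θ) * us θ j ^ 2 - (θ * us θ (j + 1) + (1 - θ) * us θ j) ^ 2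
        = θ * (1 - θ) * (1 - θ) ^ (2 * j) := by
      rw [← hd2]; ring
    linarith

lemma pp_nonneg (θ : ℝ) (h1 : 0 ≤ θ) (h2 : θ ≤ 1) (l : ℕ) : 0 ≤ pp θ l := by
  unfold pp; apply mul_nonneg (by linarith) (pow_nonneg h1 _)

lemma pp_sum (θ : ℝ) (L : ℕ) : ∑ l ∈ Icc 2 (L + 1), pp θ l = 1 - θ ^ L := by
  cases L with
  | zero => simp
  | succ L =>
    have := Icc_conv θ (fun _ => 1) L
    simp only [mul_one] at this
    rw [this, ← Finset.mul_sum, mul_neg_geom_sum]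

lemma pp_sum_le (θ : ℝ) (h1 : 0 ≤ θ) (L : ℕ) : ∑ l ∈ Icc 2 L, pp θ l ≤ 1 := by
  cases L with
  | zero => simp
  | succ L => rw [pp_sum]; have := pow_nonneg h1 L; linarith

/-- variance step -/
lemma draw_var (θ : ℝ) (h1 : 0.45 ≤ θ) (h2 : θ ≤ 0.55) (k j : ℕ) (hj : 1 ≤ j) (U ζ : ℝ) :
    ∑ l ∈ Icc 2 k, pp θ l * (U + ζ * ((if l ≤ j then us θ (j - l) else 0) - us θ j)) ^ 2 ≤
      U ^ 2 + ζ ^ 2 * (20 * θ ^ j) := by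
  set v : ℕ → ℝ := fun l => if l ≤ j then us θ (j - l) else 0 with hv
  obtain ⟨L, hL⟩ : ∃ L, max k j = L + 1 := ⟨max k j - 1, by omega⟩
  have hp := pp_nonneg θ (by linarith) (by linarith)
  have s1 : ∑ l ∈ Icc 2 k, pp θ l * (U + ζ * (v l - us θ j)) ^ 2 ≤
      ∑ l ∈ Icc 2 (L + 1), pp θ l * (U + ζ * (v l - us θ j)) ^ 2 := by
    apply Finset.sum_le_sum_of_subset_of_nonneg
    · apply Finset.Icc_subset_Icc le_rfl; omega
    · intro i _ _; exact mul_nonneg (hp i) (sq_nonneg _)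
  refine s1.trans ?_
  have red : ∀ w : ℕ → ℝ, (∀ l, ¬ l ≤ j → w l = 0) →
      ∑ l ∈ Icc 2 (L + 1), pp θ l * w l = ∑ l ∈ Icc 2 j, pp θ l * w l := by
    intro w hw
    symm
    apply Finset.sum_subset (Finset.Icc_subset_Icc le_rfl (show j ≤ L + 1 by omega))
    intro l hl hl'
    rw [hw l, mul_zero]
    intro hle
    rw [mem_Icc] at hl hl'
    omega
  have t1 : ∑ l ∈ Icc 2 (L + 1), pp θ l * v l = us θ j := by
    rw [red v (fun l hl => by simp [hv, hl]), ← us_conv θ (by linarith) j hj]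
    apply Finset.sum_congr rfl
    intro l hl
    rw [mem_Icc] at hl
    simp [hv, hl.2]
  have t2 : ∑ l ∈ Icc 2 (L + 1), pp θ l * v l ^ 2 ≤ us θ j ^ 2 + 20 * θ ^ j := by
    rw [red (fun l => v l ^ 2) (fun l hl => by simp [hv, hl])]
    obtain ⟨i, rfl⟩ : ∃ i, j = i + 1 := ⟨j - 1, by omega⟩
    have := us_conv_sq θ h1 h2 i
    have h9 : 0 ≤ (1 - θ) ^ (2 * (i + 1)) := pow_nonneg (by linarith) _
    have e : ∑ l ∈ Icc 2 (i + 1), pp θ l * v l ^ 2 =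
        ∑ l ∈ Icc 2 (i + 1), pp θ l * us θ (i + 1 - l) ^ 2 := by
      apply Finset.sum_congr rfl
      intro l hl
      rw [mem_Icc] at hl
      simp [hv, hl.2]
    linarith
  have t0 := pp_sum θ L
  have expand : ∑ l ∈ Icc 2 (L + 1), pp θ l * (U + ζ * (v l - us θ j)) ^ 2 =
      (U - ζ * us θ j) ^ 2 * ∑ l ∈ Icc 2 (L + 1), pp θ l +
      2 * (U - ζ * us θ j) * ζ * ∑ l ∈ Icc 2 (L + 1), pp θ l * v l +
      ζ ^ 2 * ∑ l ∈ Icc 2 (L + 1), pp θ l * v l ^ 2 := by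
    rw [Finset.mul_sum, Finset.mul_sum, Finset.mul_sum, ← Finset.sum_add_distrib,
      ← Finset.sum_add_distrib]
    apply Finset.sum_congr rfl; intro l _; ring
  rw [expand, t0, t1]
  have := mul_le_mul_of_nonneg_left t2 (sq_nonneg ζ)
  have h3 := mul_nonneg (sq_nonneg (U - ζ * us θ j)) (pow_nonneg (show 0 ≤ θ by linarith) L)
  nlinarith

end P13


namespace P13
open MvPolynomial Finset

noncomputable def G (k : ℕ) (z : ℕ → ℝ) (t : ℕ) (W : ℤ) : Pol :=
  ∑ τ ∈ range (t + 1), z τ • (hh k τ * hh k (W - τ))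

noncomputable def UU (θ : ℝ) (z : ℕ → ℝ) (t s : ℕ) : ℝ :=
  ∑ τ ∈ range (t + 1), z τ * (if s ≤ τ then us θ (τ - s) else 0)

noncomputable def zd (z : ℕ → ℝ) (t : ℕ) (ζ : ℝ) (l : ℕ) (τ : ℕ) : ℝ :=
  z τ - (if τ = t then ζ else 0) + (if τ + l = t then ζ else 0)

lemma sum_zd {A : Type*} [AddCommGroup A] [Module ℝ A] (z : ℕ → ℝ) (t : ℕ) (ζ : ℝ) (l : ℕ) (g : ℕ → A) :
    ∑ τ ∈ range (t + 1), zd z t ζ l τ • g τ =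
      ∑ τ ∈ range (t + 1), z τ • g τ - ζ • g t + if l ≤ t then ζ • g (t - l) else 0 := by
  unfold zd
  simp_rw [add_smul, sub_smul]
  rw [Finset.sum_add_distrib, Finset.sum_sub_distrib]
  congr 1
  · congr 1
    simp
  · split_ifs with hl
    · rw [Finset.sum_eq_single (t - l)]
      · rw [if_pos (by omega)]
      · intro b _ hb; rw [if_neg (by omega), zero_smul]
      · intro hb; rw [mem_range] at hb; omega
    · apply Finset.sum_eq_zero
      intro b _; rw [if_neg (by omega), zero_smul]

lemma G_draw (k : ℕ) (z : ℕ → ℝ) (t : ℕ) (W : ℤ) (ζ : ℝ) (ht : 1 ≤ t) (hW : (t : ℤ) < W) :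
    G k z t W = ∑ l ∈ Icc 2 k, X l * G k (zd z t ζ l) t (W - l) := by
  have e1 : ∀ l, G k (zd z t ζ l) t (W - l) = G k z t (W - l) -
      ζ • (hh k t * hh k (W - t - l)) + ζ • (hh k (t - l) * hh k (W - t)) := by
    intro l
    unfold G
    rw [sum_zd]
    congr 1
    · congr 4; ring
    · split_ifs with hl
      · congr 3
        · congr 1; omega
        · omega
      · rw [hh_neg k (by omega : (t : ℤ) - l < 0), zero_mul, smul_zero]
  have e2 : ∑ l ∈ Icc 2 k, X l * G k z t (W - l) = G k z t W := by
    unfold G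
    simp_rw [Finset.mul_sum]
    rw [Finset.sum_comm]
    apply Finset.sum_congr rfl
    intro τ hτ
    rw [mem_range] at hτ
    rw [hh_rec k (show 1 ≤ W - (τ : ℤ) by omega), Finset.mul_sum, Finset.smul_sum]
    apply Finset.sum_congr rfl
    intro l _
    rw [mul_smul_comm, show W - (l : ℤ) - τ = W - τ - l by ring]
    congr 1; ring
  simp_rw [e1, mul_add, mul_sub]
  rw [Finset.sum_add_distrib, Finset.sum_sub_distrib, e2]
  have e3 : ∑ l ∈ Icc 2 k, (X l * ζ • (hh k t * hh k (W - t - l)) : Pol) = ζ • (hh k t * hh k (W - t)) := by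
    rw [hh_rec k (show 1 ≤ W - (t : ℤ) by omega), Finset.mul_sum, Finset.smul_sum]
    apply Finset.sum_congr rfl
    intro l _
    rw [mul_smul_comm]; congr 1; ring
  have e4 : ∑ l ∈ Icc 2 k, (X l * ζ • (hh k (t - l) * hh k (W - t)) : Pol) = ζ • (hh k t * hh k (W - t)) := by
    rw [hh_rec k (show 1 ≤ (t : ℤ) by omega), Finset.sum_mul, Finset.smul_sum]
    apply Finset.sum_congr rfl
    intro l _
    rw [mul_smul_comm]; congr 1; ring
  rw [e3, e4]; ring

lemma UU_draw (θ : ℝ) (z : ℕ → ℝ) (t s : ℕ) (hs : s < t) (ζ : ℝ) (l : ℕ) :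
    UU θ (zd z t ζ l) t s = UU θ z t s +
      ζ * ((if l ≤ t - s then us θ (t - s - l) else 0) - us θ (t - s)) := by
  unfold UU
  have := sum_zd z t ζ l (fun τ => if s ≤ τ then us θ (τ - s) else 0)
  simp only [smul_eq_mul] at this
  rw [this, if_pos hs.le]
  split_ifs with h1 h2 h3 h3
  · rw [show t - l - s = t - s - l by omega]; ring
  · omega
  · omega
  · ring
  · omega
  · ring

lemma zd_abs (z : ℕ → ℝ) (t i : ℕ) (ζ : ℝ) (hz : z t = (i + 1) * ζ) (l : ℕ) (hl : 2 ≤ l) :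
    ∑ τ ∈ range (t + 1), |zd z t ζ l τ| ≤ ∑ τ ∈ range (t + 1), |z τ| := by
  have step : ∀ τ ∈ range (t + 1), |zd z t ζ l τ| ≤
      |z τ| - (if τ = t then |ζ| else 0) + (if τ + l = t then |ζ| else 0) := by
    intro τ _
    unfold zd
    by_cases h1 : τ = t
    · subst h1
      rw [if_pos rfl, if_neg (by omega), if_pos rfl, if_neg (by omega), hz]
      rw [show ((i : ℝ) + 1) * ζ - ζ + 0 = i * ζ by ring, abs_mul, abs_mul]
      have : |(i : ℝ) + 1| = i + 1 := abs_of_nonneg (by positivity)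
      rw [this, Nat.abs_cast]
      apply le_of_eq; ring
    · rw [if_neg h1, if_neg h1]
      split_ifs
      · simpa using abs_add_le (z τ) ζ
      · simp
  refine (Finset.sum_le_sum step).trans ?_
  rw [Finset.sum_add_distrib, Finset.sum_sub_distrib]
  have a1 : ∑ τ ∈ range (t + 1), (if τ = t then |ζ| else 0) = |ζ| := by simp
  have a2 : ∑ τ ∈ range (t + 1), (if τ + l = t then |ζ| else 0) ≤ |ζ| := by
    by_cases hl : l ≤ t
    · rw [Finset.sum_eq_single (t - l)]
      · rw [if_pos (by omega)]
      · intro b _ hb; rw [if_neg (by omega)]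
      · intro hb; rw [mem_range] at hb; omega
    · rw [Finset.sum_eq_zero]
      · positivity
      · intro b _; rw [if_neg (by omega)]
  linarith

lemma G_halt {p : ℕ → ℝ} (hp : ∀ l, 0 ≤ p l) (k m : ℕ) (z : ℕ → ℝ) (t : ℕ) (W : ℤ) (P : Pol) (hP : NN P)
    (M : ℝ) (hM : sq k p m (hh k W * P) ≤ M) :
    sq k p m (G k z t W * P) ≤ (∑ τ ∈ range (t + 1), |z τ|) ^ 2 * M := by
  have hM0 : 0 ≤ M := (sq_nonneg' hp _ _).trans hM
  have : nrm k p m (G k z t W * P) ≤ (∑ τ ∈ range (t + 1), |z τ|) * Real.sqrt M := by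
    unfold G
    rw [Finset.sum_mul, Finset.sum_mul]
    refine (nrm_sum hp _ _ _).trans (Finset.sum_le_sum fun τ _ => ?_)
    rw [smul_mul_assoc, nrm_smul hp]
    apply mul_le_mul_of_nonneg_left _ (abs_nonneg _)
    refine (nrm_mono hp m (Q := hh k W * P) (NN_mul (NN_mul (NN_hh _ _) (NN_hh _ _)) hP) ?_).trans
      (Real.sqrt_le_sqrt hM)
    rw [← sub_mul]
    apply NN_mul _ hP
    have := NN_hh_sub k τ (W - τ)
    rwa [add_sub_cancel] at this
  rw [← nrm_sq hp]
  calc _ ≤ ((∑ τ ∈ range (t + 1), |z τ|) * Real.sqrt M) ^ 2 := by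
        apply pow_le_pow_left₀ (nrm_nonneg hp _ _) this
    _ = _ := by rw [mul_pow, Real.sq_sqrt hM0]

/-- Inversion: total variation of `z` bounded by the `U`s. -/
lemma UU_inv (θ : ℝ) (h1 : 0 ≤ θ) (h2 : θ ≤ 1) (z : ℕ → ℝ) (t : ℕ) :
    ∑ τ ∈ range (t + 1), |z τ| ≤ 2 * ∑ s ∈ range (t + 1), |UU θ z t s| := by
  have hp := pp_nonneg θ h1 h2
  have key : ∀ s ∈ range (t + 1), UU θ z t s = z s + ∑ l ∈ Icc 2 t, pp θ l *
      (if s + l ≤ t then UU θ z t (s + l) else 0) := by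
    intro s hs
    rw [mem_range] at hs
    have e : ∀ τ ∈ range (t + 1), (if s ≤ τ then us θ (τ - s) else 0) = (if τ = s then 1 else 0) +
        ∑ l ∈ Icc 2 t, pp θ l * (if s + l ≤ τ then us θ (τ - (s + l)) else 0) := by
      intro τ hτ
      rw [mem_range] at hτ
      by_cases h3 : s ≤ τ
      · by_cases h4 : τ = s
        · subst h4
          rw [Finset.sum_eq_zero]
          · simp [us_zero θ (by linarith)]
          · intro l hl; rw [mem_Icc] at hl; rw [if_neg (by omega), mul_zero]
        · rw [if_pos h3, if_neg h4, zero_add, ← us_conv θ (by linarith) (τ - s) (by omega)]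
          have : ∑ l ∈ Icc 2 (τ - s), pp θ l * us θ (τ - s - l) = ∑ l ∈ Icc 2 (τ - s), pp θ l *
              (if s + l ≤ τ then us θ (τ - (s + l)) else 0) := by
            apply Finset.sum_congr rfl
            intro l hl; rw [mem_Icc] at hl; rw [if_pos (by omega), Nat.sub_sub]
          rw [this]
          apply Finset.sum_subset (Finset.Icc_subset_Icc le_rfl (by omega))
          intro l hl hl'
          rw [mem_Icc] at hl hl'
          rw [if_neg (by omega), mul_zero]
      · rw [if_neg h3, if_neg (by omega), Finset.sum_eq_zero]
        · simp
        · intro l hl; rw [if_neg (by omega), mul_zero]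
    have e2 : UU θ z t s = ∑ τ ∈ range (t + 1), (z τ * (if τ = s then 1 else 0) +
        ∑ l ∈ Icc 2 t, pp θ l * (z τ * (if s + l ≤ τ then us θ (τ - (s + l)) else 0))) := by
      unfold UU
      apply Finset.sum_congr rfl
      intro τ hτ
      rw [e τ hτ, mul_add, Finset.mul_sum]
      congr 1
      apply Finset.sum_congr rfl
      intro l _; ring
    rw [e2, Finset.sum_add_distrib]
    congr 1
    · simp [hs]
    · rw [Finset.sum_comm]
      apply Finset.sum_congr rfl
      intro l _
      rw [← Finset.mul_sum]
      congr 1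
      split_ifs with h5
      · rfl
      · apply Finset.sum_eq_zero
        intro τ hτ
        rw [mem_range] at hτ
        rw [if_neg (by omega), mul_zero]
  have k2 : ∀ s ∈ range (t + 1), |z s| ≤ |UU θ z t s| + ∑ l ∈ Icc 2 t, pp θ l *
      (if s + l ≤ t then |UU θ z t (s + l)| else 0) := by
    intro s hs
    have : z s = UU θ z t s - ∑ l ∈ Icc 2 t, pp θ l *
      (if s + l ≤ t then UU θ z t (s + l) else 0) := by rw [key s hs]; ring
    rw [this]
    refine (abs_sub _ _).trans ?_
    gcongr
    refine (Finset.abs_sum_le_sum_abs _ _).trans (Finset.sum_le_sum fun l _ => ?_)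
    rw [abs_mul, abs_of_nonneg (hp l)]
    apply mul_le_mul_of_nonneg_left _ (hp l)
    split_ifs <;> simp
  refine (Finset.sum_le_sum k2).trans ?_
  rw [Finset.sum_add_distrib, Finset.sum_comm, two_mul]
  gcongr
  have k3 : ∀ l ∈ Icc 2 t, ∑ s ∈ range (t + 1), pp θ l *
      (if s + l ≤ t then |UU θ z t (s + l)| else 0) ≤ pp θ l * ∑ s ∈ range (t + 1), |UU θ z t s| := by
    intro l _
    rw [← Finset.mul_sum]
    apply mul_le_mul_of_nonneg_left _ (hp l)
    rw [← Finset.sum_filter]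
    have := Finset.sum_image (s := (range (t + 1)).filter (fun s => s + l ≤ t))
      (f := fun s => |UU θ z t s|) (g := fun s => s + l) (fun x _ y _ hxy => by
        simp only at hxy; omega)
    rw [← this]
    apply Finset.sum_le_sum_of_subset_of_nonneg
    · intro x hx
      simp only [mem_image, mem_filter, mem_range] at hx ⊢
      obtain ⟨y, hy, rfl⟩ := hx; omega
    · intro _ _ _; positivity
  refine (Finset.sum_le_sum k3).trans ?_
  rw [← Finset.sum_mul]
  have : 0 ≤ ∑ s ∈ range (t + 1), |UU θ z t s| := Finset.sum_nonneg fun _ _ => abs_nonneg _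
  nlinarith [pp_sum_le θ h1 t]

end P13


namespace P13
open MvPolynomial Finset

noncomputable def cc (lam : ℝ) (t0 s : ℕ) : ℝ := lam ^ (s - t0)

noncomputable def SS (θ lam : ℝ) (t0 t : ℕ) : ℝ :=
  ∑ s ∈ range t, cc lam t0 s * (20 * θ ^ (t - s))

lemma cc_nonneg (lam : ℝ) (h : 0 ≤ lam) (t0 s : ℕ) : 0 ≤ cc lam t0 s := pow_nonneg h _

lemma cc_succ (lam : ℝ) (h : 0 ≤ lam) (h1 : lam ≤ 1) (t0 s : ℕ) :
    lam * cc lam t0 s ≤ cc lam t0 (s + 1) := by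
  unfold cc
  by_cases hs : t0 ≤ s
  · rw [show s + 1 - t0 = (s - t0) + 1 by omega, pow_succ, mul_comm]
  · rw [show s + 1 - t0 = 0 by omega, show s - t0 = 0 by omega]; simpa using h1

lemma SS_le (θ lam : ℝ) (h0 : 0 ≤ θ) (hl : θ < lam) (hl1 : lam ≤ 1) (q : ℕ)
    (hq : 20 * θ ≤ q * (lam - θ)) (t0 t : ℕ) : SS θ lam t0 t ≤ q * cc lam t0 t := by
  induction t with
  | zero =>
    unfold SS; simp
    exact mul_nonneg (by positivity) (cc_nonneg _ (by linarith) _ _)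
  | succ t ih =>
    have e : SS θ lam t0 (t + 1) = θ * SS θ lam t0 t + cc lam t0 t * (20 * θ) := by
      unfold SS
      rw [Finset.sum_range_succ, Finset.mul_sum]
      congr 1
      · apply Finset.sum_congr rfl
        intro s hs
        rw [mem_range] at hs
        rw [show t + 1 - s = (t - s) + 1 by omega, pow_succ]; ring
      · simp
    have hc := cc_nonneg lam (by linarith) t0 t
    have hs := cc_succ lam (by linarith) hl1 t0 t
    rw [e]
    have a1 := mul_le_mul_of_nonneg_left ih h0
    have a2 := mul_le_mul_of_nonneg_left hq hc
    have a3 := mul_le_mul_of_nonneg_left hs (show (0 : ℝ) ≤ q by positivity)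
    nlinarith

lemma pp_three_halves (θ : ℝ) (h1 : 0.45 ≤ θ) (h2 : θ ≤ 0.55) (k : ℕ) :
    ∑ l ∈ Icc 2 k, pp θ l * (3 / 2) ^ l ≤ 8 := by
  have key : ∀ k, ∑ l ∈ Icc 2 (k + 1), pp θ l * (3 / 2 : ℝ) ^ l ≤ 8 - 8 * (3 / 2 * θ) ^ k := by
    intro k
    induction k with
    | zero => simp
    | succ k ih =>
      rw [Finset.sum_Icc_succ_top (by omega)]
      have e : pp θ (k + 1 + 1) * (3 / 2 : ℝ) ^ (k + 1 + 1) = (1 - θ) * (9 / 4) * (3 / 2 * θ) ^ k := by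
        unfold pp; rw [show k + 1 + 1 - 2 = k by omega, mul_pow]; ring
      rw [e, pow_succ (3 / 2 * θ)]
      have : 0 ≤ (3 / 2 * θ) ^ k := by apply pow_nonneg; linarith
      nlinarith
  cases k with
  | zero => simp
  | succ k =>
    have : 0 ≤ (3 / 2 * θ) ^ k := by apply pow_nonneg; linarith
    linarith [key k]

lemma K_main (θ lam : ℝ) (h1 : 0.45 ≤ θ) (h2 : θ ≤ 0.55) (hl : θ < lam) (hl1 : lam ≤ 0.9) (q : ℕ)
    (hq : 20 * θ ≤ q * (lam - θ)) (k : ℕ) (P : Pol) (hP : NN P) (Wlo Whi : ℤ) (M : ℝ) (hM0 : 0 ≤ M)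
    (hM : ∀ m W, Wlo ≤ W → W ≤ Whi → sq k (pp θ) m (hh k W * P) ≤ M) (a t0 : ℕ) (d : ℕ) :
    ∀ (i : ℕ) (z : ℕ → ℝ) (ζ : ℝ) (W : ℤ) (m : ℕ), z (t0 + 1 + d) = i * ζ →
      ∑ τ ∈ range (t0 + 1 + d + 1), |z τ| ≤ 2 → t0 + 1 + d ≤ a + 1 →
      Wlo + k * (q * d + i) ≤ W → W ≤ Whi →
      sq k (pp θ) m (G k z (t0 + 1 + d) W * P) ≤ M * (4 * (t0 + 1) *
        (∑ s ∈ range (t0 + 1 + d), cc lam t0 s * UU θ z (t0 + 1 + d) s ^ 2 +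
          i * ζ ^ 2 * SS θ lam t0 (t0 + 1 + d)) +
        4 * 8 ^ (q * d + i) * (2 / 3 : ℝ) ^ (W - a - 1)) := by
  have hp := pp_nonneg θ (by linarith) (by linarith)
  have hlam : 0 ≤ lam := by linarith
  have hcn : ∀ s, 0 ≤ cc lam t0 s := cc_nonneg lam hlam t0
  have hSn : ∀ t, 0 ≤ SS θ lam t0 t := fun t => Finset.sum_nonneg fun s _ =>
    mul_nonneg (hcn s) (mul_nonneg (by norm_num) (pow_nonneg (by linarith) _))
  have halting : ∀ (d i : ℕ) (z : ℕ → ℝ) (ζ : ℝ) (W : ℤ) (m : ℕ),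
      ∑ τ ∈ range (t0 + 1 + d + 1), |z τ| ≤ 2 → t0 + 1 + d ≤ a + 1 →
      Wlo ≤ W → W ≤ Whi → W ≤ (t0 + 1 + d : ℕ) →
      sq k (pp θ) m (G k z (t0 + 1 + d) W * P) ≤ M * (4 * (t0 + 1) *
        (∑ s ∈ range (t0 + 1 + d), cc lam t0 s * UU θ z (t0 + 1 + d) s ^ 2 +
          i * ζ ^ 2 * SS θ lam t0 (t0 + 1 + d)) +
        4 * 8 ^ (q * d + i) * (2 / 3 : ℝ) ^ (W - a - 1)) := by
    intro d i z ζ W m hz ha hW1 hW2 hW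
    have g := G_halt hp k m z (t0 + 1 + d) W P hP M (hM m W hW1 hW2)
    have hs0 : 0 ≤ ∑ τ ∈ range (t0 + 1 + d + 1), |z τ| := Finset.sum_nonneg fun _ _ => abs_nonneg _
    have g1 : (∑ τ ∈ range (t0 + 1 + d + 1), |z τ|) ^ 2 ≤ 4 := by nlinarith
    have g2 : (1 : ℝ) ≤ (2 / 3 : ℝ) ^ (W - a - 1) := by
      apply one_le_zpow_of_nonpos₀ (by norm_num) (by norm_num)
      push_cast at hW; omega
    have g3 : (1 : ℝ) ≤ 8 ^ (q * d + i) := one_le_pow₀ (by norm_num)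
    have g4 : 0 ≤ 4 * ((t0 : ℝ) + 1) * (∑ s ∈ range (t0 + 1 + d), cc lam t0 s * UU θ z (t0 + 1 + d) s ^ 2 +
          i * ζ ^ 2 * SS θ lam t0 (t0 + 1 + d)) := by
      apply mul_nonneg (by positivity)
      apply add_nonneg
      · exact Finset.sum_nonneg fun s _ => mul_nonneg (hcn s) (sq_nonneg _)
      · exact mul_nonneg (by positivity) (hSn _)
    calc _ ≤ _ := g
      _ ≤ 4 * M := by gcongr
      _ = M * 4 := by ring
      _ ≤ _ := by
        apply mul_le_mul_of_nonneg_left _ hM0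
        nlinarith [mul_le_mul g3 g2 (by norm_num) (by positivity)]
  have step : ∀ (d i : ℕ), (∀ (z : ℕ → ℝ) (ζ : ℝ) (W : ℤ) (m : ℕ), z (t0 + 1 + d) = i * ζ →
      ∑ τ ∈ range (t0 + 1 + d + 1), |z τ| ≤ 2 → t0 + 1 + d ≤ a + 1 →
      Wlo + k * (q * d + i) ≤ W → W ≤ Whi →
      sq k (pp θ) m (G k z (t0 + 1 + d) W * P) ≤ M * (4 * (t0 + 1) *
        (∑ s ∈ range (t0 + 1 + d), cc lam t0 s * UU θ z (t0 + 1 + d) s ^ 2 +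
          i * ζ ^ 2 * SS θ lam t0 (t0 + 1 + d)) +
        4 * 8 ^ (q * d + i) * (2 / 3 : ℝ) ^ (W - a - 1))) →
      (∀ (z : ℕ → ℝ) (ζ : ℝ) (W : ℤ) (m : ℕ), z (t0 + 1 + d) = (i + 1 : ℕ) * ζ →
      ∑ τ ∈ range (t0 + 1 + d + 1), |z τ| ≤ 2 → t0 + 1 + d ≤ a + 1 →
      Wlo + k * (q * d + (i + 1 : ℕ)) ≤ W → W ≤ Whi →
      sq k (pp θ) m (G k z (t0 + 1 + d) W * P) ≤ M * (4 * (t0 + 1) *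
        (∑ s ∈ range (t0 + 1 + d), cc lam t0 s * UU θ z (t0 + 1 + d) s ^ 2 +
          (i + 1 : ℕ) * ζ ^ 2 * SS θ lam t0 (t0 + 1 + d)) +
        4 * 8 ^ (q * d + (i + 1)) * (2 / 3 : ℝ) ^ (W - a - 1))) := by
    intro d i ih z ζ W m hz habs ha hW1 hW2
    set t := t0 + 1 + d with ht
    have hkn : (0 : ℤ) ≤ k := by positivity
    have hWlo : Wlo ≤ W := by
      have : (0 : ℤ) ≤ (k : ℤ) * (q * d + (i + 1 : ℕ)) := by positivity
      linarith
    by_cases hWt : W ≤ (t : ℤ)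
    · exact halting d (i + 1) z ζ W m habs ha hWlo hW2 hWt
    push Not at hWt
    have hrhs : 0 ≤ M * (4 * ((t0 : ℝ) + 1) *
        (∑ s ∈ range t, cc lam t0 s * UU θ z t s ^ 2 +
          (i + 1 : ℕ) * ζ ^ 2 * SS θ lam t0 t) +
        4 * 8 ^ (q * d + (i + 1)) * (2 / 3 : ℝ) ^ (W - a - 1)) := by
      apply mul_nonneg hM0
      apply add_nonneg
      · apply mul_nonneg (by positivity)
        apply add_nonneg
        · exact Finset.sum_nonneg fun s _ => mul_nonneg (hcn s) (sq_nonneg _)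
        · exact mul_nonneg (by positivity) (hSn _)
      · positivity
    have hG : G k z t W * P = ∑ l ∈ Icc 2 k, X l * (G k (zd z t ζ l) t (W - l) * P) := by
      rw [G_draw k z t W ζ (by omega) hWt, Finset.sum_mul]
      apply Finset.sum_congr rfl
      intro l _; ring
    rw [hG]
    cases m with
    | zero => rw [sq_X_zero hp]; exact hrhs
    | succ m =>
      refine (sq_jensen hp m _).trans ?_
      have each : ∀ l ∈ Icc 2 k, pp θ l * sq k (pp θ) m (G k (zd z t ζ l) t (W - l) * P) ≤
          pp θ l * (M * (4 * (t0 + 1) *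
        (∑ s ∈ range t, cc lam t0 s * UU θ (zd z t ζ l) t s ^ 2 +
          i * ζ ^ 2 * SS θ lam t0 t) +
        4 * 8 ^ (q * d + i) * (2 / 3 : ℝ) ^ (W - l - a - 1))) := by
        intro l hl'
        rw [mem_Icc] at hl'
        apply mul_le_mul_of_nonneg_left _ (hp l)
        apply ih
        · unfold zd
          rw [if_pos rfl, if_neg (by omega), hz]; push_cast; ring
        · exact (zd_abs z t i ζ (by rw [hz]; push_cast; ring) l hl'.1).trans habs
        · exact ha
        · have : (l : ℤ) ≤ k := by exact_mod_cast hl'.2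
          push_cast at hW1
          nlinarith
        · omega
      refine (Finset.sum_le_sum each).trans ?_
      have hw : ∀ l : ℕ, (2 / 3 : ℝ) ^ (W - l - a - 1) = (3 / 2) ^ l * (2 / 3 : ℝ) ^ (W - a - 1) := by
        intro l
        rw [show W - (l : ℤ) - a - 1 = -(l : ℤ) + (W - a - 1) by ring, zpow_add₀ (by norm_num),
          zpow_neg, zpow_natCast, ← inv_pow]
        norm_num
      have hvar : ∑ l ∈ Icc 2 k, pp θ l * ∑ s ∈ range t, cc lam t0 s * UU θ (zd z t ζ l) t s ^ 2 ≤
          ∑ s ∈ range t, cc lam t0 s * UU θ z t s ^ 2 + ζ ^ 2 * SS θ lam t0 t := by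
        simp_rw [Finset.mul_sum]
        rw [Finset.sum_comm]
        unfold SS
        rw [Finset.mul_sum, ← Finset.sum_add_distrib]
        apply Finset.sum_le_sum
        intro s hs
        rw [mem_range] at hs
        have := draw_var θ h1 h2 k (t - s) (by omega) (UU θ z t s) ζ
        have e : ∑ l ∈ Icc 2 k, pp θ l * (cc lam t0 s * UU θ (zd z t ζ l) t s ^ 2) =
            cc lam t0 s * ∑ l ∈ Icc 2 k, pp θ l * (UU θ z t s +
              ζ * ((if l ≤ t - s then us θ (t - s - l) else 0) - us θ (t - s))) ^ 2 := by
          rw [Finset.mul_sum]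
          apply Finset.sum_congr rfl
          intro l _
          rw [UU_draw θ z t s hs]; ring
        rw [e]
        refine (mul_le_mul_of_nonneg_left this (hcn s)).trans (le_of_eq ?_)
        ring
      have expand : ∑ l ∈ Icc 2 k, pp θ l * (M * (4 * ((t0 : ℝ) + 1) *
        (∑ s ∈ range t, cc lam t0 s * UU θ (zd z t ζ l) t s ^ 2 +
          i * ζ ^ 2 * SS θ lam t0 t) +
        4 * 8 ^ (q * d + i) * (2 / 3 : ℝ) ^ (W - l - a - 1))) =
        M * (4 * (t0 + 1) * (∑ l ∈ Icc 2 k, pp θ l * ∑ s ∈ range t, cc lam t0 s * UU θ (zd z t ζ l) t s ^ 2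
          + (i * ζ ^ 2 * SS θ lam t0 t) * ∑ l ∈ Icc 2 k, pp θ l) + 4 * 8 ^ (q * d + i) *
          (2 / 3 : ℝ) ^ (W - a - 1) * ∑ l ∈ Icc 2 k, pp θ l * (3 / 2) ^ l) := by
        rw [Finset.mul_sum (s := Icc 2 k) (a := (i * ζ ^ 2 * SS θ lam t0 t)),
          ← Finset.sum_add_distrib, Finset.mul_sum (s := Icc 2 k), Finset.mul_sum (s := Icc 2 k),
          ← Finset.sum_add_distrib, Finset.mul_sum (s := Icc 2 k)]
        apply Finset.sum_congr rfl
        intro l _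
        rw [hw]; ring
      rw [expand]
      apply mul_le_mul_of_nonneg_left _ hM0
      have b1 : (i * ζ ^ 2 * SS θ lam t0 t) * ∑ l ∈ Icc 2 k, pp θ l ≤ i * ζ ^ 2 * SS θ lam t0 t := by
        have h0 : 0 ≤ (i : ℝ) * ζ ^ 2 * SS θ lam t0 t := mul_nonneg (by positivity) (hSn _)
        have := mul_le_mul_of_nonneg_left (pp_sum_le θ (by linarith) k) h0
        linarith
      have b2 := pp_three_halves θ h1 h2 k
      have b3 : 4 * 8 ^ (q * d + i) * (2 / 3 : ℝ) ^ (W - a - 1) * ∑ l ∈ Icc 2 k, pp θ l * (3 / 2) ^ l ≤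
          4 * 8 ^ (q * d + (i + 1)) * (2 / 3 : ℝ) ^ (W - a - 1) := by
        have := mul_le_mul_of_nonneg_left b2 (show 0 ≤ 4 * (8 : ℝ) ^ (q * d + i) * (2 / 3 : ℝ) ^ (W - a - 1) by positivity)
        refine this.trans (le_of_eq ?_)
        rw [← add_assoc, pow_succ]; ring
      have b4 : ∑ l ∈ Icc 2 k, pp θ l * ∑ s ∈ range t, cc lam t0 s * UU θ (zd z t ζ l) t s ^ 2
          + (i * ζ ^ 2 * SS θ lam t0 t) * ∑ l ∈ Icc 2 k, pp θ l ≤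
          ∑ s ∈ range t, cc lam t0 s * UU θ z t s ^ 2 + (i + 1 : ℕ) * ζ ^ 2 * SS θ lam t0 t := by
        push_cast; linarith
      have b5 := mul_le_mul_of_nonneg_left b4 (show 0 ≤ 4 * ((t0 : ℝ) + 1) by positivity)
      linarith
  induction d with
  | zero =>
    intro i
    induction i with
    | zero =>
      intro z ζ W m hz habs ha hW1 hW2
      have hz0 : z (t0 + 1) = 0 := by simpa using hz
      have g := G_halt hp k m z (t0 + 1) W P hP M (hM m W (by simpa using hW1) hW2)
      have e1 : ∑ τ ∈ range (t0 + 1 + 1), |z τ| = ∑ τ ∈ range (t0 + 1), |z τ| := by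
        rw [Finset.sum_range_succ, hz0]; simp
      have e2 : ∀ s, UU θ z (t0 + 1) s = UU θ z t0 s := by
        intro s; unfold UU; rw [Finset.sum_range_succ, hz0]; simp
      have hinv := UU_inv θ (by linarith) (by linarith) z t0
      have hcs := sq_sum_le_card_mul_sum_sq (s := range (t0 + 1)) (f := fun s => |UU θ z t0 s|)
      have e3 : ∑ s ∈ range (t0 + 1), cc lam t0 s * UU θ z (t0 + 1) s ^ 2 =
          ∑ s ∈ range (t0 + 1), |UU θ z t0 s| ^ 2 := by
        apply Finset.sum_congr rfl
        intro s hs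
        rw [mem_range] at hs
        unfold cc
        rw [e2, show s - t0 = 0 by omega, pow_zero, one_mul, sq_abs]
      rw [card_range] at hcs
      push_cast at hcs
      have hfin : (∑ τ ∈ range (t0 + 1 + 1), |z τ|) ^ 2 ≤ 4 * (t0 + 1) *
          ∑ s ∈ range (t0 + 1), cc lam t0 s * UU θ z (t0 + 1) s ^ 2 := by
        rw [e1, e3]
        have hs0 : 0 ≤ ∑ τ ∈ range (t0 + 1), |z τ| := Finset.sum_nonneg fun _ _ => abs_nonneg _
        calc _ ≤ (2 * ∑ s ∈ range (t0 + 1), |UU θ z t0 s|) ^ 2 := pow_le_pow_left₀ hs0 hinv 2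
          _ = 4 * (∑ s ∈ range (t0 + 1), |UU θ z t0 s|) ^ 2 := by ring
          _ ≤ _ := by nlinarith
      refine g.trans ?_
      rw [mul_comm]
      apply mul_le_mul_of_nonneg_left _ hM0
      have : (0 : ℝ) ≤ 4 * 8 ^ (q * 0 + 0) * (2 / 3 : ℝ) ^ (W - a - 1) := by positivity
      simp only [add_zero, Nat.cast_zero, zero_mul] at hfin ⊢
      simp only [mul_zero, add_zero] at this ⊢
      linarith
    | succ i ih => exact step 0 i ih
  | succ d ihd =>
    intro i
    induction i with
    | zero =>
      intro z ζ W m hz habs ha hW1 hW2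
      have hz0 : z (t0 + 1 + (d + 1)) = 0 := by simpa using hz
      have eG : G k z (t0 + 1 + (d + 1)) W = G k z (t0 + 1 + d) W := by
        unfold G
        rw [show t0 + 1 + (d + 1) + 1 = (t0 + 1 + d + 1) + 1 by ring, Finset.sum_range_succ,
          show t0 + 1 + d + 1 = t0 + 1 + (d + 1) by ring, hz0]
        simp
      have eU : ∀ s, UU θ z (t0 + 1 + (d + 1)) s = UU θ z (t0 + 1 + d) s := by
        intro s
        unfold UU
        rw [show t0 + 1 + (d + 1) + 1 = (t0 + 1 + d + 1) + 1 by ring, Finset.sum_range_succ,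
          show t0 + 1 + d + 1 = t0 + 1 + (d + 1) by ring, hz0]
        simp
      have hq0 : (q : ℝ) ≠ 0 := by
        intro h0; rw [h0] at hq; linarith
      have hqp : (0 : ℝ) < q := lt_of_le_of_ne (by positivity) (Ne.symm hq0)
      have := ihd q z (z (t0 + 1 + d) / q) W m (by field_simp)
        (by
          rw [show t0 + 1 + (d + 1) + 1 = (t0 + 1 + d + 1) + 1 by ring, Finset.sum_range_succ] at habs
          linarith [abs_nonneg (z (t0 + 1 + d + 1))]) (by omega)
        (by push_cast at hW1 ⊢; nlinarith) hW2
      rw [eG]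
      refine this.trans ?_
      apply mul_le_mul_of_nonneg_left _ hM0
      have hUt : UU θ z (t0 + 1 + d) (t0 + 1 + d) = z (t0 + 1 + d) := by
        unfold UU
        rw [Finset.sum_range_succ, Finset.sum_eq_zero]
        · simp [us_zero θ (by linarith)]
        · intro τ hτ
          rw [mem_range] at hτ
          rw [if_neg (by omega), mul_zero]
      have eS : ∑ s ∈ range (t0 + 1 + (d + 1)), cc lam t0 s * UU θ z (t0 + 1 + (d + 1)) s ^ 2 =
          ∑ s ∈ range (t0 + 1 + d), cc lam t0 s * UU θ z (t0 + 1 + d) s ^ 2 +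
            cc lam t0 (t0 + 1 + d) * z (t0 + 1 + d) ^ 2 := by
        simp_rw [eU]
        rw [show t0 + 1 + (d + 1) = (t0 + 1 + d) + 1 by ring, Finset.sum_range_succ, hUt]
      rw [eS, show q * (d + 1) + 0 = q * d + q by ring]
      have hS := SS_le θ lam (by linarith) hl (by linarith) q hq t0 (t0 + 1 + d)
      have : q * (z (t0 + 1 + d) / q) ^ 2 * SS θ lam t0 (t0 + 1 + d) ≤
          cc lam t0 (t0 + 1 + d) * z (t0 + 1 + d) ^ 2 := by
        have e9 : (q : ℝ) * (z (t0 + 1 + d) / q) ^ 2 = z (t0 + 1 + d) ^ 2 / q := by field_simp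
        rw [e9, div_mul_eq_mul_div, div_le_iff₀ hqp]
        nlinarith [mul_le_mul_of_nonneg_left hS (sq_nonneg (z (t0 + 1 + d)))]
      have h4 : 0 ≤ 4 * ((t0 : ℝ) + 1) := by positivity
      simp only [Nat.cast_zero, zero_mul, add_zero]
      gcongr
    | succ i ih => exact step (d + 1) i ih

/-- Lemma K. -/
lemma lemma_K (θ lam : ℝ) (h1 : 0.45 ≤ θ) (h2 : θ ≤ 0.55) (hl : θ < lam) (hl1 : lam ≤ 0.9) (q : ℕ)
    (hq : 20 * θ ≤ q * (lam - θ)) (k : ℕ) (P : Pol) (hP : NN P) (a t0 : ℕ) (c : ℤ) (ht0 : t0 ≤ a)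
    (M : ℝ) (hM0 : 0 ≤ M)
    (hM : ∀ m W, (a + c) - q * k * (a + 1) ≤ W → W ≤ a + c → sq k (pp θ) m (hh k W * P) ≤ M) (m : ℕ) :
    sq k (pp θ) m (Del k a c * P) ≤
      M * (16 * (t0 + 1) * lam ^ (a - t0) + 4 * 8 ^ (q * (a + 1 - t0)) * (2 / 3 : ℝ) ^ (c - 1)) := by
  set z : ℕ → ℝ := fun τ => if τ = a then 1 else if τ = a + 1 then -1 else 0 with hz
  have hlam : 0 ≤ lam := by linarith
  have hcn : ∀ s, 0 ≤ cc lam t0 s := cc_nonneg lam hlam t0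
  obtain ⟨d, hd⟩ : ∃ d, t0 + 1 + d = a + 1 := ⟨a - t0, by omega⟩
  have hq0 : (q : ℝ) ≠ 0 := by
    intro h0; rw [h0] at hq; linarith
  have hqp : (0 : ℝ) < q := lt_of_le_of_ne (by positivity) (Ne.symm hq0)
  have zsum : ∀ {A : Type} [AddCommGroup A] [Module ℝ A] (g : ℕ → A),
      ∑ τ ∈ range (a + 1 + 1), z τ • g τ = g a - g (a + 1) := by
    intro A _ _ g
    rw [Finset.sum_range_succ, Finset.sum_range_succ, Finset.sum_eq_zero]
    · simp [hz]; abel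
    · intro τ hτ
      rw [mem_range] at hτ
      simp only [hz]
      rw [if_neg (by omega), if_neg (by omega), zero_smul]
  have hG : Del k a c = G k z (a + 1) (a + c) := by
    unfold G
    rw [zsum]
    unfold Del
    push_cast
    congr 3
    · ring
    · ring
  have habs : ∑ τ ∈ range (a + 1 + 1), |z τ| ≤ 2 := by
    rw [Finset.sum_range_succ, Finset.sum_range_succ, Finset.sum_eq_zero]
    · simp [hz]; norm_num
    · intro τ hτ
      rw [mem_range] at hτ
      simp only [hz]
      rw [if_neg (by omega), if_neg (by omega), abs_zero]
  have main := K_main θ lam h1 h2 hl hl1 q hq k P hP ((a + c) - q * k * (a + 1)) (a + c) M hM0 hM a t0 d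
    q z (-1 / q) (a + c) m (by
      rw [hd]; simp only [hz]
      rw [if_neg (by omega)]; simp; field_simp) (by rw [hd]; exact habs) (by omega)
      (by
        have e : (q : ℤ) * d + q = q * (a + 1) - q * t0 := by
          have : (d : ℤ) = a - t0 := by omega
          rw [this]; ring
        rw [e]
        have : (0 : ℤ) ≤ (k : ℤ) * (q * t0) := by positivity
        nlinarith) le_rfl
  rw [hd] at main
  rw [hG]
  refine main.trans ?_
  apply mul_le_mul_of_nonneg_left _ hM0
  have e1 : q * d + q = q * (a + 1 - t0) := by
    rw [show a + 1 - t0 = d + 1 by omega]; ring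
  rw [e1, show ((a : ℤ) + c - a - 1) = c - 1 by ring]
  have hU : ∀ s ∈ range (a + 1), UU θ z (a + 1) s = (-(1 - θ)) ^ (a - s) := by
    intro s hs
    rw [mem_range] at hs
    unfold UU
    have := zsum (fun τ => if s ≤ τ then us θ (τ - s) else 0)
    simp only [smul_eq_mul] at this
    rw [this, if_pos (by omega), if_pos (by omega), show a + 1 - s = a - s + 1 by omega]
    unfold us
    have : 2 - θ ≠ 0 := by linarith
    field_simp
    ring
  have hS := SS_le θ lam (by linarith) hl (by linarith) q hq t0 (a + 1)
  have hR : ∀ b, ∑ s ∈ range (b + 1), cc lam t0 s * ((1 - θ) ^ 2) ^ (b - s) ≤ 3.1 * cc lam t0 b := by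
    intro b
    induction b with
    | zero => simp; linarith [hcn 0]
    | succ b ih =>
      rw [Finset.sum_range_succ]
      have e : ∑ s ∈ range (b + 1), cc lam t0 s * ((1 - θ) ^ 2) ^ (b + 1 - s) =
          (1 - θ) ^ 2 * ∑ s ∈ range (b + 1), cc lam t0 s * ((1 - θ) ^ 2) ^ (b - s) := by
        rw [Finset.mul_sum]
        apply Finset.sum_congr rfl
        intro s hs
        rw [mem_range] at hs
        rw [show b + 1 - s = (b - s) + 1 by omega, pow_succ]; ring
      rw [e]
      have a1 := mul_le_mul_of_nonneg_left ih (sq_nonneg (1 - θ))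
      have a2 := cc_succ lam hlam (by linarith) t0 b
      have a3 : (1 - θ) ^ 2 * 3.1 ≤ 2.1 * lam := by nlinarith
      have a4 := mul_le_mul_of_nonneg_right a3 (hcn b)
      simp
      linarith
  have hPhi : ∑ s ∈ range (a + 1), cc lam t0 s * UU θ z (a + 1) s ^ 2 ≤ 3.1 * cc lam t0 a := by
    refine le_trans (le_of_eq ?_) (hR a)
    apply Finset.sum_congr rfl
    intro s hs
    rw [hU s hs, ← pow_mul, mul_comm (a - s) 2, pow_mul, neg_sq]
  have hlast : q * (-1 / q) ^ 2 * SS θ lam t0 (a + 1) ≤ 0.9 * cc lam t0 a := by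
    have e9 : (q : ℝ) * (-1 / q) ^ 2 = 1 / q := by field_simp
    rw [e9]
    have : cc lam t0 (a + 1) = lam * cc lam t0 a := by
      unfold cc; rw [show a + 1 - t0 = a - t0 + 1 by omega, pow_succ]; ring
    rw [this] at hS
    rw [one_div, inv_mul_le_iff₀ hqp]
    refine hS.trans ?_
    have := hcn a
    gcongr
  have hca : cc lam t0 a = lam ^ (a - t0) := rfl
  have : 4 * ((t0 : ℝ) + 1) * (∑ s ∈ range (a + 1), cc lam t0 s * UU θ z (a + 1) s ^ 2 +
      q * (-1 / q) ^ 2 * SS θ lam t0 (a + 1)) ≤ 4 * ((t0 : ℝ) + 1) * (4 * lam ^ (a - t0)) := by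
    apply mul_le_mul_of_nonneg_left _ (by positivity)
    rw [← hca]; linarith
  linarith

end P13


namespace P13
open MvPolynomial Finset

noncomputable def uu (θ : ℝ) : ℕ → ℕ → ℝ
  | 0, n => if n = 0 then 1 else 0
  | (x + 1), n => ∑ l ∈ Icc 2 n, pp θ l * uu θ x (n - l)

lemma uu_nonneg (θ : ℝ) (h1 : 0 ≤ θ) (h2 : θ ≤ 1) (x : ℕ) : ∀ n, 0 ≤ uu θ x n := by
  induction x with
  | zero => intro n; simp only [uu]; split_ifs <;> norm_num
  | succ x ih =>
    intro n; simp only [uu]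
    exact Finset.sum_nonneg fun l _ => mul_nonneg (pp_nonneg θ h1 h2 l) (ih _)

lemma uu_zero_of_lt (θ : ℝ) (x : ℕ) : ∀ n, n < 2 * x → uu θ x n = 0 := by
  induction x with
  | zero => intro n hn; omega
  | succ x ih =>
    intro n hn; simp only [uu]
    apply Finset.sum_eq_zero
    intro l hl
    rw [mem_Icc] at hl
    rw [ih _ (by omega), mul_zero]

lemma uu_super (θ : ℝ) (h1 : 0 ≤ θ) (h2 : θ ≤ 1) (x y : ℕ) : ∀ a b,
    uu θ x a * uu θ y b ≤ uu θ (x + y) (a + b) := by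
  induction x with
  | zero =>
    intro a b
    simp only [uu]
    split_ifs with h
    · simp [h]
    · simp; exact uu_nonneg θ h1 h2 _ _
  | succ x ih =>
    intro a b
    rw [show x + 1 + y = (x + y) + 1 by ring]
    simp only [uu]
    rw [Finset.sum_mul]
    have hp := pp_nonneg θ h1 h2
    calc _ ≤ ∑ l ∈ Icc 2 a, pp θ l * uu θ (x + y) (a + b - l) := by
          apply Finset.sum_le_sum
          intro l hl
          rw [mem_Icc] at hl
          rw [mul_assoc, show a + b - l = (a - l) + b by omega]
          exact mul_le_mul_of_nonneg_left (ih _ _) (hp l)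
      _ ≤ _ := by
          apply Finset.sum_le_sum_of_subset_of_nonneg
          · exact Finset.Icc_subset_Icc le_rfl (by omega)
          · intro l _ _; exact mul_nonneg (hp l) (uu_nonneg θ h1 h2 _ _)

lemma uu_step (θ : ℝ) (h1 : 0 ≤ θ) (h2 : θ ≤ 1) (x n : ℕ) (hn : 1 ≤ n) :
    θ * uu θ x n ≤ uu θ x (n + 1) := by
  cases x with
  | zero =>
    simp only [uu]; rw [if_neg (by omega)]; simp
  | succ x =>
    obtain ⟨n, rfl⟩ : ∃ j, n = j + 1 := ⟨n - 1, by omega⟩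
    simp only [uu]
    rw [conv_rec]
    have := mul_nonneg (show 0 ≤ 1 - θ by linarith) (uu_nonneg θ h1 h2 x n)
    linarith

lemma uu_sum (θ : ℝ) (h2 : θ < 2) (n : ℕ) : ∀ N, n < N → ∑ x ∈ range N, uu θ x n = us θ n := by
  induction n using Nat.strong_induction_on with
  | _ n ih =>
    intro N hN
    obtain ⟨N, rfl⟩ : ∃ j, N = j + 1 := ⟨N - 1, by omega⟩
    rw [Finset.sum_range_succ']
    simp only [uu]
    by_cases hn : n = 0
    · subst hn; simp [us_zero θ h2]
    · rw [if_neg hn, add_zero, Finset.sum_comm, ← us_conv θ h2 n (by omega)]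
      apply Finset.sum_congr rfl
      intro l hl
      rw [mem_Icc] at hl
      rw [← Finset.mul_sum, ih (n - l) (by omega) N (by omega)]

noncomputable def QQ (θ : ℝ) (n : ℕ) : ℝ := (range (n + 1)).sup' ⟨0, by simp⟩ (fun x => uu θ x n)

lemma uu_le_QQ (θ : ℝ) (h1 : 0 ≤ θ) (h2 : θ ≤ 1) (x n : ℕ) : uu θ x n ≤ QQ θ n := by
  unfold QQ
  by_cases hx : x < n + 1
  · exact Finset.le_sup' (fun x => uu θ x n) (mem_range.2 hx)
  · rw [uu_zero_of_lt θ x n (by omega)]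
    exact (uu_nonneg θ h1 h2 0 n).trans (Finset.le_sup' (fun x => uu θ x n) (mem_range.2 (by omega)))

lemma QQ_exists (θ : ℝ) (n : ℕ) : ∃ x, QQ θ n = uu θ x n := by
  obtain ⟨x, _, hx⟩ := Finset.exists_mem_eq_sup' (s := range (n + 1)) ⟨0, by simp⟩ (fun x => uu θ x n)
  exact ⟨x, hx⟩

lemma QQ_nonneg (θ : ℝ) (h1 : 0 ≤ θ) (h2 : θ ≤ 1) (n : ℕ) : 0 ≤ QQ θ n :=
  (uu_nonneg θ h1 h2 0 n).trans (uu_le_QQ θ h1 h2 0 n)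

lemma us_lower (θ : ℝ) (h1 : 0.45 ≤ θ) (h2 : θ ≤ 0.55) (w : ℕ) (hw : 2 ≤ w) : 0.2 ≤ us θ w := by
  unfold us
  rw [le_div_iff₀ (by linarith)]
  have h3 : |(-(1 - θ)) ^ w| ≤ (1 - θ) ^ 2 := by
    rw [abs_pow, abs_neg, abs_of_nonneg (by linarith)]
    exact pow_le_pow_of_le_one (by linarith) (by linarith) hw
  by_cases hw2 : w = 2
  · subst hw2; nlinarith
  · have h3 : |(-(1 - θ)) ^ w| ≤ (1 - θ) ^ 3 := by
      rw [abs_pow, abs_neg, abs_of_nonneg (by linarith)]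
      exact pow_le_pow_of_le_one (by linarith) (by linarith) (by omega)
    have := (abs_le.1 h3).1
    nlinarith [mul_nonneg (sub_nonneg.2 h1) (sub_nonneg.2 h2)]

lemma QQ_lower (θ : ℝ) (h1 : 0.45 ≤ θ) (h2 : θ ≤ 0.55) (w : ℕ) (hw : 2 ≤ w) :
    0.2 ≤ (w + 1) * QQ θ w := by
  have := us_lower θ h1 h2 w hw
  rw [← uu_sum θ (by linarith) w (w + 1) (by omega)] at this
  refine this.trans ?_
  have := Finset.sum_le_card_nsmul (range (w + 1)) (fun x => uu θ x w) (QQ θ w)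
    (fun x _ => uu_le_QQ θ (by linarith) (by linarith) x w)
  simpa using this

lemma QQ_shift (θ : ℝ) (h1 : 0.45 ≤ θ) (h2 : θ ≤ 0.55) (a w : ℕ) (haw : 2 ≤ a + w) :
    QQ θ a ≤ 5 * (w + 1) * QQ θ (a + w) := by
  have hn := QQ_nonneg θ (by linarith) (by linarith)
  rcases Nat.lt_or_ge w 2 with hw | hw
  · interval_cases w
    · have := hn (a + 0); simp at this ⊢; linarith
    · obtain ⟨x, hx⟩ := QQ_exists θ a
      have s := uu_step θ (by linarith) (by linarith) x a (by omega)
      have := uu_le_QQ θ (by linarith) (by linarith) x (a + 1)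
      rw [hx]
      have h0 := uu_nonneg θ (by linarith) (by linarith) x a
      push_cast
      nlinarith
  · obtain ⟨x, hx⟩ := QQ_exists θ a
    obtain ⟨y, hy⟩ := QQ_exists θ w
    have s := uu_super θ (by linarith) (by linarith) x y a w
    rw [← hx, ← hy] at s
    have l := QQ_lower θ h1 h2 w hw
    have := uu_le_QQ θ (by linarith) (by linarith) (x + y) (a + w)
    have h3 : QQ θ a * QQ θ w ≤ QQ θ (a + w) := s.trans this
    have h4 := mul_le_mul_of_nonneg_left l (hn a)
    have h5 := mul_le_mul_of_nonneg_left h3 (show (0 : ℝ) ≤ w + 1 by positivity)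
    nlinarith

lemma sq_one {p : ℕ → ℝ} (k m : ℕ) : sq k p m 1 = if m = 0 then 1 else 0 := by
  classical
  split_ifs with hm
  · subst hm
    unfold sq T
    simp [ty, fac]
  · unfold sq
    apply Finset.sum_eq_zero
    intro s _
    have : T 1 s = 0 := by
      unfold T
      rw [coeff_one, if_neg, mul_zero]
      intro h
      have h2 := congrArg (fun γ : ℕ →₀ ℕ => γ (s ⟨0, by omega⟩)) h
      simp only [ty_apply, Finsupp.coe_zero, Pi.zero_apply] at h2
      have h3 := h2.symm
      rw [Finset.card_eq_zero, Finset.filter_eq_empty_iff] at h3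
      exact h3 (mem_univ _) rfl
    rw [this]; simp

lemma sq_hh (θ : ℝ) (h1 : 0 ≤ θ) (h2 : θ ≤ 1) (k : ℕ) (m : ℕ) : ∀ n : ℕ,
    sq k (pp θ) m (hh k n) ≤ uu θ m n := by
  have hp := pp_nonneg θ h1 h2
  induction m with
  | zero =>
    intro n
    by_cases hn : n = 0
    · subst hn; simp [hh_zero, sq_one, uu]
    · rw [hh_rec k (show (1 : ℤ) ≤ n by omega), sq_X_zero hp]
      exact uu_nonneg θ h1 h2 _ _
  | succ m ih =>
    intro n
    by_cases hn : n = 0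
    · subst hn; simp [hh_zero, sq_one]; exact uu_nonneg θ h1 h2 _ _
    · rw [hh_rec k (show (1 : ℤ) ≤ n by omega)]
      refine (sq_jensen hp m _).trans ?_
      simp only [uu]
      have e : ∑ l ∈ Icc 2 k, pp θ l * sq k (pp θ) m (hh k ((n : ℤ) - l)) =
          ∑ l ∈ (Icc 2 k).filter (fun l => l ≤ n), pp θ l * sq k (pp θ) m (hh k ((n : ℤ) - l)) := by
        rw [Finset.sum_filter]
        apply Finset.sum_congr rfl
        intro l hl
        split_ifs with h3
        · rfl
        · rw [hh_neg _ (by omega)]; simp [sq, T_zero]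
      rw [e]
      calc _ ≤ ∑ l ∈ (Icc 2 k).filter (fun l => l ≤ n), pp θ l * uu θ m (n - l) := by
            apply Finset.sum_le_sum
            intro l hl
            simp only [mem_filter] at hl
            apply mul_le_mul_of_nonneg_left _ (hp l)
            rw [show (n : ℤ) - l = ((n - l : ℕ) : ℤ) by omega]
            exact ih _
        _ ≤ _ := by
            apply Finset.sum_le_sum_of_subset_of_nonneg
            · intro l hl; simp only [mem_filter, mem_Icc] at hl ⊢; omega
            · intro l _ _; exact mul_nonneg (hp l) (uu_nonneg θ h1 h2 _ _)

lemma nrm_hh (θ : ℝ) (h1 : 0 ≤ θ) (h2 : θ ≤ 1) (k m n : ℕ) :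
    nrm k (pp θ) m (hh k n) ≤ Real.sqrt (QQ θ n) :=
  Real.sqrt_le_sqrt ((sq_hh θ h1 h2 k m n).trans (uu_le_QQ θ h1 h2 m n))

end P13


namespace P13
open MvPolynomial Finset

lemma sq_zero' {p : ℕ → ℝ} (k m : ℕ) : sq k p m 0 = 0 := by simp [sq, T_zero]

noncomputable def Qs (θ : ℝ) (n : ℕ) : ℝ := Real.sqrt (QQ θ n)

lemma Qs_nonneg (θ : ℝ) (n : ℕ) : 0 ≤ Qs θ n := Real.sqrt_nonneg _

lemma Qs_shift (θ : ℝ) (h1 : 0.45 ≤ θ) (h2 : θ ≤ 0.55) (a w : ℕ) (haw : 2 ≤ a + w) :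
    Qs θ a ≤ Real.sqrt (5 * (w + 1)) * Qs θ (a + w) := by
  unfold Qs
  rw [← Real.sqrt_mul (by positivity)]
  exact Real.sqrt_le_sqrt (QQ_shift θ h1 h2 a w haw)

lemma win (θ : ℝ) (h1 : 0.45 ≤ θ) (h2 : θ ≤ 0.55) (q : ℕ) (hq1 : 1 ≤ q) (k : ℕ) (hk : 2 ≤ k)
    (P : Pol) (C0 : ℝ) (hC0 : 0 ≤ C0) (w0 : ℕ)
    (HP : ∀ W m : ℕ, nrm k (pp θ) m (hh k W * P) ≤ C0 * Qs θ (W + w0)) (b l : ℕ) (hl : l ≤ k)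
    (W : ℤ) (hW1 : W ≤ k + b - l) (hW2 : (k : ℤ) + b - l - q * k * k ≤ W) (m : ℕ) :
    nrm k (pp θ) m (hh k W * P) ≤ 4 * q * k * C0 * Qs θ (b + k + w0) := by
  have hp := pp_nonneg θ (by linarith) (by linarith)
  by_cases hW : W < 0
  · rw [hh_neg k hW, zero_mul, nrm_zero hp]
    have := Qs_nonneg θ (b + k + w0)
    positivity
  · obtain ⟨V, rfl⟩ : ∃ V : ℕ, W = V := ⟨W.toNat, by omega⟩
    refine (HP V m).trans ?_
    obtain ⟨w, hw⟩ : ∃ w, V + w0 + w = b + k + w0 := ⟨b + k - V, by omega⟩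
    have hwb : w ≤ k + q * k * k := by zify; omega
    have := Qs_shift θ h1 h2 (V + w0) w (by omega)
    rw [hw] at this
    have hs : Real.sqrt (5 * (w + 1)) ≤ 4 * q * k := by
      apply Real.sqrt_le_iff.2
      refine ⟨by positivity, ?_⟩
      have : (w : ℝ) ≤ k + q * k * k := by exact_mod_cast hwb
      have hq' : (1 : ℝ) ≤ q := by exact_mod_cast hq1
      have hk' : (2 : ℝ) ≤ k := by exact_mod_cast hk
      have a1 : (k : ℝ) ≤ q * k * k := by
        have : (1 : ℝ) ≤ q * k := by nlinarith
        nlinarith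
      have a2 : (1 : ℝ) ≤ q * k * k := by nlinarith
      have a3 : (q : ℝ) * k * k ≤ q * k * (q * k) := by
        have : 0 ≤ (q : ℝ) * k := by positivity
        nlinarith
      nlinarith
    calc C0 * Qs θ (V + w0) ≤ C0 * (Real.sqrt (5 * (w + 1)) * Qs θ (b + k + w0)) := by gcongr
      _ ≤ C0 * ((4 * q * k) * Qs θ (b + k + w0)) := by
        have := Qs_nonneg θ (b + k + w0)
        gcongr
      _ = _ := by ring

lemma sqrt_pp (θ mu : ℝ) (h1 : 0.45 ≤ θ) (h2 : θ ≤ 0.55) (hmu : 0 ≤ mu) (hm : θ ≤ mu ^ 2) (l : ℕ)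
    (hl : 2 ≤ l) : Real.sqrt (pp θ l) ≤ 3 * mu ^ l := by
  apply Real.sqrt_le_iff.2
  refine ⟨by positivity, ?_⟩
  obtain ⟨d, rfl⟩ : ∃ d, l = d + 2 := ⟨l - 2, by omega⟩
  unfold pp
  rw [show d + 2 - 2 = d by omega]
  have a1 : θ ^ d ≤ (mu ^ 2) ^ d := pow_le_pow_left₀ (by linarith) hm d
  have e : (3 * mu ^ (d + 2)) ^ 2 = 9 * (mu ^ 2) ^ d * (mu ^ 2) ^ 2 := by
    rw [mul_pow, ← pow_mul, ← pow_mul, ← pow_mul]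
    ring
  rw [e]
  have h3 : 0 ≤ θ ^ d := pow_nonneg (by linarith) d
  have h4 : θ ^ 2 ≤ (mu ^ 2) ^ 2 := pow_le_pow_left₀ (by linarith) hm 2
  calc (1 - θ) * θ ^ d ≤ (9 * θ ^ 2) * θ ^ d := by
        apply mul_le_mul_of_nonneg_right _ h3
        nlinarith
    _ ≤ (9 * (mu ^ 2) ^ 2) * (mu ^ 2) ^ d := by gcongr
    _ = _ := by ring

lemma D_sum_bound (θ mu : ℝ) (h1 : 0.45 ≤ θ) (h2 : θ ≤ 0.55) (hmu : 0 ≤ mu) (hm : θ ≤ mu ^ 2)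
    (k : ℕ) (hk : 2 ≤ k) (P : Pol) (b : ℕ) (B : ℝ)
    (hB : ∀ l ∈ Icc 2 k, ∀ j, j + 2 ≤ l → ∀ m,
      3 * mu ^ l * nrm k (pp θ) m (Del k (k - l + j) (b - j) * P) ≤ B) (hB0 : 0 ≤ B) (m : ℕ) :
    nrm k (pp θ) m ((ff k * hh k b - hh k (b + k)) * P) ≤ k ^ 3 * B := by
  have hp := pp_nonneg θ (by linarith) (by linarith)
  rw [D_eq k (by omega) b (by omega), Finset.sum_mul]
  refine (nrm_sum hp _ _ _).trans ?_
  have each : ∀ l ∈ Icc 2 k, nrm k (pp θ) m (X l * (∑ i ∈ range (l - 1),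
      ∑ j ∈ range (l - 1 - i), Del k (k - l + j) (b - j)) * P) ≤ k ^ 2 * B := by
    intro l hl
    have hl' := mem_Icc.1 hl
    cases m with
    | zero => rw [mul_assoc, nrm_X_zero hp]; positivity
    | succ m =>
      rw [mul_assoc]
      refine (nrm_X hp m l hl _).trans ?_
      refine (mul_le_mul_of_nonneg_right (sqrt_pp θ mu h1 h2 hmu hm l hl'.1) (nrm_nonneg hp _ _)).trans ?_
      rw [Finset.sum_mul]
      calc _ ≤ 3 * mu ^ l * ∑ i ∈ range (l - 1), nrm k (pp θ) m ((∑ j ∈ range (l - 1 - i), Del k (k - l + j) (b - j)) * P) := by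
            apply mul_le_mul_of_nonneg_left (nrm_sum hp _ _ _) (by positivity)
        _ = ∑ i ∈ range (l - 1), 3 * mu ^ l * nrm k (pp θ) m ((∑ j ∈ range (l - 1 - i), Del k (k - l + j) (b - j)) * P) := by
            rw [Finset.mul_sum]
        _ ≤ ∑ i ∈ range (l - 1), k * B := by
            apply Finset.sum_le_sum
            intro i hi
            rw [Finset.sum_mul]
            calc _ ≤ 3 * mu ^ l * ∑ j ∈ range (l - 1 - i), nrm k (pp θ) m (Del k (k - l + j) (b - j) * P) := by
                  apply mul_le_mul_of_nonneg_left (nrm_sum hp _ _ _) (by positivity)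
              _ = ∑ j ∈ range (l - 1 - i), 3 * mu ^ l * nrm k (pp θ) m (Del k (k - l + j) (b - j) * P) := by
                  rw [Finset.mul_sum]
              _ ≤ ∑ j ∈ range (l - 1 - i), B := by
                  apply Finset.sum_le_sum
                  intro j hj
                  rw [mem_range] at hj
                  exact hB l hl j (by omega) m
              _ ≤ _ := by
                  rw [Finset.sum_const, card_range, nsmul_eq_mul]
                  apply mul_le_mul_of_nonneg_right _ hB0
                  exact_mod_cast (by omega : l - 1 - i ≤ k)
        _ ≤ _ := by
            rw [Finset.sum_const, card_range, nsmul_eq_mul, pow_two, mul_assoc]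
            apply mul_le_mul_of_nonneg_right _ (by positivity)
            exact_mod_cast (by omega : l - 1 ≤ k)
  refine (Finset.sum_le_sum each).trans ?_
  rw [Finset.sum_const, nsmul_eq_mul, Nat.card_Icc]
  have : ((k + 1 - 2 : ℕ) : ℝ) ≤ k := by exact_mod_cast (by omega)
  calc _ ≤ (k : ℝ) * (k ^ 2 * B) := by gcongr
    _ = _ := by ring

end P13


namespace P13
open MvPolynomial Finset

structure Par (θ lam mu : ℝ) (q : ℕ) : Prop where
  h1 : 0.45 ≤ θ
  h2 : θ ≤ 0.55
  hl : θ < lam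
  hl1 : lam ≤ 0.9
  hl2 : 1 / 2 ≤ lam
  hq : 20 * θ ≤ q * (lam - θ)
  hmu : 0 ≤ mu
  hm : mu ^ 2 = lam

lemma Par.q1 {θ lam mu : ℝ} {q : ℕ} (H : Par θ lam mu q) : 1 ≤ q := by
  rcases Nat.eq_zero_or_pos q with h0 | h0
  · have h3 := H.hq; have h4 := H.h1; rw [h0] at h3; norm_num at h3 h4; linarith
  · exact h0

lemma Par.mu1 {θ lam mu : ℝ} {q : ℕ} (H : Par θ lam mu q) : mu ≤ 1 := by
  have := H.hm; have := H.hl1; have := H.hmu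
  nlinarith

lemma Del_K {θ lam mu : ℝ} {q : ℕ} (H : Par θ lam mu q) (k : ℕ) (hk : 2 ≤ k)
    (P : Pol) (hP : NN P) (C0 : ℝ) (hC0 : 0 ≤ C0) (w0 : ℕ)
    (HP : ∀ W m : ℕ, nrm k (pp θ) m (hh k W * P) ≤ C0 * Qs θ (W + w0)) (b l j : ℕ) (hl : l ≤ k)
    (hj : j + 2 ≤ l) (t0 : ℕ) (ht0 : t0 ≤ k - l + j) (m : ℕ) :
    nrm k (pp θ) m (Del k (k - l + j) (b - j) * P) ≤ 4 * q * k * C0 * Qs θ (b + k + w0) *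
      Real.sqrt (16 * (t0 + 1) * lam ^ (k - l + j - t0) + 4 * 8 ^ (q * (k - l + j + 1 - t0)) *
        (2 / 3 : ℝ) ^ ((b : ℤ) - j - 1)) := by
  have hp := pp_nonneg θ (by linarith [H.h1]) (by linarith [H.h2])
  set K := 4 * q * k * C0 * Qs θ (b + k + w0) with hK
  have hK0 : 0 ≤ K := by have := Qs_nonneg θ (b + k + w0); positivity
  have := lemma_K θ lam H.h1 H.h2 H.hl H.hl1 q H.hq k P hP (k - l + j) t0 (b - j) ht0 (K ^ 2)
    (by positivity) (by
      intro m W hW1 hW2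
      have e : ((k - l + j : ℕ) : ℤ) = k - l + j := by omega
      rw [e] at hW1 hW2
      rw [← nrm_sq hp]
      apply pow_le_pow_left₀ (nrm_nonneg hp _ _)
      apply win θ H.h1 H.h2 q H.q1 k hk P C0 hC0 w0 HP b l hl W (by linarith)
      have : (q : ℤ) * k * (k - l + j + 1) ≤ q * k * k := by
        apply mul_le_mul_of_nonneg_left _ (by positivity)
        omega
      linarith) m
  rw [show (((k - l + j : ℕ) : ℤ)) = (k : ℤ) - l + j by omega] at this
  unfold nrm
  calc _ ≤ _ := Real.sqrt_le_sqrt this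
    _ = _ := by rw [Real.sqrt_mul (by positivity), Real.sqrt_sq hK0]

lemma D_good {θ lam mu : ℝ} {q : ℕ} (H : Par θ lam mu q) (k : ℕ) (hk : 2 ≤ k)
    (P : Pol) (hP : NN P) (C0 : ℝ) (hC0 : 0 ≤ C0) (w0 : ℕ)
    (HP : ∀ W m : ℕ, nrm k (pp θ) m (hh k W * P) ≤ C0 * Qs θ (W + w0)) (b C2 : ℕ)
    (hC2 : (8 : ℝ) ^ q * (2 / 3) ^ C2 ≤ 1 / 2) (hb : (C2 + 1) * k ≤ b) (m : ℕ) :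
    nrm k (pp θ) m ((ff k * hh k b - hh k (b + k)) * P) ≤
      60 * q * k ^ 4 * mu ^ k * (C0 * Qs θ (b + k + w0)) := by
  have hQ := Qs_nonneg θ (b + k + w0)
  have hmu := H.hmu
  have := D_sum_bound θ mu H.h1 H.h2 H.hmu (by rw [H.hm]; exact H.hl.le) k hk P b
    (15 * mu ^ k * (4 * q * k * C0 * Qs θ (b + k + w0))) (by
      intro l hl j hj m
      rw [mem_Icc] at hl
      have d := Del_K H k hk P hP C0 hC0 w0 HP b l j hl.2 hj 0 (by omega) m
      have hlam : 0 ≤ lam := by linarith [H.hl2]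
      have br : 16 * (((0 : ℕ) : ℝ) + 1) * lam ^ (k - l + j - 0) + 4 * 8 ^ (q * (k - l + j + 1 - 0)) *
        (2 / 3 : ℝ) ^ ((b : ℤ) - j - 1) ≤ (5 * mu ^ (k - l)) ^ 2 := by
        have a1 : lam ^ (k - l + j - 0) ≤ lam ^ (k - l) :=
          pow_le_pow_of_le_one hlam (by linarith [H.hl1]) (by omega)
        have a2 : (8 : ℝ) ^ (q * (k - l + j + 1 - 0)) ≤ 8 ^ (q * k) := by
          apply pow_le_pow_right₀ (by norm_num)
          apply Nat.mul_le_mul_left; omega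
        have a3 : (2 / 3 : ℝ) ^ ((b : ℤ) - j - 1) ≤ (2 / 3) ^ (C2 * k) := by
          rw [← zpow_natCast]
          apply zpow_le_zpow_right_of_le_one₀ (by norm_num) (by norm_num)
          have : ((C2 : ℤ) + 1) * k ≤ b := by exact_mod_cast hb
          push_cast
          have : (j : ℤ) + 2 ≤ k := by omega
          linarith
        have a4 : (8 : ℝ) ^ (q * k) * (2 / 3) ^ (C2 * k) ≤ lam ^ (k - l) := by
          rw [pow_mul, pow_mul, ← mul_pow]
          calc _ ≤ (1 / 2 : ℝ) ^ k := pow_le_pow_left₀ (by positivity) hC2 k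
            _ ≤ lam ^ k := pow_le_pow_left₀ (by norm_num) H.hl2 k
            _ ≤ _ := pow_le_pow_of_le_one hlam (by linarith [H.hl1]) (by omega)
        have a5 : (8 : ℝ) ^ (q * (k - l + j + 1 - 0)) * (2 / 3 : ℝ) ^ ((b : ℤ) - j - 1) ≤ lam ^ (k - l) :=
          (mul_le_mul a2 a3 (by positivity) (by positivity)).trans a4
        have e : (5 * mu ^ (k - l)) ^ 2 = 25 * lam ^ (k - l) := by
          rw [mul_pow, ← pow_mul, mul_comm (k - l) 2, pow_mul, H.hm]; norm_num
        have a6 : 0 ≤ lam ^ (k - l) := by positivity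
        rw [e]
        simp only [Nat.sub_zero] at a1 a5 ⊢
        push_cast
        linarith
      have sb := Real.sqrt_le_sqrt br
      rw [Real.sqrt_sq (by positivity)] at sb
      calc _ ≤ 3 * mu ^ l * (4 * q * k * C0 * Qs θ (b + k + w0) * (5 * mu ^ (k - l))) := by
            apply mul_le_mul_of_nonneg_left _ (by positivity)
            refine d.trans ?_
            apply mul_le_mul_of_nonneg_left sb (by positivity)
        _ = 15 * (mu ^ l * mu ^ (k - l)) * (4 * q * k * C0 * Qs θ (b + k + w0)) := by ring
        _ = _ := by rw [← pow_add, show l + (k - l) = k by omega]) (by positivity) m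
  refine this.trans (le_of_eq ?_)
  ring

noncomputable def betaC (lam : ℝ) (q Z k : ℕ) : ℝ :=
  16 * k * lam ^ (k / 8 / Z) + 4 * 8 ^ q * (2 / 3 : ℝ) ^ (k / 8)

noncomputable def delC (lam mu : ℝ) (q Z k : ℕ) : ℝ :=
  4 * q * k ^ 4 * (3 * Real.sqrt (betaC lam q Z k) + 6 * mu ^ (k / 8))

lemma D_crude {θ lam mu : ℝ} {q : ℕ} (H : Par θ lam mu q) (k : ℕ) (hk : 2 ≤ k)
    (P : Pol) (hP : NN P) (C0 : ℝ) (hC0 : 0 ≤ C0) (w0 : ℕ)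
    (HP : ∀ W m : ℕ, nrm k (pp θ) m (hh k W * P) ≤ C0 * Qs θ (W + w0)) (b Z : ℕ) (hZ : 1 ≤ Z)
    (hZ2 : (8 : ℝ) ^ q ≤ (3 / 2) ^ (2 * Z)) (hb : k ≤ 2 * b) (m : ℕ) :
    nrm k (pp θ) m ((ff k * hh k b - hh k (b + k)) * P) ≤
      delC lam mu q Z k * (C0 * Qs θ (b + k + w0)) := by
  have hQ := Qs_nonneg θ (b + k + w0)
  have hmu := H.hmu
  have hlam : 0 ≤ lam := by linarith [H.hl2]
  have hp := pp_nonneg θ (by linarith [H.h1]) (by linarith [H.h2])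
  have := D_sum_bound θ mu H.h1 H.h2 H.hmu (by rw [H.hm]; exact H.hl.le) k hk P b
    ((3 * Real.sqrt (betaC lam q Z k) + 6 * mu ^ (k / 8)) * (4 * q * k * C0 * Qs θ (b + k + w0))) (by
      intro l hl j hj m
      rw [mem_Icc] at hl
      set K := 4 * q * k * C0 * Qs θ (b + k + w0) with hK
      have hK0 : 0 ≤ K := by positivity
      by_cases h8 : 8 * l ≤ k
      · have hy : k / 8 / Z ≤ k / 8 := Nat.div_le_self _ _
        have hzy : Z * (k / 8 / Z) ≤ k / 8 := Nat.mul_div_le _ _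
        unfold betaC
        generalize k / 8 / Z = y at hy hzy ⊢
        have d := Del_K H k hk P hP C0 hC0 w0 HP b l j hl.2 hj (k - l + j - y) (by omega) m
        rw [show k - l + j - (k - l + j - y) = y by omega,
          show k - l + j + 1 - (k - l + j - y) = y + 1 by omega] at d
        have br : 16 * (((k - l + j - y : ℕ) : ℝ) + 1) * lam ^ y + 4 * 8 ^ (q * (y + 1)) *
            (2 / 3 : ℝ) ^ ((b : ℤ) - j - 1) ≤ (16 * k * lam ^ y + 4 * 8 ^ q * (2 / 3 : ℝ) ^ (k / 8)) := by
          have a1 : ((k - l + j - y : ℕ) : ℝ) + 1 ≤ k := by exact_mod_cast (by omega)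
          have a2 : (2 / 3 : ℝ) ^ ((b : ℤ) - j - 1) ≤ (2 / 3) ^ (2 * (k / 8) + k / 8) := by
            rw [← zpow_natCast]
            apply zpow_le_zpow_right_of_le_one₀ (by norm_num) (by norm_num)
            push_cast; omega
          have a3 : (8 : ℝ) ^ (q * y) * (2 / 3) ^ (2 * (k / 8)) ≤ 1 := by
            have b1 : (8 : ℝ) ^ (q * y) ≤ (3 / 2) ^ (2 * (k / 8)) := by
              rw [pow_mul]
              calc _ ≤ ((3 / 2 : ℝ) ^ (2 * Z)) ^ y := pow_le_pow_left₀ (by positivity) hZ2 y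
                _ = (3 / 2) ^ (2 * (Z * y)) := by rw [← pow_mul, mul_assoc]
                _ ≤ _ := by
                  apply pow_le_pow_right₀ (by norm_num)
                  apply Nat.mul_le_mul_left
                  exact hzy
            calc _ ≤ (3 / 2 : ℝ) ^ (2 * (k / 8)) * (2 / 3) ^ (2 * (k / 8)) := by gcongr
              _ = 1 := by rw [← mul_pow]; norm_num
          have a4 : 4 * (8 : ℝ) ^ (q * (y + 1)) * (2 / 3 : ℝ) ^ ((b : ℤ) - j - 1) ≤
              4 * 8 ^ q * (2 / 3 : ℝ) ^ (k / 8) := by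
            calc _ ≤ 4 * (8 : ℝ) ^ (q * (y + 1)) * (2 / 3) ^ (2 * (k / 8) + k / 8) := by gcongr
              _ = 4 * 8 ^ q * (2 / 3 : ℝ) ^ (k / 8) * ((8 : ℝ) ^ (q * y) * (2 / 3) ^ (2 * (k / 8))) := by
                rw [mul_add, pow_add, pow_add, mul_one]; ring
              _ ≤ _ := mul_le_of_le_one_right (by positivity) a3
          have a5 : 16 * (((k - l + j - y : ℕ) : ℝ) + 1) * lam ^ y ≤ 16 * k * lam ^ y := by gcongr
          linarith
        have sb := Real.sqrt_le_sqrt br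
        have hs0 := Real.sqrt_nonneg ((16 * k * lam ^ y + 4 * 8 ^ q * (2 / 3 : ℝ) ^ (k / 8)))
        have mu1 : mu ^ l ≤ 1 := pow_le_one₀ hmu H.mu1
        calc _ ≤ 3 * mu ^ l * (K * Real.sqrt ((16 * k * lam ^ y + 4 * 8 ^ q * (2 / 3 : ℝ) ^ (k / 8)))) := by
              apply mul_le_mul_of_nonneg_left _ (by positivity)
              exact d.trans (mul_le_mul_of_nonneg_left sb hK0)
          _ ≤ 3 * 1 * (K * Real.sqrt ((16 * k * lam ^ y + 4 * 8 ^ q * (2 / 3 : ℝ) ^ (k / 8)))) := by gcongr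
          _ ≤ _ := by
              have : 0 ≤ 6 * mu ^ (k / 8) * K := by positivity
              linarith
      · have hw : ∀ a c : ℤ, a + c = k + b - l → nrm k (pp θ) m (hh k a * hh k c * P) ≤ K := by
          intro a c hac
          refine (nrm_mono hp m (Q := hh k (a + c) * P) (NN_mul (NN_mul (NN_hh _ _) (NN_hh _ _)) hP) ?_).trans
            (win θ H.h1 H.h2 q H.q1 k hk P C0 hC0 w0 HP b l hl.2 (a + c) (by omega) (by
              have : (0 : ℤ) ≤ q * k * k := by positivity
              omega) m)
          rw [← sub_mul]
          exact NN_mul (NN_hh_sub k a c) hP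
        have hd : nrm k (pp θ) m (Del k (k - l + j) (b - j) * P) ≤ 2 * K := by
          unfold Del
          rw [sub_mul]
          refine (nrm_sub hp _ _ _).trans ?_
          have := hw (k - l + j) (b - j) (by ring)
          have := hw (k - l + j + 1) (b - j - 1) (by ring)
          linarith
        have ml : mu ^ l ≤ mu ^ (k / 8) := pow_le_pow_of_le_one hmu H.mu1 (by omega)
        calc _ ≤ 3 * mu ^ (k / 8) * (2 * K) := by gcongr; exact nrm_nonneg hp _ _
          _ ≤ _ := by
            have : 0 ≤ 3 * Real.sqrt (betaC lam q Z k) * K := by positivity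
            linarith) (by positivity) m
  refine this.trans (le_of_eq ?_)
  unfold delC
  ring

end P13


namespace P13
open MvPolynomial Finset

lemma nrm_sumX {θ lam mu : ℝ} {q : ℕ} (H : Par θ lam mu q) (k : ℕ) (R : ℕ → Pol) (B : ℕ → ℝ)
    (hB : ∀ l ∈ Icc 2 k, ∀ m, nrm k (pp θ) m (R l) ≤ B l) (m : ℕ) :
    nrm k (pp θ) m (∑ l ∈ Icc 2 k, X l * ((l : ℝ) • R l)) ≤ ∑ l ∈ Icc 2 k, l * (3 * mu ^ l) * B l := by
  have hp := pp_nonneg θ (by linarith [H.h1]) (by linarith [H.h2])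
  have hmu := H.hmu
  refine (nrm_sum hp _ _ _).trans (Finset.sum_le_sum ?_)
  intro l hl
  have hl' := mem_Icc.1 hl
  cases m with
  | zero =>
    rw [nrm_X_zero hp]
    have := (nrm_nonneg hp 0 (R l)).trans (hB l hl 0)
    positivity
  | succ m =>
    refine (nrm_X hp m l hl _).trans ?_
    rw [nrm_smul hp, abs_of_nonneg (by positivity)]
    have a1 := sqrt_pp θ mu H.h1 H.h2 H.hmu (by rw [H.hm]; exact H.hl.le) l hl'.1
    have a2 := hB l hl m
    have a3 := nrm_nonneg hp m (R l) (k := k)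
    calc _ ≤ 3 * mu ^ l * (l * B l) := by gcongr
      _ = _ := by ring

noncomputable def ww (mu : ℝ) (l : ℕ) : ℝ := l * (3 * mu ^ l) * Real.sqrt (5 * (l + 1))

lemma ww_nonneg (mu : ℝ) (h : 0 ≤ mu) (l : ℕ) : 0 ≤ ww mu l := by unfold ww; positivity

lemma tele (k b i : ℕ) : hh k b * ff k ^ i - hh k ((b + i * k : ℕ) : ℤ) =
    ∑ j ∈ range i, (ff k * hh k ((b + j * k : ℕ) : ℤ) - hh k (((b + j * k : ℕ) : ℤ) + k)) * ff k ^ (i - 1 - j) := by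
  have := Finset.sum_range_sub' (fun j => hh k ((b + j * k : ℕ) : ℤ) * ff k ^ (i - j)) i
  simp only [Nat.sub_self, pow_zero, mul_one, zero_mul, add_zero, Nat.sub_zero] at this
  rw [← this]
  apply Finset.sum_congr rfl
  intro j hj
  rw [mem_range] at hj
  rw [show i - j = i - 1 - j + 1 by omega, show i - (j + 1) = i - 1 - j by omega, pow_succ,
    show ((b + (j + 1) * k : ℕ) : ℤ) = ((b + j * k : ℕ) : ℤ) + k by push_cast; ring]
  ring

structure Chn (θ lam mu : ℝ) (q k r C2 Z : ℕ) (C1 tau dT : ℝ) : Prop where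
  H : Par θ lam mu q
  hk : 2 ≤ k
  hC2 : (8 : ℝ) ^ q * (2 / 3) ^ C2 ≤ 1 / 2
  hZ : 1 ≤ Z
  hZ2 : (8 : ℝ) ^ q ≤ (3 / 2) ^ (2 * Z)
  hC1 : ∑ l ∈ Icc 2 k, ww mu l ≤ C1
  htau : ∑ l ∈ (Icc 2 k).filter (fun l => k < 2 * l), ww mu l ≤ tau
  h0 : (2 * C1 + 1) * tau ≤ 1
  hdT : (2 * C1 + 1) * ((C2 + 1) * delC lam mu q Z k + r * (60 * q * k ^ 4 * mu ^ k)) ≤ dT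
  hdT1 : dT ≤ 1

variable {θ lam mu : ℝ} {q k r C2 Z : ℕ} {C1 tau dT : ℝ}

lemma Chn.C1n (H : Chn θ lam mu q k r C2 Z C1 tau dT) : 0 ≤ C1 :=
  (Finset.sum_nonneg (fun l _ => ww_nonneg mu H.H.hmu l)).trans H.hC1

lemma delC_nonneg (hmu : 0 ≤ mu) : 0 ≤ delC lam mu q Z k := by
  unfold delC; positivity

lemma Chn.two (H : Chn θ lam mu q k r C2 Z C1 tau dT) (i : ℕ) (hi : i ≤ r)
    (IH : ∀ j, j < i → ∀ b m : ℕ, nrm k (pp θ) m (hh k b * ff k ^ j) ≤ (2 * C1 + 1) * Qs θ (b + j * k))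
    (b m : ℕ) (hb : k ≤ 2 * b) :
    nrm k (pp θ) m (hh k b * ff k ^ i - hh k ((b + i * k : ℕ) : ℤ)) ≤ dT * Qs θ (b + i * k) := by
  have hp := pp_nonneg θ (by linarith [H.H.h1]) (by linarith [H.H.h2])
  have hC1 := H.C1n
  have hQ := Qs_nonneg θ (b + i * k)
  have hmu := H.H.hmu
  have hdc : 0 ≤ delC lam mu q Z k := delC_nonneg hmu
  rw [tele]
  refine (nrm_sum hp _ _ _).trans ?_
  have each : ∀ j ∈ range i, nrm k (pp θ) m ((ff k * hh k ((b + j * k : ℕ) : ℤ) - hh k (((b + j * k : ℕ) : ℤ) + k)) * ff k ^ (i - 1 - j))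
      ≤ ((if j < C2 + 1 then delC lam mu q Z k else 0) + 60 * q * k ^ 4 * mu ^ k) * ((2 * C1 + 1) * Qs θ (b + i * k)) := by
    intro j hj
    rw [mem_range] at hj
    have e : b + j * k + k + (i - 1 - j) * k = b + i * k := by
      obtain ⟨d, rfl⟩ : ∃ d, i = j + 1 + d := ⟨i - (j + 1), by omega⟩
      rw [show j + 1 + d - 1 - j = d by omega]; ring
    by_cases hj2 : j < C2 + 1
    · have := D_crude H.H k H.hk (ff k ^ (i - 1 - j)) (NN_pow (NN_ff k) _) (2 * C1 + 1) (by linarith)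
        ((i - 1 - j) * k) (fun W m => IH _ (by omega) W m) (b + j * k) Z H.hZ H.hZ2 (by
          have : 0 ≤ j * k := Nat.zero_le _
          omega) m
      rw [e] at this
      rw [if_pos hj2]
      refine this.trans ?_
      apply mul_le_mul_of_nonneg_right _ (by positivity)
      have : 0 ≤ 60 * q * k ^ 4 * mu ^ k := by positivity
      linarith
    · have := D_good H.H k H.hk (ff k ^ (i - 1 - j)) (NN_pow (NN_ff k) _) (2 * C1 + 1) (by linarith)
        ((i - 1 - j) * k) (fun W m => IH _ (by omega) W m) (b + j * k) C2 H.hC2 (by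
          have : (C2 + 1) * k ≤ j * k := Nat.mul_le_mul_right _ (by omega)
          omega) m
      rw [e] at this
      rw [if_neg hj2, zero_add]
      exact this
  refine (Finset.sum_le_sum each).trans ?_
  rw [← Finset.sum_mul, Finset.sum_add_distrib, Finset.sum_const, card_range, nsmul_eq_mul]
  have e1 : (∑ j ∈ range i, if j < C2 + 1 then delC lam mu q Z k else 0) ≤ (C2 + 1) * delC lam mu q Z k := by
    rw [← Finset.sum_filter, Finset.sum_const, nsmul_eq_mul]
    apply mul_le_mul_of_nonneg_right _ hdc
    have : ((range i).filter (fun j => j < C2 + 1)).card ≤ C2 + 1 := by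
      calc _ ≤ (range (C2 + 1)).card := Finset.card_le_card (by intro x; simp)
        _ = _ := by simp
    exact_mod_cast this
  have e2 : (i : ℝ) * (60 * q * k ^ 4 * mu ^ k) ≤ r * (60 * q * k ^ 4 * mu ^ k) := by
    gcongr
  calc _ ≤ ((C2 + 1) * delC lam mu q Z k + r * (60 * q * k ^ 4 * mu ^ k)) * ((2 * C1 + 1) * Qs θ (b + i * k)) := by
        apply mul_le_mul_of_nonneg_right _ (by positivity)
        linarith
    _ = ((2 * C1 + 1) * ((C2 + 1) * delC lam mu q Z k + r * (60 * q * k ^ 4 * mu ^ k))) * Qs θ (b + i * k) := by ring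
    _ ≤ _ := mul_le_mul_of_nonneg_right H.hdT hQ

lemma Chn.two' (H : Chn θ lam mu q k r C2 Z C1 tau dT) (i : ℕ) (hi : i ≤ r)
    (IH : ∀ j, j < i → ∀ b m : ℕ, nrm k (pp θ) m (hh k b * ff k ^ j) ≤ (2 * C1 + 1) * Qs θ (b + j * k))
    (b m : ℕ) (hb : k ≤ 2 * b) :
    nrm k (pp θ) m (hh k b * ff k ^ i) ≤ 2 * Qs θ (b + i * k) := by
  have hp := pp_nonneg θ (by linarith [H.H.h1]) (by linarith [H.H.h2])
  have hQ := Qs_nonneg θ (b + i * k)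
  have a := H.two i hi IH b m hb
  have a2 : nrm k (pp θ) m (hh k ((b + i * k : ℕ) : ℤ)) ≤ Qs θ (b + i * k) :=
    nrm_hh θ (by linarith [H.H.h1]) (by linarith [H.H.h2]) k m _
  have a3 := nrm_add hp m (hh k b * ff k ^ i - hh k ((b + i * k : ℕ) : ℤ)) (hh k ((b + i * k : ℕ) : ℤ)) (k := k)
  rw [sub_add_cancel] at a3
  have := H.hdT1
  nlinarith

lemma split_sum (H : Chn θ lam mu q k r C2 Z C1 tau dT) (x y : ℝ) (hx : 0 ≤ x) (hy : 0 ≤ y)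
    (B : ℕ → ℝ) (n : ℕ)
    (hB1 : ∀ l ∈ Icc 2 k, 2 * l ≤ k → B l ≤ x * (Real.sqrt (5 * (l + 1)) * Qs θ n))
    (hB2 : ∀ l ∈ Icc 2 k, k < 2 * l → B l ≤ y * (Real.sqrt (5 * (l + 1)) * Qs θ n)) :
    ∑ l ∈ Icc 2 k, l * (3 * mu ^ l) * B l ≤ (x * C1 + y * tau) * Qs θ n := by
  have hQ := Qs_nonneg θ n
  have hmu := H.H.hmu
  have : ∀ l ∈ Icc 2 k, l * (3 * mu ^ l) * B l ≤
      (x * ww mu l + y * (if k < 2 * l then ww mu l else 0)) * Qs θ n := by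
    intro l hl
    have hw := ww_nonneg mu hmu l
    by_cases h : k < 2 * l
    · rw [if_pos h]
      calc _ ≤ l * (3 * mu ^ l) * (y * (Real.sqrt (5 * (l + 1)) * Qs θ n)) := by
            apply mul_le_mul_of_nonneg_left (hB2 l hl h) (by positivity)
        _ = y * ww mu l * Qs θ n := by unfold ww; ring
        _ ≤ _ := by
          apply mul_le_mul_of_nonneg_right _ hQ
          have : 0 ≤ x * ww mu l := by positivity
          linarith
    · rw [if_neg h]
      calc _ ≤ l * (3 * mu ^ l) * (x * (Real.sqrt (5 * (l + 1)) * Qs θ n)) := by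
            apply mul_le_mul_of_nonneg_left (hB1 l hl (by omega)) (by positivity)
        _ = _ := by unfold ww; ring
  refine (Finset.sum_le_sum this).trans ?_
  rw [← Finset.sum_mul, Finset.sum_add_distrib, ← Finset.mul_sum, ← Finset.mul_sum, ← Finset.sum_filter]
  apply mul_le_mul_of_nonneg_right _ hQ
  have := H.hC1
  have := H.htau
  gcongr

lemma Chn.one (H : Chn θ lam mu q k r C2 Z C1 tau dT) (i : ℕ) : i ≤ r → ∀ b m : ℕ,
    nrm k (pp θ) m (hh k b * ff k ^ i) ≤ (2 * C1 + 1) * Qs θ (b + i * k) := by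
  induction i using Nat.strong_induction_on with
  | _ i ih =>
  intro hi b m
  have hp := pp_nonneg θ (by linarith [H.H.h1]) (by linarith [H.H.h2])
  have hC1 := H.C1n
  have hk := H.hk
  rcases Nat.eq_zero_or_pos i with h0 | h0
  · subst h0
    rw [pow_zero, mul_one]
    have : nrm k (pp θ) m (hh k b) ≤ Qs θ b :=
      nrm_hh θ (by linarith [H.H.h1]) (by linarith [H.H.h2]) k m b
    have hQ := Qs_nonneg θ b
    simp only [zero_mul, add_zero]
    nlinarith
  obtain ⟨d, rfl⟩ : ∃ d, i = d + 1 := ⟨i - 1, by omega⟩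
  have IH : ∀ j, j < d → ∀ b m : ℕ, nrm k (pp θ) m (hh k b * ff k ^ j) ≤ (2 * C1 + 1) * Qs θ (b + j * k) :=
    fun j hj => ih j (by omega) (by omega)
  have e : hh k b * ff k ^ (d + 1) = ∑ l ∈ Icc 2 k, X l * ((l : ℝ) • (hh k (k - l) * hh k b * ff k ^ d)) := by
    rw [pow_succ', ← mul_assoc, mul_comm (hh k b)]
    conv_lhs => rw [ff]
    rw [Finset.sum_mul, Finset.sum_mul]
    apply Finset.sum_congr rfl
    intro l _
    rw [mul_assoc, mul_assoc, smul_mul_assoc, mul_assoc]; rfl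
  rw [e]
  have mono : ∀ l ∈ Icc 2 k, ∀ m, nrm k (pp θ) m (hh k (k - l) * hh k b * ff k ^ d) ≤
      nrm k (pp θ) m (hh k ((b + (k - l) : ℕ) : ℤ) * ff k ^ d) := by
    intro l hl m
    have hl' := mem_Icc.1 hl
    apply nrm_mono hp m (NN_mul (NN_mul (NN_hh _ _) (NN_hh _ _)) (NN_pow (NN_ff k) _))
    rw [← sub_mul]
    apply NN_mul _ (NN_pow (NN_ff k) _)
    rw [show ((b + (k - l) : ℕ) : ℤ) = (k - l) + b by omega]
    exact NN_hh_sub k _ _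
  have sh : ∀ l ∈ Icc 2 k, Qs θ (b + (k - l) + d * k) ≤ Real.sqrt (5 * (l + 1)) * Qs θ (b + (d + 1) * k) := by
    intro l hl
    have hl' := mem_Icc.1 hl
    have ee : b + (k - l) + d * k + l = b + (d + 1) * k := by
      have : (d + 1) * k = d * k + k := by ring
      omega
    have := Qs_shift θ H.H.h1 H.H.h2 (b + (k - l) + d * k) l (by omega)
    rwa [ee] at this
  have key := nrm_sumX H.H k (fun l => hh k (k - l) * hh k b * ff k ^ d)
    (fun l => if 2 * l ≤ k then 2 * (Real.sqrt (5 * (l + 1)) * Qs θ (b + (d + 1) * k)) else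
      (2 * C1 + 1) * (Real.sqrt (5 * (l + 1)) * Qs θ (b + (d + 1) * k))) (by
    intro l hl m
    refine (mono l hl m).trans ?_
    try dsimp only
    split_ifs with h
    · refine (H.two' d (by omega) IH (b + (k - l)) m (by omega)).trans ?_
      have := sh l hl
      linarith
    · refine (ih d (by omega) (by omega) (b + (k - l)) m).trans ?_
      have := sh l hl
      gcongr) m
  refine key.trans ?_
  refine (split_sum H 2 (2 * C1 + 1) (by norm_num) (by linarith) _ (b + (d + 1) * k) ?_ ?_).trans ?_
  · intro l hl h
    rw [if_pos h]
  · intro l hl h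
    rw [if_neg (by omega)]
  · apply mul_le_mul_of_nonneg_right _ (Qs_nonneg _ _)
    have := H.h0
    linarith

noncomputable def fn (k n : ℕ) : Pol := ∑ l ∈ Icc 2 k, X l * ((l : ℝ) • hh k (n - l))

lemma Chn.final (H : Chn θ lam mu q k r C2 Z C1 tau dT) (hr : 1 ≤ r) (m : ℕ) :
    nrm k (pp θ) m (ff k ^ r - fn k (r * k)) ≤ (dT * C1 + (2 * C1 + 2) * tau) * Qs θ (r * k) := by
  have hp := pp_nonneg θ (by linarith [H.H.h1]) (by linarith [H.H.h2])
  have hC1 := H.C1n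
  have hk := H.hk
  have hmu := H.H.hmu
  have hdc : 0 ≤ delC lam mu q Z k := delC_nonneg hmu
  have hdT : 0 ≤ dT := le_trans (by positivity) H.hdT
  obtain ⟨d, rfl⟩ : ∃ d, r = d + 1 := ⟨r - 1, by omega⟩
  have e : ff k ^ (d + 1) - fn k ((d + 1) * k) =
      ∑ l ∈ Icc 2 k, X l * ((l : ℝ) • (hh k (k - l) * ff k ^ d - hh k (((d + 1) * k : ℕ) - l))) := by
    rw [pow_succ']
    conv_lhs => rw [ff, fn]
    rw [Finset.sum_mul, ← Finset.sum_sub_distrib]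
    apply Finset.sum_congr rfl
    intro l _
    rw [smul_sub, mul_sub, mul_assoc, smul_mul_assoc]; rfl
  rw [e]
  have sh : ∀ l ∈ Icc 2 k, Qs θ ((k - l) + d * k) ≤ Real.sqrt (5 * (l + 1)) * Qs θ ((d + 1) * k) := by
    intro l hl
    have hl' := mem_Icc.1 hl
    have ee : (k - l) + d * k + l = (d + 1) * k := by
      have : (d + 1) * k = d * k + k := by ring
      omega
    have := Qs_shift θ H.H.h1 H.H.h2 ((k - l) + d * k) l (by omega)
    rwa [ee] at this
  have ez : ∀ l ∈ Icc 2 k, (((d + 1) * k : ℕ) : ℤ) - l = ((k - l + d * k : ℕ) : ℤ) := by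
    intro l hl
    have hl' := mem_Icc.1 hl
    push_cast [hl'.2]
    ring
  have ek : ∀ l ∈ Icc 2 k, (k : ℤ) - l = ((k - l : ℕ) : ℤ) := by
    intro l hl
    have hl' := mem_Icc.1 hl
    omega
  have key := nrm_sumX H.H k (fun l => hh k (k - l) * ff k ^ d - hh k (((d + 1) * k : ℕ) - l))
    (fun l => if 2 * l ≤ k then dT * (Real.sqrt (5 * (l + 1)) * Qs θ ((d + 1) * k)) else
      (2 * C1 + 2) * (Real.sqrt (5 * (l + 1)) * Qs θ ((d + 1) * k))) (by
    intro l hl m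
    try dsimp only
    rw [ez l hl, ek l hl]
    have hs := sh l hl
    split_ifs with h
    · refine (H.two d (by omega) (fun j hj => H.one j (by omega)) (k - l) m (by omega)).trans ?_
      gcongr
    · refine (nrm_sub hp _ _ _).trans ?_
      have a1 := H.one d (by omega) (k - l) m
      have a2 : nrm k (pp θ) m (hh k ((k - l + d * k : ℕ) : ℤ)) ≤ Qs θ (k - l + d * k) :=
        nrm_hh θ (by linarith [H.H.h1]) (by linarith [H.H.h2]) k m _
      calc _ ≤ (2 * C1 + 2) * Qs θ (k - l + d * k) := by linarith
        _ ≤ _ := by gcongr) m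
  refine key.trans ?_
  apply split_sum H dT (2 * C1 + 2) hdT (by linarith)
  · intro l hl h
    rw [if_pos h]
  · intro l hl h
    rw [if_neg (by omega)]

end P13


namespace P13
open MvPolynomial Finset

lemma T_one_zero (s : Fin 0 → ℕ) : T 1 s = 1 := by
  simp [T, ty, fac]

lemma T_one_succ {m : ℕ} (s : Fin (m + 1) → ℕ) : T 1 s = 0 := by
  have : ty s ≠ 0 := by
    intro h
    have := congrArg (fun γ => γ (s 0)) h
    simp only [ty_apply, Finsupp.coe_zero, Pi.zero_apply, Finset.card_eq_zero] at this
    have h0 : (0 : Fin (m + 1)) ∈ univ.filter (fun i => s i = s 0) := by simp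
    simp_all
  unfold T
  rw [coeff_one, if_neg this.symm, mul_zero]

lemma T_hh (k : ℕ) : ∀ (m : ℕ) (s : Fin m → ℕ), (∀ i, s i ∈ Icc 2 k) → ∀ t : ℤ,
    T (hh k t) s = if (∑ i, (s i : ℤ)) = t then (m.factorial : ℝ) else 0 := by
  intro m
  induction m with
  | zero =>
    intro s hs t
    rcases lt_trichotomy t 0 with h | h | h
    · rw [hh_neg k h, T_zero, if_neg (by simp; omega)]
    · subst h; rw [hh_zero, T_one_zero]; simp
    · rw [hh_rec k (by omega), T_sum, if_neg (by simp; omega)]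
      apply Finset.sum_eq_zero
      intro l _
      rw [T_X_mul_zero]
  | succ m ih =>
    intro s hs t
    have pos : 1 ≤ ∑ i, (s i : ℤ) := by
      have h0 : (s 0 : ℤ) ≤ ∑ i, (s i : ℤ) :=
        Finset.single_le_sum (f := fun i => (s i : ℤ)) (fun i _ => by positivity) (mem_univ 0)
      have := mem_Icc.1 (hs 0)
      omega
    rcases lt_trichotomy t 0 with h | h | h
    · rw [hh_neg k h, T_zero, if_neg (by omega)]
    · subst h; rw [hh_zero, T_one_succ, if_neg (by omega)]
    · rw [hh_rec k (by omega), T_sum_X]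
      have : ∀ i, (if s i ∈ Icc 2 k then T (hh k (t - (s i : ℕ))) (fun j => s (i.succAbove j)) else 0) =
          if (∑ i, (s i : ℤ)) = t then (m.factorial : ℝ) else 0 := by
        intro i
        rw [if_pos (hs i), ih _ (fun j => hs _), Fin.sum_univ_succAbove (fun i => (s i : ℤ)) i]
        congr 1
        apply propext
        constructor <;> intro h <;> linarith
      rw [Finset.sum_congr rfl (fun i _ => this i), Finset.sum_const, card_univ, Fintype.card_fin]
      split_ifs
      · rw [Nat.factorial_succ]; push_cast; simp
      · simp

lemma T_fn (k n : ℕ) (m : ℕ) (s : Fin (m + 1) → ℕ) (hs : ∀ i, s i ∈ Icc 2 k) :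
    T (fn k n) s = n / (m + 1) * T (hh k n) s := by
  rw [fn, T_sum_X, T_hh k _ s hs]
  have : ∀ i, (if s i ∈ Icc 2 k then T ((s i : ℝ) • (hh k (n - (s i : ℕ)))) (fun j => s (i.succAbove j)) else 0) =
      s i * if (∑ i, (s i : ℤ)) = n then (m.factorial : ℝ) else 0 := by
    intro i
    rw [if_pos (hs i), T_smul, T_hh k _ _ (fun j => hs _), Fin.sum_univ_succAbove (fun i => (s i : ℤ)) i]
    congr 2
    apply propext
    constructor <;> intro h <;> linarith
  rw [Finset.sum_congr rfl (fun i _ => this i), ← Finset.sum_mul]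
  split_ifs with h
  · have : (∑ i, (s i : ℝ)) = n := by exact_mod_cast h
    rw [this, Nat.factorial_succ]
    push_cast
    field_simp
  · simp

lemma nrm_fn (θ : ℝ) (h1 : 0 ≤ θ) (h2 : θ ≤ 1) (k n m : ℕ) :
    nrm k (pp θ) (m + 1) (fn k n) ≤ n / (m + 1) * Real.sqrt (uu θ (m + 1) n) := by
  have e : sq k (pp θ) (m + 1) (fn k n) = (n / (m + 1)) ^ 2 * sq k (pp θ) (m + 1) (hh k n) := by
    unfold sq
    rw [Finset.mul_sum]
    apply Finset.sum_congr rfl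
    intro s hs
    rw [Fintype.mem_piFinset] at hs
    rw [T_fn k n m s hs]
    ring
  unfold nrm
  rw [e, Real.sqrt_mul (by positivity), Real.sqrt_sq (by positivity)]
  apply mul_le_mul_of_nonneg_left _ (by positivity)
  exact Real.sqrt_le_sqrt (sq_hh θ h1 h2 k _ n)

lemma Chn.sq_final {θ lam mu : ℝ} {q k r C2 Z : ℕ} {C1 tau dT : ℝ}
    (H : Chn θ lam mu q k r C2 Z C1 tau dT) (hr : 1 ≤ r) (m : ℕ) (hm : 1 ≤ m)
    (hQ : QQ θ (r * k) = uu θ m (r * k)) :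
    sq k (pp θ) m (ff k ^ r) ≤
      (((r * k : ℕ) : ℝ) / m + (dT * C1 + (2 * C1 + 2) * tau)) ^ 2 * uu θ m (r * k) := by
  have h1 := H.H.h1
  have h2 := H.H.h2
  have hp := pp_nonneg θ (by linarith) (by linarith)
  obtain ⟨d, rfl⟩ : ∃ d, m = d + 1 := ⟨m - 1, by omega⟩
  have a1 := H.final hr (d + 1)
  have a2 := nrm_fn θ (by linarith) (by linarith) k (r * k) d
  have a3 := nrm_add hp (d + 1) (ff k ^ r - fn k (r * k)) (fn k (r * k)) (k := k)
  rw [sub_add_cancel] at a3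
  unfold Qs at a1
  rw [hQ] at a1
  have a4 : nrm k (pp θ) (d + 1) (ff k ^ r) ≤ (((r * k : ℕ) : ℝ) / (d + 1 : ℕ) + (dT * C1 + (2 * C1 + 2) * tau)) *
      Real.sqrt (uu θ (d + 1) (r * k)) := by
    push_cast at a2 ⊢
    linarith
  rw [← nrm_sq hp, ← Real.sq_sqrt (uu_nonneg θ (by linarith) (by linarith) (d + 1) (r * k)), ← mul_pow]
  exact pow_le_pow_left₀ (nrm_nonneg hp _ _) a4 2

end P13


namespace P13
open MvPolynomial Finset

def Cps (m n : ℕ) : Finset (Fin m → ℕ) :=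
  (Fintype.piFinset (fun _ : Fin m => Icc 2 n)).filter (fun s => ∑ i, s i = n)

lemma mem_Cps {m n : ℕ} {s : Fin m → ℕ} : s ∈ Cps m n ↔ (∀ i, 2 ≤ s i) ∧ ∑ i, s i = n := by
  unfold Cps
  rw [mem_filter, Fintype.mem_piFinset]
  constructor
  · rintro ⟨h1, h2⟩
    exact ⟨fun i => (mem_Icc.1 (h1 i)).1, h2⟩
  · rintro ⟨h1, h2⟩
    refine ⟨fun i => mem_Icc.2 ⟨h1 i, ?_⟩, h2⟩
    rw [← h2]
    exact Finset.single_le_sum (f := s) (fun i _ => Nat.zero_le _) (mem_univ i)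

lemma Cps_succ (m n : ℕ) : (Cps (m + 1) n).card = ∑ l ∈ Icc 2 n, (Cps m (n - l)).card := by
  rw [Finset.card_eq_sum_card_fiberwise (f := fun s : Fin (m + 1) → ℕ => s 0) (t := Icc 2 n)]
  · apply Finset.sum_congr rfl
    intro l hl
    have hl' := mem_Icc.1 hl
    refine Finset.card_bij' (fun s _ => Fin.tail s) (fun s _ => Fin.cons l s) ?_ ?_ ?_ ?_
    · intro s hs
      rw [mem_filter, mem_Cps] at hs
      rw [mem_Cps]
      obtain ⟨⟨h1, h2⟩, h3⟩ := hs
      refine ⟨fun i => h1 _, ?_⟩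
      rw [Fin.sum_univ_succ] at h2
      simp only [Fin.tail]
      omega
    · intro s hs
      rw [mem_Cps] at hs
      rw [mem_filter, mem_Cps]
      refine ⟨⟨fun i => ?_, ?_⟩, by simp⟩
      · refine Fin.cases ?_ (fun j => ?_) i
        · simpa using hl'.1
        · simpa using hs.1 j
      · rw [Fin.sum_univ_succ]
        simp only [Fin.cons_zero, Fin.cons_succ]
        rw [hs.2]; omega
    · intro s hs
      rw [mem_filter] at hs
      rw [← hs.2]
      exact Fin.cons_self_tail s
    · intro s hs
      exact Fin.tail_cons _ _
  · intro s hs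
    have hs' : s ∈ Cps (m + 1) n := hs
    unfold Cps at hs'
    rw [mem_filter, Fintype.mem_piFinset] at hs'
    exact hs'.1 0

lemma Cps_zero (n : ℕ) : (Cps 0 n).card = if n = 0 then 1 else 0 := by
  unfold Cps
  split_ifs with h
  · subst h; simp
  · rw [Finset.card_eq_zero, Finset.filter_eq_empty_iff]
    intro s _
    simp
    omega

lemma Cps_lt (m n : ℕ) (h : n < 2 * m) : (Cps m n).card = 0 := by
  rw [Finset.card_eq_zero, Finset.eq_empty_iff_forall_notMem]
  intro s hs
  rw [mem_Cps] at hs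
  have : ∑ i : Fin m, 2 ≤ ∑ i, s i := Finset.sum_le_sum (fun i _ => hs.1 i)
  simp at this
  omega

lemma uu_eq (θ : ℝ) (m : ℕ) : ∀ n, uu θ m n = (1 - θ) ^ m * θ ^ (n - 2 * m) * (Cps m n).card := by
  induction m with
  | zero => 
    intro n
    rw [Cps_zero]; simp only [uu]
    split_ifs with h
    · subst h; simp
    · simp
  | succ m ih =>
    intro n
    simp only [uu]
    rw [Cps_succ]
    push_cast
    rw [Finset.mul_sum]
    apply Finset.sum_congr rfl
    intro l hl
    have hl' := mem_Icc.1 hl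
    rw [ih]
    by_cases h : n - l < 2 * m
    · rw [Cps_lt _ _ h]; simp
    · rw [show n - 2 * (m + 1) = (l - 2) + (n - l - 2 * m) by omega, pow_add, pow_succ]
      unfold pp
      ring

lemma Cps_step (m n : ℕ) (hn : 1 ≤ n) :
    (Cps (m + 1) (n + 1)).card = (Cps (m + 1) n).card + (Cps m (n - 1)).card := by
  rw [Cps_succ, Cps_succ]
  rw [← Finset.add_sum_Ioc_eq_sum_Icc (show 2 ≤ n + 1 by omega)]
  rw [add_comm]
  congr 1
  apply Finset.sum_nbij' (fun l => l - 1) (fun l => l + 1)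
  · intro a ha; simp only [mem_Ioc, mem_Icc] at *; omega
  · intro a ha; simp only [mem_Ioc, mem_Icc] at *; omega
  · intro a ha; simp only [mem_Ioc, mem_Icc] at *; omega
  · intro a ha; simp only [mem_Ioc, mem_Icc] at *; omega
  · intro a ha; simp only [mem_Ioc, mem_Icc] at *; congr 2; omega

lemma Cps_choose : ∀ y d : ℕ, (Cps (y + 1) (2 * y + 2 + d)).card = (y + d).choose y := by
  intro y
  induction y with
  | zero =>
    intro d
    induction d with
    | zero => rw [show 2 * 0 + 2 + 0 = 1 + 1 by norm_num, Cps_step _ _ le_rfl, Cps_lt _ _ (by norm_num), Cps_zero]; simp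
    | succ d ih =>
      rw [show 2 * 0 + 2 + (d + 1) = (2 * 0 + 2 + d) + 1 by ring, Cps_step _ _ (by omega), ih, Cps_zero, if_neg (by omega)]
      simp
  | succ y ihy =>
    intro d
    induction d with
    | zero =>
      rw [show 2 * (y + 1) + 2 + 0 = (2 * y + 3) + 1 by ring, Cps_step _ _ (by omega), Cps_lt _ _ (by omega)]
      have := ihy 0
      rw [show 2 * y + 3 - 1 = 2 * y + 2 + 0 by omega, this]
      simp
    | succ d ih =>
      rw [show 2 * (y + 1) + 2 + (d + 1) = (2 * (y + 1) + 2 + d) + 1 by ring, Cps_step _ _ (by omega), ih,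
        show 2 * (y + 1) + 2 + d - 1 = 2 * y + 2 + (d + 1) by omega, ihy,
        show y + 1 + (d + 1) = (y + (d + 1)) + 1 by ring, Nat.choose_succ_succ, show y + 1 + d = y + (d + 1) by ring]
      ring

lemma Cps_ratio (y d : ℕ) : (Cps (y + 2) (2 * y + 2 + d)).card * (y + 1) * (y + d) =
    (Cps (y + 1) (2 * y + 2 + d)).card * d * (d - 1) := by
  rcases Nat.lt_or_ge d 2 with h | h
  · rw [Cps_lt _ _ (by omega)]
    have : d = 0 ∨ d = 1 := by omega
    rcases this with rfl | rfl <;> simp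
  · obtain ⟨e, rfl⟩ : ∃ e, d = e + 2 := ⟨d - 2, by omega⟩
    rw [Cps_choose, show 2 * y + 2 + (e + 2) = 2 * (y + 1) + 2 + e by ring, Cps_choose]
    have a1 := Nat.add_choose_mul_factorial_mul_factorial (y + 1) e
    have a2 := Nat.add_choose_mul_factorial_mul_factorial y (e + 2)
    have a3 : (y + (e + 2)).factorial = (y + (e + 2)) * (y + 1 + e).factorial := by
      rw [show y + (e + 2) = (y + 1 + e) + 1 by ring, Nat.factorial_succ]
    have p1 := Nat.factorial_pos y
    have p2 := Nat.factorial_pos e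
    rw [a3, ← a1] at a2
    simp only [Nat.factorial_succ] at a2
    rw [show e + 2 - 1 = e + 1 by omega]
    apply Nat.eq_of_mul_eq_mul_left (Nat.mul_pos p1 p2)
    simp only [show e + 1 + 1 = e + 2 by ring] at a2
    rw [Nat.choose_symm_add (a := y + 1) (b := e), Nat.choose_symm_add (a := y) (b := e + 2)]
    linarith

lemma uu_ratio (θ : ℝ) (x n : ℕ) (hx : 1 ≤ x) (hn : 2 * x ≤ n) :
    uu θ (x + 1) n * (θ ^ 2 * (x * (n - x - 1))) = uu θ x n * ((1 - θ) * ((n - 2 * x) * (n - 2 * x - 1))) := by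
  obtain ⟨y, rfl⟩ : ∃ y, x = y + 1 := ⟨x - 1, by omega⟩
  obtain ⟨d, rfl⟩ : ∃ d, n = 2 * y + 2 + d := ⟨n - (2 * y + 2), by omega⟩
  have r := Cps_ratio y d
  rw [uu_eq, uu_eq]
  rcases Nat.lt_or_ge d 2 with h | h
  · rw [Cps_lt (y + 1 + 1) _ (by omega)]
    have : d = 0 ∨ d = 1 := by omega
    rcases this with rfl | rfl <;> · push_cast; ring
  · obtain ⟨e, rfl⟩ : ∃ e, d = e + 2 := ⟨d - 2, by omega⟩
    have r' : ((Cps (y + 2) (2 * y + 2 + (e + 2))).card : ℝ) * (y + 1) * (y + (e + 2)) =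
      (Cps (y + 1) (2 * y + 2 + (e + 2))).card * (e + 2) * (e + 1) := by
      have := congrArg (fun x : ℕ => (x : ℝ)) r
      simpa using this
    rw [show 2 * y + 2 + (e + 2) - 2 * (y + 1 + 1) = e by omega,
      show 2 * y + 2 + (e + 2) - 2 * (y + 1) = e + 2 by omega]
    push_cast
    rw [show y + 1 + 1 = y + 2 by ring]
    linear_combination (1 - θ) ^ (y + 2) * θ ^ (e + 2) * r'

lemma mode (θ : ℝ) (h1 : 0 < θ) (h2 : θ < 1) (m n : ℕ) (hm : 1 ≤ m) (hn : 2 * m + 2 ≤ n)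
    (hth : θ ^ 2 * (m * (n - m - 1)) = (1 - θ) * (((n : ℝ) - 2 * m) * (n - 2 * m - 1))) :
    QQ θ n = uu θ m n := by
  have hn' : (2 : ℝ) * m + 2 ≤ n := by exact_mod_cast hn
  have hm' : (1 : ℝ) ≤ m := by exact_mod_cast hm
  have up : ∀ x, x < m → uu θ x n ≤ uu θ (x + 1) n := by
    intro x hx
    rcases Nat.eq_zero_or_pos x with h0 | h0
    · subst h0
      rw [show uu θ 0 n = 0 by simp only [uu]; rw [if_neg (by omega)]]
      exact uu_nonneg θ h1.le h2.le _ _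
    have r := uu_ratio θ x n h0 (by omega)
    have u0 := uu_nonneg θ h1.le h2.le x n
    have hx' : (x : ℝ) + 1 ≤ m := by exact_mod_cast hx
    have hx1 : (1 : ℝ) ≤ x := by exact_mod_cast h0
    have ap : 0 < θ ^ 2 * (x * ((n : ℝ) - x - 1)) := by
      have : 0 < (n : ℝ) - x - 1 := by linarith
      positivity
    have ab : θ ^ 2 * (x * ((n : ℝ) - x - 1)) ≤ (1 - θ) * (((n : ℝ) - 2 * x) * (n - 2 * x - 1)) := by
      calc _ ≤ θ ^ 2 * (m * ((n : ℝ) - m - 1)) := by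
            apply mul_le_mul_of_nonneg_left _ (by positivity)
            nlinarith
        _ = _ := hth
        _ ≤ _ := by
            apply mul_le_mul_of_nonneg_left _ (by linarith)
            apply mul_le_mul <;> linarith
    have := mul_le_mul_of_nonneg_left ab u0
    rw [← r] at this
    exact le_of_mul_le_mul_right this ap
  have dn : ∀ x, m ≤ x → uu θ (x + 1) n ≤ uu θ x n := by
    intro x hx
    rcases Nat.lt_or_ge n (2 * x) with h0 | h0
    · rw [uu_zero_of_lt θ (x + 1) n (by omega)]
      exact uu_nonneg θ h1.le h2.le _ _
    have r := uu_ratio θ x n (by omega) h0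
    have u0 := uu_nonneg θ h1.le h2.le x n
    have hx' : (m : ℝ) ≤ x := by exact_mod_cast hx
    have h0' : (2 : ℝ) * x ≤ n := by exact_mod_cast h0
    have hx1 : (1 : ℝ) ≤ x := by linarith
    have ap : 0 < θ ^ 2 * (x * ((n : ℝ) - x - 1)) := by
      have : 0 < (n : ℝ) - x - 1 := by linarith
      positivity
    have ab : (1 - θ) * (((n : ℝ) - 2 * x) * (n - 2 * x - 1)) ≤ θ ^ 2 * (x * ((n : ℝ) - x - 1)) := by
      calc _ ≤ (1 - θ) * (((n : ℝ) - 2 * m) * (n - 2 * m - 1)) := by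
            apply mul_le_mul_of_nonneg_left _ (by linarith)
            nlinarith
        _ = _ := hth.symm
        _ ≤ _ := by
            apply mul_le_mul_of_nonneg_left _ (by positivity)
            nlinarith
    have := mul_le_mul_of_nonneg_left ab u0
    rw [← r] at this
    exact le_of_mul_le_mul_right this ap
  have mono1 : ∀ d, d ≤ m → uu θ (m - d) n ≤ uu θ m n := by
    intro d
    induction d with
    | zero => intro _; simp
    | succ d ih =>
      intro hd
      have := up (m - (d + 1)) (by omega)
      rw [show m - (d + 1) + 1 = m - d by omega] at this
      exact this.trans (ih (by omega))
  have mono2 : ∀ d, uu θ (m + d) n ≤ uu θ m n := by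
    intro d
    induction d with
    | zero => simp
    | succ d ih => exact (dn (m + d) (by omega)).trans ih
  obtain ⟨x, hx⟩ := QQ_exists θ n
  apply le_antisymm _ (uu_le_QQ θ h1.le h2.le m n)
  rw [hx]
  rcases le_total x m with h | h
  · have := mono1 (m - x) (by omega)
    rwa [show m - (m - x) = x by omega] at this
  · have := mono2 (x - m)
    rwa [show m + (x - m) = x by omega] at this

set_option maxHeartbeats 1000000 in
lemma theta_exists (η : ℝ) (h1 : 0 < η) (h2 : η ≤ 0.05) (m n : ℕ) (hn : 1 ≤ n)
    (hx : |(m : ℝ) / n - 1 / 3| ≤ η / 100) (hn2 : 1 / (n : ℝ) ≤ η / 100) :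
    ∃ θ : ℝ, 1 / 2 - η ≤ θ ∧ θ ≤ 1 / 2 + η ∧
      θ ^ 2 * (m * (n - m - 1)) = (1 - θ) * (((n : ℝ) - 2 * m) * (n - 2 * m - 1)) := by
  have hn' : (1 : ℝ) ≤ n := by exact_mod_cast hn
  have hn0 : (0 : ℝ) < n := by linarith
  set x := (m : ℝ) / n with hxd
  set z := 1 / (n : ℝ) with hz
  have em : (m : ℝ) = x * n := by rw [hxd]; field_simp
  have ez : z * n = 1 := by rw [hz]; field_simp
  have hz0 : 0 < z := by positivity
  rw [abs_le] at hx
  obtain ⟨hx1, hx2⟩ := hx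
  have ha : (m : ℝ) * (n - m - 1) = n ^ 2 * (x * (1 - x - z)) := by rw [em]; linear_combination (x * n) * ez
  have hb : ((n : ℝ) - 2 * m) * (n - 2 * m - 1) = n ^ 2 * ((1 - 2 * x) * (1 - 2 * x - z)) := by
    rw [em]; linear_combination ((1 - 2 * x) * n) * ez
  have cont : ContinuousOn (fun θ : ℝ => θ ^ 2 * (x * (1 - x - z)) - (1 - θ) * ((1 - 2 * x) * (1 - 2 * x - z)))
    (Set.Icc (1 / 2 - η) (1 / 2 + η)) := by fun_prop
  have a1 : x * (1 - x - z) ≤ (1 / 3 + η / 100) * (2 / 3 + η / 100) := by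
    apply mul_le_mul <;> linarith
  have a2 : (1 / 3 - η / 100) * (2 / 3 - 2 * (η / 100)) ≤ x * (1 - x - z) := by
    apply mul_le_mul <;> linarith
  have b1 : (1 - 2 * x) * (1 - 2 * x - z) ≤ (1 / 3 + 2 * (η / 100)) * (1 / 3 + 2 * (η / 100)) := by
    apply mul_le_mul <;> linarith
  have b2 : (1 / 3 - 2 * (η / 100)) * (1 / 3 - 3 * (η / 100)) ≤ (1 - 2 * x) * (1 - 2 * x - z) := by
    apply mul_le_mul <;> linarith
  have hη2 : η ^ 2 ≤ 0.05 * η := by nlinarith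
  have := intermediate_value_Icc (by linarith) cont
  have h0 : (0 : ℝ) ∈ (fun θ : ℝ => θ ^ 2 * (x * (1 - x - z)) - (1 - θ) * ((1 - 2 * x) * (1 - 2 * x - z))) ''
      (Set.Icc (1 / 2 - η) (1 / 2 + η)) := by
    apply this
    constructor
    · try dsimp only
      have c1 : (1 / 2 - η) ^ 2 * (x * (1 - x - z)) ≤ (1 / 4) * (1 - 3 * η) * ((1 / 3 + η / 100) * (2 / 3 + η / 100)) := by
        apply mul_le_mul _ a1 _ (by nlinarith)
        · nlinarith
        · apply mul_nonneg <;> linarith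
      have c2 : (1 / 2 + η) * ((1 / 3 - 2 * (η / 100)) * (1 / 3 - 3 * (η / 100))) ≤ (1 - (1 / 2 - η)) * ((1 - 2 * x) * (1 - 2 * x - z)) := by
        apply mul_le_mul _ b2 _ (by linarith)
        · linarith
        · apply mul_nonneg <;> linarith
      have c3 : (1 / 4) * (1 - 3 * η) * ((1 / 3 + η / 100) * (2 / 3 + η / 100)) ≤ (1 / 4) * (1 - 3 * η) * (2 / 9 + η / 50) := by
        apply mul_le_mul_of_nonneg_left _ (by nlinarith)
        nlinarith
      have c4 : (1 / 2 + η) * (1 / 9 - η / 50) ≤ (1 / 2 + η) * ((1 / 3 - 2 * (η / 100)) * (1 / 3 - 3 * (η / 100))) := by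
        apply mul_le_mul_of_nonneg_left _ (by linarith)
        nlinarith
      have c5 : (1 / 4) * (1 - 3 * η) * (2 / 9 + η / 50) ≤ (1 / 2 + η) * (1 / 9 - η / 50) := by
        clear a1 a2 b1 b2 c1 c2 c3 c4 ha hb
        nlinarith
      linarith
    · try dsimp only
      have c1 : (1 - (1 / 2 + η)) * ((1 - 2 * x) * (1 - 2 * x - z)) ≤ (1 / 2 - η) * ((1 / 3 + 2 * (η / 100)) * (1 / 3 + 2 * (η / 100))) := by
        apply mul_le_mul _ b1 _ (by linarith)
        · linarith
        · apply mul_nonneg <;> linarith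
      have c2 : (1 / 4 + η) * ((1 / 3 - η / 100) * (2 / 3 - 2 * (η / 100))) ≤ (1 / 2 + η) ^ 2 * (x * (1 - x - z)) := by
        apply mul_le_mul _ a2 _ (by positivity)
        · nlinarith
        · apply mul_nonneg <;> linarith
      have c3 : (1 / 2 - η) * ((1 / 3 + 2 * (η / 100)) * (1 / 3 + 2 * (η / 100))) ≤ (1 / 2 - η) * (1 / 9 + η / 50) := by
        apply mul_le_mul_of_nonneg_left _ (by linarith)
        nlinarith
      have c4 : (1 / 4 + η) * (2 / 9 - η / 50) ≤ (1 / 4 + η) * ((1 / 3 - η / 100) * (2 / 3 - 2 * (η / 100))) := by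
        apply mul_le_mul_of_nonneg_left _ (by linarith)
        nlinarith
      have c5 : (1 / 2 - η) * (1 / 9 + η / 50) ≤ (1 / 4 + η) * (2 / 9 - η / 50) := by
        clear a1 a2 b1 b2 c1 c2 c3 c4 ha hb
        nlinarith
      linarith
  obtain ⟨θ, hθ, he⟩ := h0
  refine ⟨θ, hθ.1, hθ.2, ?_⟩
  rw [ha, hb]
  dsimp only at he
  linear_combination (n : ℝ) ^ 2 * he

end P13


namespace P13
open MvPolynomial Finset Filter Topology

lemma lim_div (a : ℝ) (h0 : 0 < a) (h1 : a < 1) (j D : ℕ) (hD : 1 ≤ D) :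
    Tendsto (fun k : ℕ => (k : ℝ) ^ j * a ^ (k / D)) atTop (𝓝 0) := by
  have t1 := tendsto_pow_const_mul_const_pow_of_abs_lt_one j (show |a| < 1 by rw [abs_of_pos h0]; exact h1)
  have t2 : Tendsto (fun k : ℕ => k / D + 1) atTop atTop :=
    (tendsto_add_atTop_nat 1).comp (Nat.tendsto_div_const_atTop (by omega : D ≠ 0))
  have t3 := (t1.comp t2).const_mul ((D : ℝ) ^ j / a)
  rw [mul_zero] at t3
  refine squeeze_zero (fun k => by positivity) (fun k => ?_) t3
  simp only [Function.comp]
  have hk : k ≤ D * (k / D + 1) := (Nat.lt_mul_div_succ k (by omega)).le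
  have hk' : (k : ℝ) ≤ D * ((k / D + 1 : ℕ) : ℝ) := by exact_mod_cast hk
  calc (k : ℝ) ^ j * a ^ (k / D) ≤ (D * ((k / D + 1 : ℕ) : ℝ)) ^ j * a ^ (k / D) := by gcongr
    _ = _ := by rw [mul_pow, pow_succ]; field_simp

lemma lim_delC (lam mu : ℝ) (q Z : ℕ) (h0 : 0 < lam) (h1 : lam < 1) (m0 : 0 < mu) (m1 : mu < 1) (hZ : 1 ≤ Z) :
    Tendsto (fun k : ℕ => delC lam mu q Z k) atTop (𝓝 0) := by
  have a1 := (lim_div lam h0 h1 9 (8 * Z) (by omega)).const_mul (16 : ℝ)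
  have a2 := (lim_div (2 / 3) (by norm_num) (by norm_num) 8 8 (by norm_num)).const_mul (4 * 8 ^ q : ℝ)
  have a3 := (a1.add a2).sqrt
  have a4 := (lim_div mu m0 m1 4 8 (by norm_num)).const_mul (6 : ℝ)
  have a5 := ((a3.const_mul 3).add a4).const_mul (4 * q : ℝ)
  simp only [mul_zero, add_zero, Real.sqrt_zero] at a5
  refine a5.congr (fun k => ?_)
  unfold delC betaC
  have : √(16 * ((k : ℝ) ^ 9 * lam ^ (k / (8 * Z))) + 4 * 8 ^ q * ((k : ℝ) ^ 8 * (2 / 3) ^ (k / 8))) =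
      (k : ℝ) ^ 4 * √(16 * k * lam ^ (k / 8 / Z) + 4 * 8 ^ q * (2 / 3 : ℝ) ^ (k / 8)) := by
    rw [Nat.div_div_eq_div_mul]
    have e : 16 * ((k : ℝ) ^ 9 * lam ^ (k / (8 * Z))) + 4 * 8 ^ q * ((k : ℝ) ^ 8 * (2 / 3) ^ (k / 8)) =
      ((k : ℝ) ^ 4) ^ 2 * (16 * k * lam ^ (k / (8 * Z)) + 4 * 8 ^ q * (2 / 3 : ℝ) ^ (k / 8)) := by ring
    rw [e, Real.sqrt_mul (by positivity), Real.sqrt_sq (by positivity)]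
  rw [this]
  ring

lemma ww_summable (mu : ℝ) (m0 : 0 ≤ mu) (m1 : mu < 1) : Summable (ww mu) := by
  have s1 := summable_pow_mul_geometric_of_norm_lt_one (R := ℝ) 2 (show ‖mu‖ < 1 by rw [Real.norm_of_nonneg m0]; exact m1)
  have s2 := summable_pow_mul_geometric_of_norm_lt_one (R := ℝ) 1 (show ‖mu‖ < 1 by rw [Real.norm_of_nonneg m0]; exact m1)
  refine Summable.of_nonneg_of_le (fun l => ww_nonneg mu m0 l) (fun l => ?_) ((s1.add s2).mul_left 15)
  unfold ww
  have : √(5 * ((l : ℝ) + 1)) ≤ 5 * (l + 1) := by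
    apply Real.sqrt_le_iff.2
    have : (0 : ℝ) ≤ l := by positivity
    constructor
    · positivity
    · nlinarith
  calc _ ≤ (l : ℝ) * (3 * mu ^ l) * (5 * (l + 1)) := by gcongr
    _ = _ := by ring

lemma ww_tail (mu : ℝ) (m0 : 0 ≤ mu) (m1 : mu < 1) (τ : ℝ) (hτ : 0 < τ) :
    ∀ᶠ k : ℕ in atTop, ∑ l ∈ (Icc 2 k).filter (fun l => k < 2 * l), ww mu l ≤ τ := by
  have := summable_iff_vanishing_norm.1 (ww_summable mu m0 m1) τ hτ
  obtain ⟨s, hs⟩ := this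
  filter_upwards [eventually_ge_atTop (2 * (s.sup id))] with k hk
  have := hs ((Icc 2 k).filter (fun l => k < 2 * l)) (by
    rw [Finset.disjoint_left]
    intro a ha has
    have : a ≤ s.sup id := Finset.le_sup (f := id) has
    simp only [mem_filter] at ha
    omega)
  exact (le_abs_self _).trans this.le

lemma prod_pp (θ : ℝ) : ∀ (m : ℕ) (s : Fin m → ℕ), (∀ i, 2 ≤ s i) →
    ∏ i, pp θ (s i) = (1 - θ) ^ m * θ ^ (∑ i, s i - 2 * m) := by
  intro m s hs
  unfold pp
  rw [Finset.prod_mul_distrib, Finset.prod_const, Finset.prod_pow_eq_pow_sum]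
  simp only [card_univ, Fintype.card_fin]
  congr 2
  have : ∑ i, s i = ∑ i, (s i - 2) + ∑ i : Fin m, 2 := by
    rw [← Finset.sum_add_distrib]
    apply Finset.sum_congr rfl
    intro i _
    have := hs i
    omega
  simp at this
  omega

lemma sum_T (θ : ℝ) (h0 : 0 < θ) (h1 : θ < 1) (k r m n : ℕ) (B : ℝ)
    (h : sq k (pp θ) m (ff k ^ r) ≤ B * uu θ m n) :
    ∑ s ∈ (Cps m n).filter (fun s => ∀ i, s i ≤ k), (T (ff k ^ r) s) ^ 2 ≤
      B * (m.factorial : ℝ) ^ 2 * (Cps m n).card := by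
  have hp := pp_nonneg θ h0.le h1.le
  set W := (1 - θ) ^ m * θ ^ (n - 2 * m) with hW
  have hW0 : 0 < W := by have : 0 < 1 - θ := by linarith
                         positivity
  have hf : (0 : ℝ) < (m.factorial : ℝ) ^ 2 := by positivity
  rw [uu_eq, ← hW] at h
  have a : W * (∑ s ∈ (Cps m n).filter (fun s => ∀ i, s i ≤ k), (T (ff k ^ r) s / m.factorial) ^ 2) ≤
      sq k (pp θ) m (ff k ^ r) := by
    unfold sq
    rw [Finset.mul_sum]
    calc _ = ∑ s ∈ (Cps m n).filter (fun s => ∀ i, s i ≤ k), (∏ i, pp θ (s i)) * (T (ff k ^ r) s / m.factorial) ^ 2 := by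
          apply Finset.sum_congr rfl
          intro s hs
          rw [mem_filter, mem_Cps] at hs
          rw [prod_pp θ m s hs.1.1, hs.1.2]
      _ ≤ _ := by
          apply Finset.sum_le_sum_of_subset_of_nonneg
          · intro s hs
            rw [mem_filter, mem_Cps] at hs
            rw [Fintype.mem_piFinset]
            exact fun i => mem_Icc.2 ⟨hs.1.1 i, hs.2 i⟩
          · intro s _ _
            exact mul_nonneg (Finset.prod_nonneg fun i _ => hp _) (sq_nonneg _)
  have b : W * (∑ s ∈ (Cps m n).filter (fun s => ∀ i, s i ≤ k), (T (ff k ^ r) s / m.factorial) ^ 2) ≤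
      W * (B * (Cps m n).card) := by
    refine (a.trans h).trans (le_of_eq (by ring))
  have c := le_of_mul_le_mul_left b hW0
  simp only [div_pow] at c
  rw [← Finset.sum_div, div_le_iff₀ hf] at c
  linarith

lemma fin_num (x d δ ε' : ℝ) (hx : 0 ≤ x) (hd : 0 ≤ d) (h1 : x ≤ 3 + δ) (h2 : d ≤ δ) (h3 : δ ≤ 1)
    (h4 : δ ≤ ε' / 16) : (x + d) ^ 2 ≤ 9 + ε' := by
  have : (x + d) ^ 2 ≤ (3 + 2 * δ) ^ 2 := pow_le_pow_left₀ (by linarith) (by linarith) 2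
  nlinarith

set_option maxHeartbeats 1000000 in
theorem analytic (ε ε' : ℝ) (hε : 0 < ε) (hε' : 0 < ε') :
    ∃ N : ℕ, ∀ n : ℕ, N ≤ n → ∀ k : ℕ, k ∣ n → (2 + ε) * Real.logb 2 n ≤ (k : ℝ) →
      ∀ m : ℕ, |(m : ℝ) / n - 1 / 3| ≤ (Real.log n) ^ (-(1 : ℝ) / 3) →
      1 ≤ n ∧ 3 ≤ k ∧ 1 ≤ m ∧
      ∑ s ∈ (Cps m n).filter (fun s => ∀ i, s i ≤ k), (T (ff k ^ (n / k)) s) ^ 2 ≤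
        (9 + ε') * (m.factorial : ℝ) ^ 2 * (Cps m n).card := by
  -- constants
  set c : ℝ := 2 ^ (1 / (2 + ε)) with hc
  clear_value c
  have hc1 : 1 < c := hc ▸ Real.one_lt_rpow (by norm_num) (by positivity)
  have hc2 : c ^ 2 < 2 := by
    rw [hc, ← Real.rpow_natCast, ← Real.rpow_mul (by norm_num)]
    conv_rhs => rw [← Real.rpow_one 2]
    apply Real.rpow_lt_rpow_of_exponent_lt (by norm_num)
    rw [div_mul_eq_mul_div, div_lt_one (by positivity)]
    push_cast; linarith
  have hc0 : 0 < c := by linarith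
  set L : ℝ := 1 / c ^ 2 with hL
  clear_value L
  have hL1 : 1 / 2 < L := by rw [hL]; apply one_div_lt_one_div_of_lt (by positivity) hc2
  set lam : ℝ := min 0.9 ((1 / 2 + L) / 2) with hlam
  have hl1 : lam ≤ 0.9 := min_le_left _ _
  have hl2 : 1 / 2 < lam := lt_min (by norm_num) (by linarith)
  have hl3 : lam < L := (min_le_right _ _).trans_lt (by linarith)
  clear_value lam
  set mu : ℝ := √lam with hmu
  clear_value mu
  have hmu2 : mu ^ 2 = lam := hmu ▸ Real.sq_sqrt (by linarith)
  have hmu0 : 0 < mu := hmu ▸ Real.sqrt_pos.2 (by linarith)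
  have hmu1 : mu < 1 := by nlinarith
  have hg : c * mu < 1 := by
    have : (c * mu) ^ 2 < 1 := by
      rw [mul_pow, hmu2]
      calc c ^ 2 * lam < c ^ 2 * L := by gcongr
        _ = 1 := by rw [hL]; field_simp
    have h0 : 0 < c * mu := by positivity
    nlinarith
  set g : ℝ := c * mu with hgd
  clear_value g
  have hg0 : 0 < g := by rw [hgd]; positivity
  set η : ℝ := min 0.05 ((lam - 1 / 2) / 2) with hη
  have hη0 : 0 < η := lt_min (by norm_num) (by linarith)
  have hη1 : η ≤ 0.05 := min_le_left _ _
  have hη2 : η ≤ (lam - 1 / 2) / 2 := min_le_right _ _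
  clear_value η
  obtain ⟨q, hq⟩ : ∃ q : ℕ, 40 / (lam - 1 / 2) ≤ q := exists_nat_ge _
  have hq' : 20 ≤ q * ((lam - 1 / 2) / 2) := by
    rw [div_le_iff₀ (by linarith)] at hq; linarith
  obtain ⟨C2, hC2⟩ : ∃ C2 : ℕ, (8 : ℝ) ^ q * (2 / 3) ^ C2 ≤ 1 / 2 := by
    obtain ⟨x, hx⟩ := exists_pow_lt_of_lt_one (show (0 : ℝ) < 1 / 2 / 8 ^ q by positivity) (show (2 / 3 : ℝ) < 1 by norm_num)
    refine ⟨x, ?_⟩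
    rw [lt_div_iff₀ (by positivity)] at hx
    linarith
  obtain ⟨Z, hZ, hZ2⟩ : ∃ Z : ℕ, 1 ≤ Z ∧ (8 : ℝ) ^ q ≤ (3 / 2) ^ (2 * Z) := by
    obtain ⟨x, hx⟩ := pow_unbounded_of_one_lt ((8 : ℝ) ^ q) (show (1 : ℝ) < 3 / 2 by norm_num)
    refine ⟨x + 1, by omega, hx.le.trans ?_⟩
    exact pow_le_pow_right₀ (by norm_num) (by omega)
  set C1 : ℝ := ∑' l, ww mu l with hC1d
  have hC1n : 0 ≤ C1 := tsum_nonneg (fun l => ww_nonneg mu hmu0.le l)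
  have hC1 : ∀ k, ∑ l ∈ Icc 2 k, ww mu l ≤ C1 := fun k =>
    (ww_summable mu hmu0.le hmu1).sum_le_tsum _ (fun l _ => ww_nonneg mu hmu0.le l)
  clear_value C1
  set δ0 : ℝ := min 1 (ε' / 16) with hδ0
  have hδp : 0 < δ0 := lt_min (by norm_num) (by positivity)
  have hδ1 : δ0 ≤ 1 := min_le_left _ _
  have hδ2 : δ0 ≤ ε' / 16 := min_le_right _ _
  clear_value δ0
  set dT : ℝ := min 1 (δ0 / (2 * (C1 + 1))) with hdT
  have hdp : 0 < dT := lt_min (by norm_num) (by positivity)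
  have hd1 : dT ≤ 1 := min_le_left _ _
  have hd2 : dT * C1 ≤ δ0 / 2 := by
    have : dT ≤ δ0 / (2 * (C1 + 1)) := min_le_right _ _
    rw [le_div_iff₀ (by positivity)] at this
    nlinarith
  clear_value dT
  set tau : ℝ := min (1 / (2 * C1 + 1)) (δ0 / (2 * (2 * C1 + 2))) with htau
  have htp : 0 < tau := lt_min (by positivity) (by positivity)
  have ht1 : (2 * C1 + 1) * tau ≤ 1 := by
    have : tau ≤ 1 / (2 * C1 + 1) := min_le_left _ _
    rw [le_div_iff₀ (by positivity)] at this
    linarith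
  have ht2 : (2 * C1 + 2) * tau ≤ δ0 / 2 := by
    have : tau ≤ δ0 / (2 * (2 * C1 + 2)) := min_le_right _ _
    rw [le_div_iff₀ (by positivity)] at this
    linarith
  clear_value tau
  set δ1 : ℝ := min (η / 100) (δ0 / (3 * (3 + δ0))) with hdel_d
  have hdel_p : 0 < δ1 := lt_min (by positivity) (by positivity)
  have hdel_a : δ1 ≤ η / 100 := min_le_left _ _
  have hdel_b : (3 + δ0) * δ1 ≤ δ0 / 3 := by
    have : δ1 ≤ δ0 / (3 * (3 + δ0)) := min_le_right _ _
    rw [le_div_iff₀ (by positivity)] at this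
    linarith
  clear_value δ1
  -- eventually in k
  have E1 := ww_tail mu hmu0.le hmu1 tau htp
  have E2 : ∀ᶠ k : ℕ in atTop, (2 * C1 + 1) * ((C2 + 1) * delC lam mu q Z k + 60 * q * ((k : ℝ) ^ 4 * g ^ k)) ≤ dT := by
    have a1 := (lim_delC lam mu q Z (by linarith) (by linarith) hmu0 hmu1 hZ).const_mul ((C2 : ℝ) + 1)
    have a2 := (tendsto_pow_const_mul_const_pow_of_abs_lt_one 4 (show |g| < 1 by rw [abs_of_pos hg0]; exact hg)).const_mul (60 * q : ℝ)
    have a3 := (a1.add a2).const_mul (2 * C1 + 1)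
    simp only [mul_zero, add_zero] at a3
    exact (a3.eventually (gt_mem_nhds hdp)).mono (fun k hk => hk.le)
  obtain ⟨K, hK⟩ := eventually_atTop.1 (E1.and E2)
  -- eventually in n
  have F1 : ∀ᶠ n : ℕ in atTop, (K : ℝ) + 3 ≤ Real.logb 2 n :=
    ((Real.tendsto_logb_atTop (by norm_num)).comp tendsto_natCast_atTop_atTop).eventually_ge_atTop _
  have F2 : ∀ᶠ n : ℕ in atTop, (Real.log n) ^ (-(1 : ℝ) / 3) ≤ δ1 := by
    have t := ((tendsto_rpow_neg_atTop (show (0 : ℝ) < 1 / 3 by norm_num)).comp Real.tendsto_log_atTop).comp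
      (tendsto_natCast_atTop_atTop (R := ℝ))
    refine (t.eventually (gt_mem_nhds hdel_p)).mono (fun n hn => ?_)
    simp only [Function.comp] at hn
    rw [show -(1 : ℝ) / 3 = -(1 / 3) by ring]
    exact hn.le
  have F3 : ∀ᶠ n : ℕ in atTop, 1 / (n : ℝ) ≤ η / 100 := by
    exact (tendsto_one_div_atTop_nhds_zero_nat.eventually (gt_mem_nhds (show 0 < η / 100 by positivity))).mono
      (fun n hn => hn.le)
  obtain ⟨N, hN⟩ := eventually_atTop.1 ((F1.and F2).and (F3.and (eventually_ge_atTop 1)))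
  refine ⟨N, fun n hn k hkn hk m hm => ?_⟩
  obtain ⟨⟨f1, f2⟩, f3, hn1⟩ := hN n hn
  have hn1' : (1 : ℝ) ≤ n := by exact_mod_cast hn1
  have hkK : K + 3 ≤ k := by
    have h0 : 0 ≤ Real.logb 2 n := by linarith [(Nat.cast_nonneg K : (0 : ℝ) ≤ K)]
    have h3 : 0 ≤ (1 + ε) * Real.logb 2 n := by positivity
    have : (K : ℝ) + 3 ≤ k := by linarith
    exact_mod_cast this
  have hm2 : |(m : ℝ) / n - 1 / 3| ≤ δ1 := hm.trans f2
  obtain ⟨r, hr⟩ := hkn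
  have hkp : 0 < k := by omega
  have hrk : n / k = r := by rw [hr]; exact Nat.mul_div_cancel_left r hkp
  have hr1 : 1 ≤ r := by
    rcases Nat.eq_zero_or_pos r with h | h
    · subst h; omega
    · exact h
  have hrk2 : r * k = n := by rw [hr]; ring
  have hrn : r ≤ n := by rw [hr]; exact Nat.le_mul_of_pos_left r hkp
  obtain ⟨θ, t1, t2, t3⟩ := theta_exists η hη0 hη1 m n hn1 (hm2.trans hdel_a) f3
  have hx := abs_le.1 hm2
  have hn0 : (0 : ℝ) < n := by linarith
  have hmn : (m : ℝ) = (m / n) * n := by field_simp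
  have hm1 : 1 ≤ m := by
    rcases Nat.eq_zero_or_pos m with h | h
    · subst h; simp at hx; linarith
    · exact h
  have hm1' : (1 : ℝ) ≤ m := by exact_mod_cast hm1
  have h2m : 2 * m + 2 ≤ n := by
    have a : (m : ℝ) / n ≤ 0.4 := by linarith
    rw [div_le_iff₀ hn0] at a
    have b : 1 ≤ 0.001 * (n : ℝ) := by
      have := (div_le_iff₀ hn0).1 f3
      have h5 : η / 100 * n ≤ 0.001 * (n : ℝ) := by gcongr; linarith
      linarith
    have : (2 : ℝ) * m + 2 ≤ n := by linarith
    exact_mod_cast this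
  have hQ := mode θ (by linarith) (by linarith) m n hm1 h2m t3
  have hnc : (n : ℝ) ≤ c ^ k := by
    rw [hc, ← Real.rpow_natCast, ← Real.rpow_mul (by norm_num)]
    rw [← Real.logb_le_iff_le_rpow (by norm_num) hn0]
    rw [div_mul_eq_mul_div, one_mul, le_div_iff₀ (by positivity)]
    linarith
  have hP : Par θ lam mu q := by
    refine ⟨by linarith, by linarith, by linarith, hl1, hl2.le, ?_, hmu0.le, hmu2⟩
    have : (lam - 1 / 2) / 2 ≤ lam - θ := by linarith
    have : q * ((lam - 1 / 2) / 2) ≤ q * (lam - θ) := by gcongr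
    linarith
  have hKk := hK k (by omega)
  have hCh : Chn θ lam mu q k r C2 Z C1 tau dT := by
    refine ⟨hP, by omega, hC2, hZ, hZ2, hC1 k, hKk.1, ht1, ?_, hd1⟩
    refine le_trans ?_ hKk.2
    apply mul_le_mul_of_nonneg_left _ (by linarith)
    have : (r : ℝ) * mu ^ k ≤ g ^ k := by
      rw [hgd, mul_pow]
      apply mul_le_mul_of_nonneg_right _ (by positivity)
      exact (Nat.cast_le.2 hrn).trans hnc
    have : (r : ℝ) * (60 * q * k ^ 4 * mu ^ k) ≤ 60 * q * ((k : ℝ) ^ 4 * g ^ k) := by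
      calc (r : ℝ) * (60 * q * k ^ 4 * mu ^ k) = 60 * q * (k ^ 4 * (r * mu ^ k)) := by ring
        _ ≤ _ := by gcongr
    linarith
  have hfin := hCh.sq_final hr1 m hm1 (by rw [hrk2]; exact hQ)
  rw [hrk2] at hfin
  refine ⟨hn1, by omega, hm1, ?_⟩
  rw [hrk]
  refine (sum_T θ (by linarith) (by linarith) k r m n _ hfin).trans ?_
  refine mul_le_mul_of_nonneg_right ?_ (Nat.cast_nonneg _)
  refine mul_le_mul_of_nonneg_right ?_ (pow_nonneg (Nat.cast_nonneg _) 2)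
  have hnm : (n : ℝ) / m ≤ 3 + δ0 := by
    rw [div_le_iff₀ (by linarith)]
    have : 1 ≤ (3 + δ0) * ((m : ℝ) / n) := by
      have : (3 + δ0) * (1 / 3 - δ1) ≤ (3 + δ0) * ((m : ℝ) / n) := by gcongr; linarith
      linarith
    calc (n : ℝ) ≤ ((3 + δ0) * ((m : ℝ) / n)) * n := le_mul_of_one_le_left hn0.le this
      _ = (3 + δ0) * (m / n * n) := by ring
      _ = _ := by rw [← hmn]
  have hnm0 : 0 ≤ (n : ℝ) / m := by positivity
  have hdd : 0 ≤ dT * C1 + (2 * C1 + 2) * tau := by positivity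
  exact fin_num _ _ δ0 ε' hnm0 hdd hnm (by linarith only [hd2, ht2]) hδ1 hδ2

end P13


namespace P13
open MvPolynomial Finset

lemma mono_dir {A : Type*} [CommRing A] (y : ℕ → A) (l : ℕ)
    (hst : ∀ i, i + 1 < l → y (i + 1) = y i + 1 ∨ y (i + 1) = y i - 1)
    (inj : ∀ i i', i < l → i' < l → y i = y i' → i = i') :
    (∀ i, i < l → y i = y 0 + i) ∨ (∀ i, i < l → y i = y 0 - i) := by
  by_cases hl : 1 < l
  · rcases hst 0 hl with h | h
    · left
      have step : ∀ i, i + 1 < l → y (i + 1) = y i + 1 := by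
        intro i
        induction i with
        | zero => intro _; exact h
        | succ i ih =>
          intro hi
          rcases hst (i + 1) hi with h2 | h2
          · exact h2
          · have := inj (i + 1 + 1) i (by omega) (by omega) (by rw [h2, ih (by omega)]; ring)
            omega
      intro i
      induction i with
      | zero => intro _; simp
      | succ i ih => intro hi; rw [step i hi, ih (by omega)]; push_cast; ring
    · right
      have step : ∀ i, i + 1 < l → y (i + 1) = y i - 1 := by
        intro i
        induction i with
        | zero => intro _; exact h
        | succ i ih =>
          intro hi
          rcases hst (i + 1) hi with h2 | h2
          · have := inj (i + 1 + 1) i (by omega) (by omega) (by rw [h2, ih (by omega)]; ring)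
            omega
          · exact h2
      intro i
      induction i with
      | zero => intro _; simp
      | succ i ih => intro hi; rw [step i hi, ih (by omega)]; push_cast; ring
  · left
    intro i hi
    have : i = 0 := by omega
    subst this; simp

variable {r k : ℕ}

abbrev Cell (r k : ℕ) := Fin r × ZMod k

def cel (p : Cell r k) (i : ℕ) : Cell r k := (p.1, p.2 + (i : ZMod k))

def Good {m : ℕ} (C : Finset (Cell r k)) (s : Fin m → ℕ) (P : Fin m → Cell r k) : Prop :=
  (∀ j j' i i', i < s j → i' < s j' → cel (P j) i = cel (P j') i' → j = j' ∧ i = i') ∧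
  (∀ u, u ∈ C ↔ ∃ j i, i < s j ∧ cel (P j) i = u)

open Classical in
noncomputable def W [NeZero k] {m : ℕ} (C : Finset (Cell r k)) (s : Fin m → ℕ) : ℕ :=
  (univ.filter (fun P : Fin m → Cell r k => Good C s P)).card

open Classical in
noncomputable def cut [NeZero k] (C : Finset (Cell r k)) (v : Cell r k) (l : ℕ) : Finset (Cell r k) :=
  C.filter (fun u => ∀ i, i < l → cel v i ≠ u)

lemma Good.cut [NeZero k] {m : ℕ} {C : Finset (Cell r k)} {s : Fin (m + 1) → ℕ} {P : Fin (m + 1) → Cell r k}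
    (h : Good C s P) (j : Fin (m + 1)) :
    Good (cut C (P j) (s j)) (fun x => s (j.succAbove x)) (fun x => P (j.succAbove x)) := by
  refine ⟨?_, ?_⟩
  · intro a b i i' hi hi' he
    have := h.1 _ _ i i' hi hi' he
    exact ⟨Fin.succAbove_right_injective this.1, this.2⟩
  · intro u
    unfold P13.cut
    rw [mem_filter, h.2]
    constructor
    · rintro ⟨⟨a, i, hi, he⟩, h2⟩
      have : a ≠ j := by
        rintro rfl
        exact h2 i hi he
      obtain ⟨b, rfl⟩ := Fin.exists_succAbove_eq this
      exact ⟨b, i, hi, he⟩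
    · rintro ⟨b, i, hi, he⟩
      refine ⟨⟨_, i, hi, he⟩, ?_⟩
      intro i' hi' he'
      have := h.1 _ _ i i' hi hi' (he.trans he'.symm)
      exact Fin.succAbove_ne j b this.1

open Classical in
lemma W_fix [NeZero k] {m : ℕ} (C : Finset (Cell r k)) (s : Fin (m + 1) → ℕ) (j : Fin (m + 1)) (v : Cell r k) :
    (univ.filter (fun P : Fin (m + 1) → Cell r k => Good C s P ∧ P j = v)).card ≤
      W (cut C v (s j)) (fun x => s (j.succAbove x)) := by
  unfold W
  apply Finset.card_le_card_of_injOn (fun P x => P (j.succAbove x))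
  · intro P hP
    simp only [coe_filter, mem_univ, true_and, Set.mem_setOf_eq] at hP ⊢
    rw [← hP.2]
    exact hP.1.cut j
  · intro P hP Q hQ he
    simp only [coe_filter, mem_univ, true_and, Set.mem_setOf_eq] at hP hQ
    funext x
    by_cases hx : x = j
    · subst hx; rw [hP.2, hQ.2]
    · obtain ⟨b, rfl⟩ := Fin.exists_succAbove_eq hx
      exact congrFun he b

lemma Good.le [NeZero k] {m : ℕ} {C : Finset (Cell r k)} {s : Fin m → ℕ} {P : Fin m → Cell r k}
    (h : Good C s P) (j : Fin m) : s j ≤ k := by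
  by_contra hk
  have := h.1 j j 0 k (by omega) (by omega) (by simp [cel])
  have := NeZero.ne k
  omega

lemma cel_sub (u : Cell r k) (p : Cell r k) (i : ℕ) (h : cel p i = u) : p = (u.1, u.2 - (i : ZMod k)) := by
  subst h
  simp [cel]

/-- first recursion : the cell `u` has no predecessor in `C`. -/
lemma W_rec1 [NeZero k] {m : ℕ} (C : Finset (Cell r k)) (s : Fin (m + 1) → ℕ) (u : Cell r k) (hu : u ∈ C)
    (hu' : (u.1, u.2 - 1) ∉ C) (B : Fin (m + 1) → ℝ) (hB0 : ∀ j, 0 ≤ B j)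
    (hB : ∀ j P, Good C s P → P j = u → (W (cut C u (s j)) (fun x => s (j.succAbove x)) : ℝ) ≤ B j) :
    (W C s : ℝ) ≤ ∑ j, B j := by
  classical
  have h1 : W C s ≤ ∑ j, (univ.filter (fun P : Fin (m + 1) → Cell r k => Good C s P ∧ P j = u)).card := by
    refine le_trans ?_ Finset.card_biUnion_le
    unfold W
    apply Finset.card_le_card
    intro P hP
    simp only [mem_filter, mem_univ, true_and, mem_biUnion] at hP ⊢
    obtain ⟨j, i, hi, he⟩ := (hP.2 u).1 hu
    refine ⟨j, hP, ?_⟩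
    rcases Nat.eq_zero_or_pos i with h0 | h0
    · subst h0
      rw [← he]; simp [cel]
    · exfalso
      apply hu'
      refine (hP.2 _).2 ⟨j, i - 1, by omega, ?_⟩
      rw [← he]
      simp only [cel]
      rw [Nat.cast_sub (by omega)]
      push_cast
      congr 1
      ring
  have h2 : ∀ j, ((univ.filter (fun P : Fin (m + 1) → Cell r k => Good C s P ∧ P j = u)).card : ℝ) ≤ B j := by
    intro j
    rcases Finset.eq_empty_or_nonempty (univ.filter (fun P : Fin (m + 1) → Cell r k => Good C s P ∧ P j = u)) with h | ⟨P, hP⟩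
    · rw [h]; simpa using hB0 j
    · simp only [mem_filter, mem_univ, true_and] at hP
      refine le_trans ?_ (hB j P hP.1 hP.2)
      exact_mod_cast W_fix C s j u
  calc (W C s : ℝ) ≤ ((∑ j, (univ.filter (fun P : Fin (m + 1) → Cell r k => Good C s P ∧ P j = u)).card : ℕ) : ℝ) := by
        exact_mod_cast h1
    _ ≤ _ := by push_cast; exact Finset.sum_le_sum (fun j _ => h2 j)

lemma W_rec2 [NeZero k] {m : ℕ} (C : Finset (Cell r k)) (s : Fin (m + 1) → ℕ) (u : Cell r k) (hu : u ∈ C)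
    (B : Fin (m + 1) → ℝ) (hB0 : ∀ j, 0 ≤ B j)
    (hB : ∀ j P (a : ℕ), Good C s P → P j = (u.1, u.2 - (a : ZMod k)) →
      (W (cut C (u.1, u.2 - (a : ZMod k)) (s j)) (fun x => s (j.succAbove x)) : ℝ) ≤ B j) :
    (W C s : ℝ) ≤ ∑ j, s j * B j := by
  classical
  have h1 : W C s ≤ ∑ j, ∑ a ∈ range (s j), (univ.filter (fun P : Fin (m + 1) → Cell r k => Good C s P ∧ P j = (u.1, u.2 - (a : ZMod k)))).card := by
    refine le_trans ?_ (Finset.sum_le_sum (fun j _ => Finset.card_biUnion_le))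
    refine le_trans ?_ Finset.card_biUnion_le
    unfold W
    apply Finset.card_le_card
    intro P hP
    simp only [mem_filter, mem_univ, true_and, mem_biUnion, mem_range] at hP ⊢
    obtain ⟨j, i, hi, he⟩ := (hP.2 u).1 hu
    exact ⟨j, i, hi, hP, cel_sub u _ i he⟩
  have h2 : ∀ j a, ((univ.filter (fun P : Fin (m + 1) → Cell r k => Good C s P ∧ P j = (u.1, u.2 - ((a : ℕ) : ZMod k)))).card : ℝ) ≤ B j := by
    intro j a
    rcases Finset.eq_empty_or_nonempty (univ.filter (fun P : Fin (m + 1) → Cell r k => Good C s P ∧ P j = (u.1, u.2 - ((a : ℕ) : ZMod k)))) with h | ⟨P, hP⟩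
    · rw [h]; simpa using hB0 j
    · simp only [mem_filter, mem_univ, true_and] at hP
      refine le_trans ?_ (hB j P a hP.1 hP.2)
      exact_mod_cast W_fix C s j _
  calc (W C s : ℝ) ≤ ((∑ j, ∑ a ∈ range (s j), (univ.filter (fun P : Fin (m + 1) → Cell r k => Good C s P ∧ P j = (u.1, u.2 - (a : ZMod k)))).card : ℕ) : ℝ) := by
        exact_mod_cast h1
    _ ≤ ∑ j, ∑ a ∈ range (s j), B j := by
        push_cast; exact Finset.sum_le_sum (fun j _ => Finset.sum_le_sum (fun a _ => h2 j a))
    _ = _ := by simp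

/-- region: full cycles in `D`, and interval of length `t` starting at `y` in cycle `c`. -/
def Reg (C : Finset (Cell r k)) (c : Fin r) (y : ZMod k) (t : ℕ) (D : Finset (Fin r)) : Prop :=
  ∀ u : Cell r k, u ∈ C ↔ (u.1 ∈ D ∨ (u.1 = c ∧ ∃ i, i < t ∧ u.2 = y + (i : ZMod k)))

lemma cast_inj [NeZero k] {i i' : ℕ} (h : i < k) (h' : i' < k) (he : (i : ZMod k) = i') : i = i' := by
  have := congrArg ZMod.val he
  rwa [ZMod.val_cast_of_lt h, ZMod.val_cast_of_lt h'] at this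

lemma Reg.cut1 [NeZero k] {C : Finset (Cell r k)} {c : Fin r} {y : ZMod k} {t : ℕ} {D : Finset (Fin r)}
    (h : Reg C c y t D) (ht : t < k) (hc : c ∉ D) (l : ℕ) (hl : l ≤ t) :
    Reg (cut C (c, y) l) c (y + l) (t - l) D := by
  intro u
  unfold cut
  rw [mem_filter, h u]
  constructor
  · rintro ⟨h1 | ⟨h1, i, hi, he⟩, h2⟩
    · exact Or.inl h1
    · right
      refine ⟨h1, ?_⟩
      by_cases hil : i < l
      · exfalso
        apply h2 i hil
        simp only [cel]
        rw [← he, ← h1]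
      · refine ⟨i - l, by omega, ?_⟩
        rw [he, Nat.cast_sub (by omega)]
        ring
  · rintro (h1 | ⟨h1, i, hi, he⟩)
    · refine ⟨Or.inl h1, ?_⟩
      intro i hi he
      apply hc
      rw [← he] at h1
      exact h1
    · refine ⟨Or.inr ⟨h1, l + i, by omega, by rw [he]; push_cast; ring⟩, ?_⟩
      intro i' hi' he'
      have : y + (i' : ZMod k) = y + l + i := by
        rw [← he, ← he']; rfl
      have : (i' : ZMod k) = ((l + i : ℕ) : ZMod k) := by
        push_cast
        linear_combination this
      have := cast_inj (by omega) (by omega) this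
      omega

lemma Reg.cut2 [NeZero k] {C : Finset (Cell r k)} {c : Fin r} {y : ZMod k} {D : Finset (Fin r)}
    (h : Reg C c y 0 D) (c' : Fin r) (hc' : c' ∈ D) (z : ZMod k) (l : ℕ) (hl : l ≤ k) :
    Reg (cut C (c', z) l) c' (z + l) (k - l) (D.erase c') := by
  intro u
  unfold cut
  rw [mem_filter, h u, mem_erase]
  constructor
  · rintro ⟨h1 | ⟨h1, i, hi, he⟩, h2⟩
    · by_cases huc : u.1 = c'
      · right
        refine ⟨huc, ?_⟩
        have hv : ((u.2 - z).val : ZMod k) = u.2 - z := ZMod.natCast_zmod_val _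
        have hlt := ZMod.val_lt (u.2 - z)
        have hge : l ≤ (u.2 - z).val := by
          by_contra hcon
          apply h2 (u.2 - z).val (by omega)
          simp only [cel]
          rw [hv, ← huc, add_sub_cancel]
        refine ⟨(u.2 - z).val - l, by omega, ?_⟩
        rw [Nat.cast_sub hge, hv]
        ring
      · exact Or.inl ⟨huc, h1⟩
    · omega
  · rintro (h1 | ⟨h1, i, hi, he⟩)
    · refine ⟨Or.inl h1.2, ?_⟩
      intro i hi he
      apply h1.1
      rw [← he]; rfl
    · refine ⟨Or.inl (h1 ▸ hc'), ?_⟩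
      intro i' hi' he'
      have : z + (i' : ZMod k) = z + l + i := by
        rw [← he, ← he']; rfl
      have : (i' : ZMod k) = ((l + i : ℕ) : ZMod k) := by
        push_cast
        linear_combination this
      have := cast_inj (by omega) (by omega) this
      omega

lemma T_nonneg {P : Pol} (h : NN P) {m : ℕ} (s : Fin m → ℕ) : 0 ≤ T P s :=
  mul_nonneg (fac_pos _).le (h _)

lemma W_le [NeZero k] : ∀ (m : ℕ) (s : Fin m → ℕ), (∀ j, 2 ≤ s j) → ∀ (C : Finset (Cell r k)) (c : Fin r)
    (y : ZMod k) (t : ℕ) (D : Finset (Fin r)), Reg C c y t D → t < k → (0 < t → c ∉ D) →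
    (W C s : ℝ) ≤ T (hh k t * ff k ^ D.card) s := by
  intro m
  induction m with
  | zero =>
    intro s hs C c y t D hC ht hc
    classical
    classical
    by_cases hCe : C = ∅
    · have ht0 : t = 0 := by
        by_contra h0
        have := (hC (c, y)).2 (Or.inr ⟨rfl, 0, by omega, by simp⟩)
        rw [hCe] at this
        simp at this
      have hD : D = ∅ := by
        rw [Finset.eq_empty_iff_forall_notMem]
        intro d hd
        have := (hC (d, 0)).2 (Or.inl hd)
        rw [hCe] at this
        simp at this
      subst ht0
      rw [hD, Nat.cast_zero, hh_zero]
      simp only [card_empty, pow_zero, mul_one]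
      rw [T_one_zero]
      have : W C s ≤ 1 := by
        unfold W
        refine (Finset.card_le_univ _).trans ?_
        simp
      exact_mod_cast this
    · obtain ⟨u, hu⟩ := Finset.nonempty_of_ne_empty hCe
      have : W C s = 0 := by
        unfold W
        rw [Finset.card_eq_zero, Finset.filter_eq_empty_iff]
        intro P _ hP
        obtain ⟨j, _⟩ := (hP.2 u).1 hu
        exact j.elim0
      rw [this]
      push_cast
      exact T_nonneg (NN_mul (NN_hh _ _) (NN_pow (NN_ff k) _)) s
  | succ m ih =>
    intro s hs C c y t D hC ht hc
    classical
    have hk0 : 0 < k := by omega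
    rcases Nat.eq_zero_or_pos t with h0 | h0
    · subst h0
      rw [Nat.cast_zero, hh_zero, one_mul]
      rcases Finset.eq_empty_or_nonempty D with hD | ⟨c', hc'⟩
      · have : W C s = 0 := by
          unfold W
          rw [Finset.card_eq_zero, Finset.filter_eq_empty_iff]
          intro P _ hP
          have h1 := (hP.2 (cel (P 0) 0)).2 ⟨0, 0, by have := hs 0; omega, rfl⟩
          rw [hC, hD] at h1
          rcases h1 with h1 | ⟨_, i, hi, _⟩
          · simp at h1
          · omega
        rw [this]
        push_cast
        exact T_nonneg (NN_pow (NN_ff k) _) s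
      · have hcard : D.card = (D.erase c').card + 1 := (Finset.card_erase_add_one hc').symm
        rw [hcard]
        have e : ff k ^ ((D.erase c').card + 1) =
            ∑ l ∈ Icc 2 k, X l * ((l : ℝ) • (hh k (k - l) * ff k ^ (D.erase c').card)) := by
          rw [pow_succ']
          conv_lhs => enter [1]; rw [ff]
          rw [Finset.sum_mul]
          apply Finset.sum_congr rfl
          intro l _
          rw [mul_assoc, smul_mul_assoc]
        rw [e, T_sum_X]
        have e2 : ∀ i, (if s i ∈ Icc 2 k then T ((s i : ℝ) • (hh k (k - (s i : ℕ)) * ff k ^ (D.erase c').card)) (fun j => s (i.succAbove j)) else 0) =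
            s i * (if s i ∈ Icc 2 k then T (hh k (k - (s i : ℕ)) * ff k ^ (D.erase c').card) (fun j => s (i.succAbove j)) else 0) := by
          intro i
          split_ifs
          · rw [T_smul]
          · simp
        rw [Finset.sum_congr rfl (fun i _ => e2 i)]
        apply W_rec2 C s (c', 0) ((hC _).2 (Or.inl hc'))
        · intro j
          split_ifs
          · exact T_nonneg (NN_mul (NN_hh _ _) (NN_pow (NN_ff k) _)) _
          · exact le_rfl
        · intro j P a hP hPj
          have hle := hP.le j
          have h2 := hs j
          rw [if_pos (mem_Icc.2 ⟨h2, hle⟩)]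
          have := ih (fun x => s (j.succAbove x)) (fun x => hs _) _ _ _ _ _
            (hC.cut2 c' hc' (0 - (a : ZMod k)) (s j) hle) (by omega) (fun _ => by simp)
          rw [Nat.cast_sub hle] at this
          exact this
    · have e : hh k t * ff k ^ D.card = ∑ l ∈ Icc 2 k, X l * (hh k (t - l) * ff k ^ D.card) := by
        rw [hh_rec k (by omega), Finset.sum_mul]
        apply Finset.sum_congr rfl
        intro l _
        rw [mul_assoc]
      rw [e, T_sum_X]
      apply W_rec1 C s (c, y) ((hC _).2 (Or.inr ⟨rfl, 0, h0, by simp⟩))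
      · intro hcon
        rcases (hC _).1 hcon with h1 | ⟨_, i, hi, he⟩
        · exact hc h0 h1
        · have : ((i + 1 : ℕ) : ZMod k) = ((0 : ℕ) : ZMod k) := by
            push_cast
            simp only at he
            linear_combination -he
          have := cast_inj (by omega) (by omega) this
          omega
      · intro j
        split_ifs
        · exact T_nonneg (NN_mul (NN_hh _ _) (NN_pow (NN_ff k) _)) _
        · exact le_rfl
      · intro j P hP hPj
        have hle := hP.le j
        have h2 := hs j
        rw [if_pos (mem_Icc.2 ⟨h2, hle⟩)]
        have hlt : s j ≤ t := by
          by_contra hcon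
          have h1 := (hP.2 (cel (P j) t)).2 ⟨j, t, by omega, rfl⟩
          rw [hPj] at h1
          rcases (hC _).1 h1 with h1 | ⟨_, i, hi, he⟩
          · exact hc h0 h1
          · simp only [cel] at he
            have := cast_inj ht (by omega) (add_left_cancel he)
            omega
        have := ih (fun x => s (j.succAbove x)) (fun x => hs _) _ _ _ _ _
            (hC.cut1 ht (hc h0) (s j) hlt) (by omega) (fun _ => hc h0)
        rw [Nat.cast_sub hlt] at this
        exact this

lemma W_univ_le [NeZero k] (hr : 0 < r) (m : ℕ) (s : Fin m → ℕ) (hs : ∀ j, 2 ≤ s j) :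
    (W (univ : Finset (Cell r k)) s : ℝ) ≤ T (ff k ^ r) s := by
  have := W_le m s hs (univ : Finset (Cell r k)) ⟨0, hr⟩ 0 0 univ (fun u => by simp)
    (Nat.pos_of_ne_zero (NeZero.ne k)) (fun h => absurd h (by omega))
  rw [Nat.cast_zero, hh_zero, one_mul] at this
  simpa using this

end P13


namespace P13
open MvPolynomial Finset

noncomputable def finZ (k : ℕ) [NeZero k] : Fin k ≃ ZMod k :=
  Equiv.ofBijective (fun i : Fin k => ((i : ℕ) : ZMod k)) (by
    rw [Fintype.bijective_iff_injective_and_card]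
    refine ⟨?_, by simp [ZMod.card]⟩
    intro a b h
    have h' : ((a : ℕ) : ZMod k) = ((b : ℕ) : ZMod k) := h
    rw [ZMod.natCast_eq_natCast_iff', Nat.mod_eq_of_lt a.2, Nat.mod_eq_of_lt b.2] at h'
    exact Fin.ext h')

noncomputable def psi {n k : ℕ} [NeZero k] (F : RODFactor n k) : Fin n ≃ Cell (n / k) k :=
  (Equiv.ofBijective _ F.2).symm.trans (Equiv.prodCongr (Equiv.refl _) (finZ k))

lemma psi_apply {n k : ℕ} [NeZero k] (F : RODFactor n k) (c : Fin (n / k)) (i : Fin k) :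
    psi F (F.1 c i) = (c, ((i : ℕ) : ZMod k)) := by
  have : (Equiv.ofBijective _ F.2).symm (F.1 c i) = (c, i) := by
    rw [Equiv.symm_apply_eq]; rfl
  unfold psi
  rw [Equiv.trans_apply, this]
  rfl

lemma psi_inj {n k : ℕ} [NeZero k] (F F' : RODFactor n k) (h : ∀ u, psi F u = psi F' u) :
    F = F' := by
  apply Subtype.ext
  funext c i
  apply (psi F).injective
  rw [psi_apply, h, psi_apply]

lemma psi_adj {n k : ℕ} [NeZero k] (F : RODFactor n k) (S : SimpleGraph (Fin n))
    (hF : RODContains F S) (u v : Fin n) (h : S.Adj u v) :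
    (psi F v).1 = (psi F u).1 ∧
      ((psi F v).2 = (psi F u).2 + 1 ∨ (psi F v).2 = (psi F u).2 - 1) := by
  obtain ⟨c, i, h | h⟩ := hF u v h
  · rw [← h.1, ← h.2, psi_apply, psi_apply]
    simp
  · rw [← h.1, ← h.2, psi_apply, psi_apply]
    simp

/-- `S` is framed by the ordered list of directed paths `e`. -/
def Framed {n m : ℕ} (s : Fin m → ℕ) (e : (Σ j, Fin (s j)) ≃ Fin n)
    (S : SimpleGraph (Fin n)) : Prop :=
  ∀ x y, S.Adj (e x) (e y) ↔ x.1 = y.1 ∧ ((x.2 : ℕ) + 1 = y.2 ∨ (y.2 : ℕ) + 1 = x.2)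

lemma psi_path {n k m : ℕ} [NeZero k] (s : Fin m → ℕ) (hs : ∀ j, 2 ≤ s j)
    (e : (Σ j, Fin (s j)) ≃ Fin n) (S : SimpleGraph (Fin n)) (hS : Framed s e S)
    (F : RODFactor n k) (hF : RODContains F S) (j : Fin m) :
    ∃ (b : Bool) (p : Cell (n / k) k), ∀ (i : Fin (s j)),
      psi F (e ⟨j, i⟩) = cel p (if b then (i : ℕ) else s j - 1 - i) := by
  have hj := hs j
  set q : ℕ → Cell (n / k) k := fun i => psi F (e ⟨j, ⟨min i (s j - 1), by omega⟩⟩) with hq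
  have hqi : ∀ i : Fin (s j), psi F (e ⟨j, i⟩) = q i := by
    intro i
    have : (⟨min (i : ℕ) (s j - 1), by omega⟩ : Fin (s j)) = i := by
      apply Fin.ext; have := i.2; simp only; omega
    simp only [hq, this]
  have hst : ∀ i, i + 1 < s j → (q (i + 1)).1 = (q i).1 ∧
      ((q (i + 1)).2 = (q i).2 + 1 ∨ (q (i + 1)).2 = (q i).2 - 1) := by
    intro i hi
    apply psi_adj F S hF
    rw [hS]
    refine ⟨rfl, Or.inl ?_⟩
    simp only
    omega
  have h1 : ∀ i, i < s j → (q i).1 = (q 0).1 := by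
    intro i
    induction i with
    | zero => intro _; rfl
    | succ i ih => intro hi; rw [(hst i hi).1, ih (by omega)]
  have hinj : ∀ i i', i < s j → i' < s j → (q i).2 = (q i').2 → i = i' := by
    intro i i' hi hi' h
    have h2 : q i = q i' := Prod.ext (by rw [h1 i hi, h1 i' hi']) h
    have h3 := e.injective ((psi F).injective h2)
    simp only [Sigma.mk.injEq, heq_eq_eq, true_and, Fin.mk.injEq] at h3
    omega
  rcases mono_dir (fun i => (q i).2) (s j) (fun i hi => (hst i hi).2) hinj with h | h
  · refine ⟨true, q 0, fun i => ?_⟩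
    rw [hqi]
    exact Prod.ext (h1 i i.2) (by simpa [cel] using h i i.2)
  · refine ⟨false, q (s j - 1), fun i => ?_⟩
    rw [hqi]
    refine Prod.ext (by rw [h1 i i.2]; simp [cel]; rw [h1 (s j - 1) (by omega)]) ?_
    have e1 := h i i.2
    have e2 := h (s j - 1) (by omega)
    simp only [cel, e1, e2]
    have h5 : (s j - 1 : ℕ) = (s j - 1 - (i : ℕ)) + i := by have := i.2; omega
    have h6 := congrArg (fun x : ℕ => (x : ZMod k)) h5
    simp only [Nat.cast_add] at h6
    rw [h6]
    simp
    ring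

lemma NS_le {n k m : ℕ} [NeZero k] (s : Fin m → ℕ) (hs : ∀ j, 2 ≤ s j)
    (e : (Σ j, Fin (s j)) ≃ Fin n) (S : SimpleGraph (Fin n)) (hS : Framed s e S) :
    NS k S ≤ 2 ^ m * W (univ : Finset (Cell (n / k) k)) s := by
  classical
  choose b P hP using fun F : {F : RODFactor n k // RODContains F S} =>
    psi_path s hs e S hS F.1 F.2
  have hlt : ∀ F (j : Fin m) (i : ℕ), i < s j →
      (if b F j then i else s j - 1 - i) < s j := by
    intro F j i hi; split_ifs <;> omega
  have hinv : ∀ F (j : Fin m) (i : ℕ) (hi : i < s j),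
      cel (P F j) i = psi F.1 (e ⟨j, ⟨_, hlt F j i hi⟩⟩) := by
    intro F j i hi
    rw [hP]
    simp only
    congr 1
    split_ifs <;> omega
  have hgood : ∀ F, Good (univ : Finset (Cell (n / k) k)) s (P F) := by
    intro F
    constructor
    · intro j j' i i' hi hi' h
      rw [hinv F j i hi, hinv F j' i' hi'] at h
      have h3 := e.injective ((psi F.1).injective h)
      rw [Sigma.mk.injEq] at h3
      obtain ⟨rfl, h3⟩ := h3
      refine ⟨rfl, ?_⟩
      simp only [heq_eq_eq, Fin.mk.injEq] at h3
      split_ifs at h3 <;> omega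
    · intro u
      refine ⟨fun _ => ?_, fun _ => mem_univ _⟩
      refine ⟨(e.symm ((psi F.1).symm u)).1, _, hlt F _ _ (e.symm ((psi F.1).symm u)).2.2, ?_⟩
      rw [← hP]
      simp
  let Φ : {F : RODFactor n k // RODContains F S} →
      (Fin m → Bool) × {P : Fin m → Cell (n / k) k // Good (univ : Finset (Cell (n / k) k)) s P} :=
    fun F => (b F, ⟨P F, hgood F⟩)
  have hΦ : Function.Injective Φ := by
    intro F F' h
    have h1 : b F = b F' := congrArg Prod.fst h
    have h2 : P F = P F' := congrArg (fun x => x.2.1) h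
    apply Subtype.ext
    apply psi_inj
    intro u
    obtain ⟨⟨j, i⟩, rfl⟩ := e.surjective u
    rw [hP, hP, h1, h2]
  have h := Nat.card_le_card_of_injective Φ hΦ
  unfold NS
  refine h.trans (le_of_eq ?_)
  rw [Nat.card_prod]
  congr 1
  · simp
  · unfold W
    rw [Nat.card_eq_fintype_card, Fintype.card_subtype]

lemma NS_le_T {n k m : ℕ} [NeZero k] (hr : 0 < n / k) (s : Fin m → ℕ) (hs : ∀ j, 2 ≤ s j)
    (e : (Σ j, Fin (s j)) ≃ Fin n) (S : SimpleGraph (Fin n)) (hS : Framed s e S) :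
    (NS k S : ℝ) ^ 2 ≤ 4 ^ m * (if ∀ j, s j ≤ k then (T (ff k ^ (n / k)) s) ^ 2 else 0) := by
  have h := NS_le (k := k) s hs e S hS
  split_ifs with hk
  · have h2 : (NS k S : ℝ) ≤ 2 ^ m * T (ff k ^ (n / k)) s := by
      calc (NS k S : ℝ) ≤ ((2 ^ m * W (univ : Finset (Cell (n / k) k)) s : ℕ) : ℝ) := by
            exact_mod_cast h
        _ = 2 ^ m * (W (univ : Finset (Cell (n / k) k)) s : ℝ) := by push_cast; ring
        _ ≤ _ := by
            apply mul_le_mul_of_nonneg_left (W_univ_le hr m s hs) (by positivity)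
    calc (NS k S : ℝ) ^ 2 ≤ (2 ^ m * T (ff k ^ (n / k)) s) ^ 2 :=
          pow_le_pow_left₀ (by positivity) h2 2
      _ = _ := by rw [mul_pow, ← pow_mul, mul_comm m 2, pow_mul]; norm_num
  · have h0 : W (univ : Finset (Cell (n / k) k)) s = 0 := by
      classical
      unfold W
      rw [Finset.card_eq_zero, Finset.filter_eq_empty_iff]
      intro P _ hP
      exact hk fun j => hP.le j
    rw [h0, mul_zero] at h
    have : NS k S = 0 := by omega
    simp [this]

end P13


namespace P13
open MvPolynomial Finset

lemma sig_ext {m : ℕ} {s : Fin m → ℕ} {x y : Σ j, Fin (s j)} (h1 : x.1 = y.1)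
    (h2 : (x.2 : ℕ) = y.2) : x = y := by
  obtain ⟨j, a⟩ := x
  obtain ⟨j', b⟩ := y
  simp only at h1
  subst h1
  simp only at h2
  rw [Fin.ext h2]

def frGraph {n m : ℕ} (s : Fin m → ℕ) (e : (Σ j, Fin (s j)) ≃ Fin n) : SimpleGraph (Fin n) where
  Adj u v := (e.symm u).1 = (e.symm v).1 ∧
    (((e.symm u).2 : ℕ) + 1 = (e.symm v).2 ∨ ((e.symm v).2 : ℕ) + 1 = (e.symm u).2)
  symm := ⟨fun u v h => ⟨h.1.symm, h.2.symm⟩⟩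
  loopless := ⟨fun u h => by omega⟩

lemma frGraph_framed {n m : ℕ} (s : Fin m → ℕ) (e : (Σ j, Fin (s j)) ≃ Fin n) :
    Framed s e (frGraph s e) := by
  intro x y
  simp only [frGraph]
  rw [e.symm_apply_apply, e.symm_apply_apply]

lemma framed_iff {n m : ℕ} (s : Fin m → ℕ) (e : (Σ j, Fin (s j)) ≃ Fin n)
    (S : SimpleGraph (Fin n)) : Framed s e S ↔ frGraph s e = S := by
  constructor
  · intro h
    ext u v
    obtain ⟨x, rfl⟩ := e.surjective u
    obtain ⟨y, rfl⟩ := e.surjective v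
    rw [h, frGraph_framed]
  · rintro rfl
    exact frGraph_framed s e

lemma framed_reach {n m : ℕ} {s : Fin m → ℕ} {e : (Σ j, Fin (s j)) ≃ Fin n}
    {S : SimpleGraph (Fin n)} (h : Framed s e S) (x y : Σ j, Fin (s j)) :
    S.Reachable (e x) (e y) ↔ x.1 = y.1 := by
  constructor
  · intro hr
    have : ∀ u v, S.Walk u v → (e.symm u).1 = (e.symm v).1 := by
      intro u v p
      induction p with
      | nil => rfl
      | @cons u v w ha _ ih =>
        rw [← ih]
        obtain ⟨x, rfl⟩ := e.surjective u
        obtain ⟨y, rfl⟩ := e.surjective v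
        rw [h] at ha
        simpa using ha.1
    obtain ⟨p⟩ := hr
    simpa using this _ _ p
  · obtain ⟨j, a⟩ := x
    obtain ⟨j', b⟩ := y
    intro hj
    simp only at hj
    subst hj
    have h0 : ∀ (i : ℕ) (hi : i < s j), S.Reachable (e ⟨j, ⟨0, by omega⟩⟩) (e ⟨j, ⟨i, hi⟩⟩) := by
      intro i
      induction i with
      | zero => intro _; exact SimpleGraph.Reachable.refl _
      | succ i ih =>
        intro hi
        refine (ih (by omega)).trans (SimpleGraph.Adj.reachable ?_)
        rw [h]
        exact ⟨rfl, Or.inl rfl⟩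
    exact (h0 a a.2).symm.trans (h0 b b.2)

lemma framed_paths {n m : ℕ} {s : Fin m → ℕ} (hs : ∀ j, 2 ≤ s j)
    {e : (Σ j, Fin (s j)) ≃ Fin n}
    {S : SimpleGraph (Fin n)} (h : Framed s e S) : PathsGraph S m := by
  have z : ∀ j, 0 < s j := fun j => by have := hs j; omega
  have hb : Function.Bijective
      (fun j : Fin m => S.connectedComponentMk (e ⟨j, ⟨0, z j⟩⟩)) := by
    constructor
    · intro j j' hj
      have hj' := SimpleGraph.ConnectedComponent.exact hj
      rw [framed_reach h] at hj'
      exact hj'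
    · intro c
      induction c using SimpleGraph.ConnectedComponent.ind with
      | h u =>
        obtain ⟨x, rfl⟩ := e.surjective u
        refine ⟨x.1, ?_⟩
        apply SimpleGraph.ConnectedComponent.sound
        rw [framed_reach h]
  refine ⟨?_, ?_⟩
  · rw [← Nat.card_congr (Equiv.ofBijective _ hb)]
    simp
  · intro c
    obtain ⟨j, rfl⟩ := hb.2 c
    refine ⟨s j, fun i => e ⟨j, i⟩, hs j, ?_, ?_, ?_⟩
    · intro a b hab
      simpa using e.injective hab
    · ext u
      obtain ⟨x, rfl⟩ := e.surjective u
      rw [SimpleGraph.ConnectedComponent.mem_supp_iff, SimpleGraph.ConnectedComponent.eq,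
        framed_reach h]
      constructor
      · rintro ⟨i, hi⟩
        rw [← e.injective hi]
      · intro hj
        obtain ⟨j', a⟩ := x
        simp only at hj
        subst hj
        exact ⟨a, rfl⟩
    · intro a b
      rw [h]
      simp

lemma sum_of_equiv {n m : ℕ} {s : Fin m → ℕ} (e : (Σ j, Fin (s j)) ≃ Fin n) :
    ∑ j, s j = n := by
  have := Fintype.card_congr e
  simpa using this

lemma exists_framed {n m : ℕ} {S : SimpleGraph (Fin n)} (h : PathsGraph S m) :
    ∃ (s : Fin m → ℕ) (_ : ∀ j, 2 ≤ s j) (e : (Σ j, Fin (s j)) ≃ Fin n), Framed s e S := by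
  obtain ⟨hc, hp⟩ := h
  have eq : S.ConnectedComponent ≃ Fin m := Finite.equivFinOfCardEq hc
  choose s v h2 hinj hran hadj using fun j => hp (eq.symm j)
  have hmem : ∀ j a, S.connectedComponentMk (v j a) = eq.symm j := by
    intro j a
    have : v j a ∈ (eq.symm j).supp := by rw [← hran]; exact ⟨a, rfl⟩
    exact this
  have hb : Function.Bijective (fun x : Σ j, Fin (s j) => v x.1 x.2) := by
    constructor
    · rintro ⟨j, a⟩ ⟨j', b⟩ hab
      simp only at hab
      have : j = j' := by
        apply eq.symm.injective
        rw [← hmem j a, ← hmem j' b, hab]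
      subst this
      rw [hinj j hab]
    · intro u
      have : u ∈ (eq.symm (eq (S.connectedComponentMk u))).supp := by simp
      rw [← hran] at this
      obtain ⟨a, ha⟩ := this
      exact ⟨⟨_, a⟩, ha⟩
  refine ⟨s, h2, Equiv.ofBijective _ hb, ?_⟩
  rintro ⟨j, a⟩ ⟨j', b⟩
  simp only [Equiv.ofBijective_apply]
  by_cases hj : j = j'
  · subst hj
    rw [hadj]
    simp
  · constructor
    · intro ha
      exfalso
      apply hj
      apply eq.symm.injective
      rw [← hmem j a, ← hmem j' b]
      exact SimpleGraph.ConnectedComponent.sound ha.reachable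
    · rintro ⟨h, _⟩
      exact absurd h hj

abbrev XX (n m : ℕ) := Σ s : {s // s ∈ Cps m n}, ((Σ j, Fin (s.1 j)) ≃ Fin n)

noncomputable def frmE {n m : ℕ} (s : Fin m → ℕ) (e : (Σ j, Fin (s j)) ≃ Fin n)
    (σ : Equiv.Perm (Fin m)) (b : Fin m → Bool) : (Σ j, Fin (s (σ j))) ≃ Fin n :=
  (Equiv.sigmaCongrRight (fun j => if b j then Fin.revPerm else Equiv.refl _)).trans
    ((Equiv.sigmaCongrLeft (β := fun j => Fin (s j)) σ).trans e)

def bv {l : ℕ} (b : Bool) (i : Fin l) : Fin l := if b then Fin.rev i else i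

lemma frmE_apply {n m : ℕ} (s : Fin m → ℕ) (e : (Σ j, Fin (s j)) ≃ Fin n)
    (σ : Equiv.Perm (Fin m)) (b : Fin m → Bool) (j : Fin m) (i : Fin (s (σ j))) :
    frmE s e σ b ⟨j, i⟩ = e ⟨σ j, bv (b j) i⟩ := by
  unfold frmE bv
  simp only [Equiv.trans_apply, Equiv.sigmaCongrRight_apply, Sigma.map]
  cases b j <;> rfl

lemma frmE_framed {n m : ℕ} (s : Fin m → ℕ) (e : (Σ j, Fin (s j)) ≃ Fin n)
    (S : SimpleGraph (Fin n)) (h : Framed s e S)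
    (σ : Equiv.Perm (Fin m)) (b : Fin m → Bool) :
    Framed (fun j => s (σ j)) (frmE s e σ b) S := by
  rintro ⟨j, a⟩ ⟨j', c⟩
  rw [frmE_apply, frmE_apply, h]
  by_cases hj : j = j'
  · subst hj
    have ha : (a : ℕ) < s (σ j) := a.2
    have hc : (c : ℕ) < s (σ j) := c.2
    cases hb : b j
    · simp [bv]
    · simp [bv, Fin.val_rev]
      omega
  · simp [hj]

noncomputable def frm {n m : ℕ} (s : Fin m → ℕ) (hs : s ∈ Cps m n)
    (e : (Σ j, Fin (s j)) ≃ Fin n)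
    (p : Equiv.Perm (Fin m) × (Fin m → Bool)) : XX n m :=
  ⟨⟨fun j => s (p.1 j), by
    rw [mem_Cps] at hs ⊢
    exact ⟨fun i => hs.1 _, by rw [← hs.2]; exact Equiv.sum_comp p.1 s⟩⟩, frmE s e p.1 p.2⟩

def fst0 {n m : ℕ} (x : XX n m) (j : Fin m) : Fin n :=
  x.2 ⟨j, ⟨0, by have := (mem_Cps.1 x.1.2).1 j; omega⟩⟩

lemma frm_inj {n m : ℕ} (s : Fin m → ℕ) (hs : s ∈ Cps m n)
    (e : (Σ j, Fin (s j)) ≃ Fin n) : Function.Injective (frm s hs e) := by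
  rintro ⟨σ, b⟩ ⟨σ', b'⟩ h
  have h0 : ∀ j, fst0 (frm s hs e (σ, b)) j = fst0 (frm s hs e (σ', b')) j := by
    intro j; rw [h]
  have h1 : ∀ j, σ j = σ' j ∧ b j = b' j := by
    intro j
    have := h0 j
    unfold fst0 frm at this
    simp only [frmE_apply] at this
    have h3 := e.injective this
    have h4 : σ j = σ' j := congrArg Sigma.fst h3
    refine ⟨h4, ?_⟩
    have h5 := congrArg (fun x : Σ j, Fin (s j) => (x.2 : ℕ)) h3
    simp only at h5
    have h6 := (mem_Cps.1 hs).1 (σ j)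
    have h7 := (mem_Cps.1 hs).1 (σ' j)
    cases hb : b j <;> cases hb' : b' j <;> simp [bv, hb, hb', Fin.val_rev] at h5 ⊢ <;> omega
  apply Prod.ext
  · exact Equiv.ext fun j => (h1 j).1
  · exact funext fun j => (h1 j).2

lemma frm_eq {n m : ℕ} (s : Fin m → ℕ) (hs : s ∈ Cps m n)
    (e : (Σ j, Fin (s j)) ≃ Fin n) (σ : Equiv.Perm (Fin m)) (b : Fin m → Bool)
    (s' : Fin m → ℕ) (hs' : s' ∈ Cps m n) (e' : (Σ j, Fin (s' j)) ≃ Fin n)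
    (h1 : s' = fun j => s (σ j))
    (h2 : ∀ j i, (e.symm (e' ⟨j, i⟩)).1 = σ j ∧
      ((e.symm (e' ⟨j, i⟩)).2 : ℕ) = bv (b j) i) :
    frm s hs e (σ, b) = ⟨⟨s', hs'⟩, e'⟩ := by
  subst h1
  unfold frm
  congr 1
  apply Equiv.ext
  rintro ⟨j, i⟩
  rw [frmE_apply, ← Equiv.eq_symm_apply]
  symm
  apply sig_ext
  · exact (h2 j i).1
  · exact (h2 j i).2

lemma frm_surj {n m : ℕ} (s : Fin m → ℕ) (hs : s ∈ Cps m n)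
    (e : (Σ j, Fin (s j)) ≃ Fin n) (S : SimpleGraph (Fin n)) (h : Framed s e S)
    (s' : Fin m → ℕ) (hs' : s' ∈ Cps m n) (e' : (Σ j, Fin (s' j)) ≃ Fin n)
    (h' : Framed s' e' S) : ∃ p, frm s hs e p = ⟨⟨s', hs'⟩, e'⟩ := by
  have g2 := (mem_Cps.1 hs).1
  have g2' := (mem_Cps.1 hs').1
  set φ : (Σ j, Fin (s' j)) ≃ (Σ j, Fin (s j)) := e'.trans e.symm with hφ
  have hadj : ∀ x y, ((φ x).1 = (φ y).1 ∧
      (((φ x).2 : ℕ) + 1 = (φ y).2 ∨ ((φ y).2 : ℕ) + 1 = (φ x).2)) ↔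
      (x.1 = y.1 ∧ ((x.2 : ℕ) + 1 = y.2 ∨ (y.2 : ℕ) + 1 = x.2)) := by
    intro x y
    rw [← h, ← h']
    simp [hφ]
  have hre : ∀ x y, (φ x).1 = (φ y).1 ↔ x.1 = y.1 := by
    intro x y
    rw [← framed_reach h, ← framed_reach h']
    simp [hφ]
  have z : ∀ j, 0 < s' j := fun j => by have := g2' j; omega
  have hcinj : Function.Injective (fun j => (φ ⟨j, ⟨0, z j⟩⟩).1) := by
    intro j j' hj
    exact (hre _ _).1 hj
  let σ : Equiv.Perm (Fin m) := Equiv.ofBijective _ (Finite.injective_iff_bijective.1 hcinj)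
  have hσ : ∀ j i, (φ ⟨j, i⟩).1 = σ j := fun j i => (hre _ ⟨j, ⟨0, z j⟩⟩).2 rfl
  have key : ∀ j, ∃ b : Bool, s' j = s (σ j) ∧ ∀ i, ((φ ⟨j, i⟩).2 : ℕ) = bv b i := by
    intro j
    have hj := g2' j
    have hlt : ∀ i, ((φ ⟨j, i⟩).2 : ℕ) < s (σ j) := by
      intro i
      exact (φ ⟨j, i⟩).2.2.trans_eq (congrArg s (hσ j i))
    have hsur : ∀ a, a < s (σ j) → ∃ i, ((φ ⟨j, i⟩).2 : ℕ) = a := by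
      intro a ha
      obtain ⟨⟨j', i⟩, hx⟩ := φ.surjective ⟨σ j, ⟨a, ha⟩⟩
      have : j' = j := by
        apply σ.injective
        rw [← hσ j' i, hx]
      subst this
      exact ⟨i, by rw [hx]⟩
    set q : ℕ → ℕ := fun i => ((φ ⟨j, ⟨min i (s' j - 1), by omega⟩⟩).2 : ℕ) with hq
    have hqi : ∀ i : Fin (s' j), ((φ ⟨j, i⟩).2 : ℕ) = q i := by
      intro i
      have : (⟨min (i : ℕ) (s' j - 1), by omega⟩ : Fin (s' j)) = i := by
        apply Fin.ext; have := i.2; simp only; omega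
      exact congrArg (fun t => ((φ ⟨j, t⟩).2 : ℕ)) this.symm
    have hqlt : ∀ i, q i < s (σ j) := fun i => hlt _
    have hqsur : ∀ a, a < s (σ j) → ∃ i, i < s' j ∧ q i = a := by
      intro a ha
      obtain ⟨i, hi⟩ := hsur a ha
      exact ⟨i, i.2, by rw [← hqi, hi]⟩
    have hst : ∀ i, i + 1 < s' j → q i + 1 = q (i + 1) ∨ q (i + 1) + 1 = q i := by
      intro i hi
      refine ((hadj ⟨j, ⟨min i (s' j - 1), by omega⟩⟩ ⟨j, ⟨min (i + 1) (s' j - 1), by omega⟩⟩).2 ⟨rfl, Or.inl ?_⟩).2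
      simp only
      omega
    have hqinj : ∀ i i', i < s' j → i' < s' j → q i = q i' → i = i' := by
      intro i i' hi hi' hii
      have h3 := φ.injective (sig_ext (by rw [hσ, hσ]) hii)
      simp only [Sigma.mk.injEq, heq_eq_eq, true_and, Fin.mk.injEq] at h3
      omega
    have hs0 := g2 (σ j)
    obtain ⟨i0, hi0, hq0⟩ := hqsur 0 (by omega)
    obtain ⟨i1, hi1, hq1⟩ := hqsur (s (σ j) - 1) (by omega)
    have hl := hqlt (s' j - 1)
    have hl0 := hqlt 0
    rcases mono_dir (fun i => (q i : ℤ)) (s' j)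
      (fun i hi => by have := hst i hi; show ((q (i + 1) : ℤ) = (q i : ℤ) + 1 ∨ (q (i + 1) : ℤ) = (q i : ℤ) - 1); omega)
      (fun i i' hi hi' hh => hqinj i i' hi hi' (by simpa using hh)) with hm | hm
    · have m0 := hm i0 hi0
      have m1 := hm i1 hi1
      have m2 := hm (s' j - 1) (by omega)
      refine ⟨false, by omega, fun i => ?_⟩
      have m3 := hm i i.2
      rw [hqi]
      simp [bv] at m3 ⊢
      omega
    · have m0 := hm i0 hi0
      have m1 := hm i1 hi1
      have m2 := hm (s' j - 1) (by omega)
      refine ⟨true, by omega, fun i => ?_⟩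
      have m3 := hm i i.2
      have := i.2
      rw [hqi]
      simp [bv, Fin.val_rev] at m3 ⊢
      omega
  choose b hb using key
  refine ⟨(σ, b), frm_eq s hs e σ b s' hs' e' (funext fun j => (hb j).1) ?_⟩
  intro j i
  exact ⟨hσ j i, (hb j).2 i⟩

noncomputable def gX {n m : ℕ} (x : XX n m) : {G : SimpleGraph (Fin n) // PathsGraph G m} :=
  ⟨frGraph x.1.1 x.2, framed_paths (mem_Cps.1 x.1.2).1 (frGraph_framed _ _)⟩

open Classical in
lemma fiber_card {n m : ℕ} (S : {G : SimpleGraph (Fin n) // PathsGraph G m}) :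
    ((univ : Finset (XX n m)).filter (fun x => gX x = S)).card = m.factorial * 2 ^ m := by
  obtain ⟨S, hS⟩ := S
  obtain ⟨s, h2, e, h⟩ := exists_framed hS
  have hs : s ∈ Cps m n := mem_Cps.2 ⟨h2, sum_of_equiv e⟩
  have : (univ : Finset (XX n m)).filter (fun x => gX x = ⟨S, hS⟩) =
      univ.image (frm s hs e) := by
    ext x
    simp only [mem_filter, mem_univ, true_and, mem_image]
    constructor
    · intro hx
      obtain ⟨⟨s', hs'⟩, e'⟩ := x
      apply frm_surj s hs e S h
      rw [framed_iff]
      exact congrArg Subtype.val hx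
    · rintro ⟨p, rfl⟩
      apply Subtype.ext
      exact (framed_iff _ _ _).1 (frmE_framed s e S h p.1 p.2)
  rw [this, Finset.card_image_of_injective _ (frm_inj s hs e), Finset.card_univ,
    Fintype.card_prod, Fintype.card_perm, Fintype.card_fun]
  simp

open Classical in
lemma sum_XX {n m : ℕ} (f : {G : SimpleGraph (Fin n) // PathsGraph G m} → ℝ) :
    ∑ x : XX n m, f (gX x) = (m.factorial * 2 ^ m) * ∑ S, f S := by
  rw [← Finset.sum_fiberwise univ (fun x : XX n m => gX x), Finset.mul_sum]
  apply Finset.sum_congr rfl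
  intro S _
  rw [Finset.sum_congr rfl (g := fun _ => f S) (by
    intro x hx; rw [(mem_filter.1 hx).2])]
  rw [Finset.sum_const, fiber_card, nsmul_eq_mul]
  push_cast
  ring

lemma sum_XX2 {n m : ℕ} (f : (Fin m → ℕ) → ℝ) :
    ∑ x : XX n m, f x.1.1 = n.factorial * ∑ s ∈ Cps m n, f s := by
  rw [Fintype.sum_sigma, Finset.mul_sum, ← Finset.sum_coe_sort (Cps m n)]
  apply Finset.sum_congr rfl
  rintro ⟨s, hs⟩ _
  simp only
  rw [Finset.sum_const, nsmul_eq_mul, Finset.card_univ]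
  congr 2
  have e : (Σ j, Fin (s j)) ≃ Fin n :=
    Fintype.equivOfCardEq (by simpa using (mem_Cps.1 hs).2)
  rw [Fintype.card_equiv e, Fintype.card_congr e, Fintype.card_fin]

lemma final {n k m : ℕ} (hn : 1 ≤ n) (hkn : k ∣ n) (hk : 3 ≤ k) (A : ℝ)
    (h : ∑ s ∈ (Cps m n).filter (fun s => ∀ i, s i ≤ k), (T (ff k ^ (n/k)) s)^2 ≤
      A * (m.factorial:ℝ)^2 * (Cps m n).card) :
    ∑' S : {G : SimpleGraph (Fin n) // PathsGraph G m}, (NS k S.1 : ℝ) ^ 2 ≤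
      A * ((m.factorial : ℝ) * 2 ^ m) ^ 2 *
        (Nat.card {G : SimpleGraph (Fin n) // PathsGraph G m} : ℝ) := by
  classical
  haveI : NeZero k := ⟨by omega⟩
  have hr : 0 < n / k := Nat.div_pos (Nat.le_of_dvd hn hkn) (by omega)
  rw [tsum_fintype, Nat.card_eq_fintype_card]
  have e1 := sum_XX (fun S : {G : SimpleGraph (Fin n) // PathsGraph G m} => (NS k S.1 : ℝ) ^ 2)
  have e2 := sum_XX (fun S : {G : SimpleGraph (Fin n) // PathsGraph G m} => (1 : ℝ))
  rw [sum_XX2 (fun _ => (1 : ℝ))] at e2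
  simp only [Finset.sum_const, nsmul_eq_mul, mul_one, Finset.card_univ] at e2
  have e3 : ∑ x : XX n m, (NS k (gX x).1 : ℝ) ^ 2 ≤
      ∑ x : XX n m, 4 ^ m * (if ∀ j, x.1.1 j ≤ k then (T (ff k ^ (n / k)) x.1.1) ^ 2 else 0) := by
    apply Finset.sum_le_sum
    intro x _
    exact NS_le_T hr x.1.1 (mem_Cps.1 x.1.2).1 x.2 _ (frGraph_framed _ _)
  rw [sum_XX2 (fun s => 4 ^ m * (if ∀ j, s j ≤ k then (T (ff k ^ (n / k)) s) ^ 2 else 0)),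
    ← Finset.mul_sum, ← Finset.sum_filter, e1] at e3
  have hM : (0 : ℝ) < m.factorial * 2 ^ m := by positivity
  have e4 : (n.factorial : ℝ) * (4 ^ m * ∑ s ∈ (Cps m n).filter (fun s => ∀ i, s i ≤ k), (T (ff k ^ (n/k)) s)^2) ≤
      n.factorial * (4 ^ m * (A * (m.factorial:ℝ)^2 * (Cps m n).card)) := by gcongr
  have e5 : (4 : ℝ) ^ m = (2 ^ m) ^ 2 := by rw [← pow_mul, mul_comm m 2, pow_mul]; norm_num
  refine le_of_mul_le_mul_left ?_ hM
  refine (e3.trans e4).trans (le_of_eq ?_)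
  rw [e5]
  linear_combination (A * (m.factorial * 2 ^ m : ℝ) ^ 2) * e2

end P13
theorem stmt13 (ε ε' : ℝ) (hε : 0 < ε) (hε' : 0 < ε') :
    ∃ N : ℕ, ∀ n : ℕ, N ≤ n → ∀ k : ℕ, k ∣ n → (2 + ε) * Real.logb 2 n ≤ (k : ℝ) →
      ∀ m : ℕ, |(m : ℝ) / n - 1 / 3| ≤ (Real.log n) ^ (-(1 : ℝ) / 3) →
        ∑' S : {G : SimpleGraph (Fin n) // PathsGraph G m}, (NS k S.1 : ℝ) ^ 2 ≤
          (9 + ε') * ((m.factorial : ℝ) * 2 ^ m) ^ 2 *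
            (Nat.card {G : SimpleGraph (Fin n) // PathsGraph G m} : ℝ) := by
  obtain ⟨N, hN⟩ := P13.analytic ε ε' hε hε'
  refine ⟨N, fun n hn k hk hlog m hm => ?_⟩
  obtain ⟨h1, h2, _, h4⟩ := hN n hn k hk hlog m hm
  exact P13.final h1 hk h2 (9 + ε') h4
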